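/- arXiv:math/0510011 — 11 statements merged into one kernel-verified Lean document; each statement's English description precedes it below -/
import Mathlib

section
/- Let K be a field, d ≥ 1 an integer, E a finite set, and for each e ∈ E let M_e be a d×d matrix over K of rank at most 1. Let Ψ := det(∑_{e∈E} A_e · M_e), the determinant of the matrix over the multivariate polynomial ring K[A_e : e ∈ E] whose (i,j)-entry is ∑_{e∈E} A_e · (M_e)_{ij}. Then for every e ∈ E, the degree of Ψ in the variable A_e is at most 1. -/
theorem rank_one_rows {K : Type} [Field K] (d : ℕ) (hd : 1 ≤ d)
    (M : Matrix (Fin d) (Fin d) K) (hM : M.rank ≤ 1) :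
    ∃ (k : Fin d) (c : Fin d → K), c k = 0 ∧ ∀ i, i ≠ k → ∀ j, M i j = c i * M k j := by
  unfold Matrix.rank at hM
  rw [Submodule.finrank_le_one_iff_isPrincipal] at hM
  obtain ⟨u, hu⟩ := (Submodule.isPrincipal_iff _).1 hM
  have hcol : ∀ j, ∃ a : K, ∀ i, M i j = a * u i := by
    intro j
    have h1 : M.mulVecLin (Pi.single j 1) ∈ LinearMap.range M.mulVecLin := ⟨_, rfl⟩
    rw [hu, Submodule.mem_span_singleton] at h1
    obtain ⟨a, ha⟩ := h1
    refine ⟨a, fun i => ?_⟩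
    have := congrFun ha i
    simpa using this.symm
  choose v hv using hcol
  by_cases h0 : ∃ k, u k ≠ 0
  · obtain ⟨k, hk⟩ := h0
    refine ⟨k, fun i => if i = k then 0 else u i / u k, by simp, fun i hi j => ?_⟩
    simp only [hi, if_false, hv]
    field_simp
  · push Not at h0
    refine ⟨⟨0, hd⟩, 0, rfl, fun i hi j => ?_⟩
    simp [hv, h0]


/-- **Configuration polynomials have degree ≤ 1 in each variable.**
Let `K` be a field, `d ≥ 1`, `E` a finite set, and for each `e ∈ E` let `M e` be a
`d × d` matrix over `K` of rank at most `1`.  Let `Ψ := det (∑ e, A_e • M e)`, a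
polynomial in the multivariate polynomial ring `K[A_e : e ∈ E]`.  Then for every
`e ∈ E` the degree of `Ψ` in the variable `A_e` is at most `1`. -/
theorem degreeOf_config_poly_le_one
    {K : Type} [Field K] {E : Type} [Fintype E]
    (d : ℕ) (hd : 1 ≤ d)
    (M : E → Matrix (Fin d) (Fin d) K)
    (hM : ∀ e : E, (M e).rank ≤ 1) (e : E) :
    MvPolynomial.degreeOf e
      (Matrix.det (Matrix.of fun i j : Fin d =>
        ∑ f : E, MvPolynomial.X f * MvPolynomial.C (M f i j))) ≤ 1 := by
  classical
  obtain ⟨k, c, hck, hc⟩ := rank_one_rows d hd (M e) (hM e)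
  rw [Matrix.det_eq_of_forall_row_eq_smul_add_const (B := Matrix.of fun i j : Fin d =>
        ∑ f : E, MvPolynomial.X f * MvPolynomial.C (M f i j - c i * M f k j))
      (fun i => MvPolynomial.C (c i)) k (by simp [hck]) ?_]
  · rw [Matrix.det_apply']
    refine (MvPolynomial.degreeOf_sum_le _ _ _).trans (Finset.sup_le fun σ _ => ?_)
    have hs : ((Equiv.Perm.sign σ : ℤ) : MvPolynomial E K)
        = MvPolynomial.C ((Equiv.Perm.sign σ : ℤ) : K) := by simp
    rw [hs]
    refine (MvPolynomial.degreeOf_C_mul_le _ _ _).trans ?_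
    refine (MvPolynomial.degreeOf_prod_le _ _ _).trans ?_
    have hb : ∀ i ∈ (Finset.univ : Finset (Fin d)), MvPolynomial.degreeOf e
        ((Matrix.of fun i j : Fin d => ∑ f : E, (MvPolynomial.X f : MvPolynomial E K) *
          MvPolynomial.C (M f i j - c i * M f k j)) (σ i) i) ≤ if i = σ.symm k then 1 else 0 := by
      intro i _
      rw [Matrix.of_apply]
      refine (MvPolynomial.degreeOf_sum_le _ _ _).trans (Finset.sup_le fun f _ => ?_)
      by_cases hi : i = σ.symm k
      · rw [if_pos hi]
        refine (MvPolynomial.degreeOf_mul_C_le _ _ _).trans ?_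
        rw [MvPolynomial.degreeOf_X]
        split_ifs <;> simp
      · rw [if_neg hi]
        have hi' : σ i ≠ k := fun h => hi (by simp [← h])
        by_cases hf : e = f
        · subst hf
          rw [hc _ hi']
          simp
        · refine (MvPolynomial.degreeOf_mul_C_le _ _ _).trans ?_
          rw [MvPolynomial.degreeOf_X_of_ne hf]
    refine (Finset.sum_le_sum hb).trans ?_
    simp
  · intro i j
    simp only [Matrix.of_apply, hck, Finset.mul_sum, ← Finset.sum_add_distrib]
    refine Finset.sum_congr rfl fun f _ => ?_
    simp only [map_sub, map_mul, map_zero]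
    ring
end

section
/- Let R be a commutative ring, d ≥ 1 an integer, E a finite linearly ordered set, and for each e ∈ E a vector a_e ∈ R^d; let M_e := a_e·a_eᵀ be the d×d matrix with (i,j)-entry (a_e)_i·(a_e)_j. Then in the multivariate polynomial ring R[A_e : e ∈ E] one has det(∑_{e∈E} A_e · M_e) = ∑_{S ⊆ E, #S = d} (∏_{e∈S} A_e) · (det N_S)², where for each d-element subset S ⊆ E, N_S denotes the d×d matrix whose rows are the vectors a_e for e ∈ S listed in increasing order. In particular, for each S with #S = d the coefficient of the monomial ∏_{e∈S} A_e equals det(N_S)², and all other coefficients vanish. -/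
theorem det_config_aux {P E : Type} [CommRing P] [Fintype E] [LinearOrder E]
    (d : ℕ) (x : E → P) (b : E → Fin d → P) :
    Matrix.det (Matrix.of fun i j : Fin d => ∑ e : E, x e * (b e i * b e j)) =
    ∑ S : Finset E,
      if h : S.card = d then
        (∏ e ∈ S, x e) *
            (Matrix.det (Matrix.of fun i j : Fin d => b ((S.orderIsoOfFin h) i) j) ^ 2)
      else 0 := by
  have h1 : Matrix.det (Matrix.of fun i j : Fin d => ∑ e : E, x e * (b e i * b e j)) =
      ∑ p : Fin d → E, (∏ i, x (p i) * b (p i) i) *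
        Matrix.det (Matrix.of fun i j : Fin d => b (p i) j) := by
    have h2 : (Matrix.of fun i j : Fin d => ∑ e : E, x e * (b e i * b e j)) =
        (fun i : Fin d => ∑ e : E, (x e * b e i) • b e) := by
      funext i j
      simp [Finset.sum_apply, mul_assoc]
    rw [h2]
    have h3 := (Matrix.detRowAlternating (n := Fin d) (R := P)).toMultilinearMap.map_sum
      (fun (i : Fin d) (e : E) => (x e * b e i) • b e)
    refine h3.trans (Finset.sum_congr rfl fun p _ => ?_)
    exact (Matrix.detRowAlternating (n := Fin d) (R := P)).toMultilinearMap.map_smul_univ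
      (fun i => x (p i) * b (p i) i) (fun i => b (p i))
  rw [h1, ← Finset.sum_fiberwise Finset.univ (fun p : Fin d → E => Finset.univ.image p)]
  refine Finset.sum_congr rfl fun S _ => ?_
  split_ifs with h
  · have hb : ∑ σ : Equiv.Perm (Fin d),
        (∏ i, x (S.orderIsoOfFin h (σ i)) * b (S.orderIsoOfFin h (σ i)) i) *
        Matrix.det (Matrix.of fun i j : Fin d => b (S.orderIsoOfFin h (σ i)) j) =
        ∑ p : Fin d → E with Finset.univ.image p = S, (∏ i, x (p i) * b (p i) i) *
        Matrix.det (Matrix.of fun i j : Fin d => b (p i) j) := by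
      refine Finset.sum_bij (fun σ _ => fun i => (S.orderIsoOfFin h (σ i) : E)) ?_ ?_ ?_ ?_
      · intro σ _
        simp only [Finset.mem_filter, Finset.mem_univ, true_and]
        ext e
        simp only [Finset.mem_image, Finset.mem_univ, true_and]
        constructor
        · rintro ⟨i, rfl⟩
          exact (S.orderIsoOfFin h (σ i)).2
        · intro he
          exact ⟨σ.symm ((S.orderIsoOfFin h).symm ⟨e, he⟩), by simp⟩
      · intro σ _ τ _ hst
        ext i
        have := congrFun hst i
        have := (S.orderIsoOfFin h).injective (Subtype.ext this)
        rw [this]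
      · intro p hp
        simp only [Finset.mem_filter, Finset.mem_univ, true_and] at hp
        have hm : ∀ i, p i ∈ S := fun i => hp ▸ Finset.mem_image_of_mem p (Finset.mem_univ i)
        have hs : Function.Surjective fun i => (S.orderIsoOfFin h).symm ⟨p i, hm i⟩ := by
          intro k
          have hk := (S.orderIsoOfFin h k).2
          have hk2 : (S.orderIsoOfFin h k : E) ∈ Finset.univ.image p := by rw [hp]; exact hk
          obtain ⟨i, _, hi⟩ := Finset.mem_image.1 hk2
          refine ⟨i, ?_⟩
          simp only [OrderIso.symm_apply_eq]
          exact Subtype.ext hi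
        refine ⟨Equiv.ofBijective _ (Finite.surjective_iff_bijective.1 hs), Finset.mem_univ _, ?_⟩
        funext i
        simp
      · intro σ _
        rfl
    rw [← hb, sq]
    set N : Matrix (Fin d) (Fin d) P :=
      Matrix.of fun i j : Fin d => b (S.orderIsoOfFin h i) j with hN
    have hx : ∀ σ : Equiv.Perm (Fin d), ∏ i, x (S.orderIsoOfFin h (σ i)) = ∏ e ∈ S, x e := by
      intro σ
      rw [Equiv.prod_comp σ (fun i => x (S.orderIsoOfFin h i)), ← Finset.prod_coe_sort S x]
      exact Equiv.prod_comp (S.orderIsoOfFin h).toEquiv (fun e => x (e : E))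
    have hd : ∀ σ : Equiv.Perm (Fin d),
        Matrix.det (Matrix.of fun i j : Fin d => b (S.orderIsoOfFin h (σ i)) j) =
        (Equiv.Perm.sign σ : ℤ) * N.det := fun σ => Matrix.det_permute σ N
    conv_rhs => 
      enter [2, 1]
      rw [Matrix.det_apply']
    rw [Finset.sum_mul, Finset.mul_sum]
    refine Finset.sum_congr rfl fun σ _ => ?_
    rw [hd, Finset.prod_mul_distrib, hx]
    simp only [hN, Matrix.of_apply]
    ring
  · refine Finset.sum_eq_zero fun p hp => ?_
    simp only [Finset.mem_filter, Finset.mem_univ, true_and] at hp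
    have hni : ¬ Function.Injective p := by
      intro hi
      apply h
      rw [← hp, Finset.card_image_of_injective _ hi]
      simp
    simp only [Function.Injective, not_forall] at hni
    obtain ⟨i, j, hij, hne⟩ := hni
    rw [Matrix.det_zero_of_row_eq hne, mul_zero]
    funext k
    simp [hij]

/-- **Expansion of a configuration determinant in terms of Plücker coordinates.**
Let `R` be a commutative ring, `d ≥ 1`, `E` a finite linearly ordered set and
`a e ∈ R^d` a vector for each `e ∈ E`; let `M_e := a_e·a_eᵀ` be the outer-product
matrix.  Then in `R[A_e : e ∈ E]`,
`det (∑ e, A_e · M_e) = ∑_{S ⊆ E, #S = d} (∏_{e ∈ S} A_e) · (det N_S)²`,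
where `N_S` has rows `a e`, `e ∈ S`, listed in increasing order. -/
theorem det_config_eq_sum_squares
    {R : Type} [CommRing R] {E : Type} [Fintype E] [LinearOrder E]
    (d : ℕ) (hd : 1 ≤ d) (a : E → Fin d → R) :
    Matrix.det (Matrix.of fun i j : Fin d =>
        ∑ e : E, MvPolynomial.X e * MvPolynomial.C (a e i * a e j)) =
    ∑ S : Finset E,
      if h : S.card = d then
        (∏ e ∈ S, MvPolynomial.X e) *
          MvPolynomial.C
            (Matrix.det (Matrix.of fun i j : Fin d => a ((S.orderIsoOfFin h) i) j) ^ 2)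
      else 0 := by
  have := det_config_aux d (fun e : E => (MvPolynomial.X e : MvPolynomial E R))
    (fun e i => MvPolynomial.C (a e i))
  simp only [map_mul]
  rw [this]
  refine Finset.sum_congr rfl fun S _ => ?_
  split_ifs with h
  · rw [map_pow, RingHom.map_det]
    rfl
  · rfl
end

section
/- Let K be a field, E a finite linearly ordered set with N := #E, and let 0 < d < N. Let P be a d×N matrix over K of rank d and Q an (N−d)×N matrix over K of rank N−d, with columns of both indexed by E, such that P·Qᵀ = 0. Then there exists c ∈ K with c ≠ 0 such that for every subset S ⊆ E with #S = d one has det(P_S)² = c · det(Q_{E∖S})², where P_S is the d×d submatrix of P formed by the columns in S (listed in increasing order) and Q_{E∖S} is the (N−d)×(N−d) submatrix of Q formed by the columns in E∖S. Equivalently, det(P·diag(A)·Pᵀ) = c · ∑_{S ⊆ E, #S = d} (∏_{e∈S} A_e) · det(Q_{E∖S})² as elements of the polynomial ring K[A_e : e ∈ E], where diag(A) is the N×N diagonal matrix with diagonal entries A_e. -/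
open Matrix

theorem cb_fun {R : Type} [CommRing R] {E : Type} [Fintype E] [DecidableEq E] {d : ℕ}
    (A : Matrix (Fin d) E R) (B : Matrix E (Fin d) R) :
    (A * B).det = ∑ f : Fin d → E, (A.submatrix id f).det * ∏ i, B (f i) i := by
  simp only [det_apply', mul_apply, Finset.prod_univ_sum, Fintype.piFinset_univ, Finset.mul_sum,
    Finset.sum_mul, Finset.prod_mul_distrib, submatrix_apply, id]
  rw [Finset.sum_comm]
  simp only [mul_assoc]

theorem cb {R : Type} [CommRing R] {E : Type} [Fintype E] [LinearOrder E] {d : ℕ}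
    (A : Matrix (Fin d) E R) (B : Matrix E (Fin d) R) :
    (A * B).det = ∑ S : Finset E, if h : S.card = d then
      (A.submatrix id (fun j => ((S.orderIsoOfFin h) j : E))).det *
      (B.submatrix (fun j => ((S.orderIsoOfFin h) j : E)) id).det else 0 := by
  rw [cb_fun, ← Finset.sum_fiberwise Finset.univ (fun f : Fin d → E => Finset.univ.image f)]
  refine Finset.sum_congr rfl fun S _ => ?_
  split_ifs with h
  · rw [det_apply' (B.submatrix _ _), Finset.mul_sum]
    symm
    refine Finset.sum_bij (fun (σ : Equiv.Perm (Fin d)) _ =>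
      fun j => ((S.orderIsoOfFin h) (σ j) : E)) ?_ ?_ ?_ ?_
    · intro σ _
      simp only [Finset.mem_filter, Finset.mem_univ, true_and]
      ext e
      simp only [Finset.mem_image, Finset.mem_univ, true_and]
      constructor
      · rintro ⟨j, rfl⟩
        exact ((S.orderIsoOfFin h) (σ j)).2
      · intro he
        exact ⟨σ.symm ((S.orderIsoOfFin h).symm ⟨e, he⟩), by simp⟩
    · intro σ _ τ _ hst
      ext j
      have := congrFun hst j
      simpa [-Finset.coe_orderIsoOfFin_apply, Subtype.coe_inj, Fin.ext_iff] using this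
    · intro f hf
      simp only [Finset.mem_filter, Finset.mem_univ, true_and] at hf
      have hm : ∀ j, f j ∈ S := fun j => hf ▸ Finset.mem_image_of_mem f (Finset.mem_univ j)
      have hinj : Function.Injective f := by
        have hi : Set.InjOn f (Finset.univ : Finset (Fin d)) :=
          Finset.card_image_iff.1 (by rw [hf, h]; simp)
        simpa using hi
      have hg : Function.Injective (fun j => (S.orderIsoOfFin h).symm ⟨f j, hm j⟩) := by
        intro a b hab
        simp only [EmbeddingLike.apply_eq_iff_eq, Subtype.mk.injEq] at hab
        exact hinj hab
      refine ⟨Equiv.ofBijective _ (Finite.injective_iff_bijective.1 hg), Finset.mem_univ _, ?_⟩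
      ext j
      simp [-Finset.coe_orderIsoOfFin_apply]
    · intro σ _
      have := det_permute' σ (A.submatrix id (fun j => ((S.orderIsoOfFin h) j : E)))
      rw [submatrix_submatrix] at this
      change _ = (A.submatrix (id ∘ id) ((fun j => ((S.orderIsoOfFin h) j : E)) ∘ σ)).det * _
      rw [this]
      simp only [submatrix_apply, id]
      ring
  · refine Finset.sum_eq_zero fun f hf => ?_
    simp only [Finset.mem_filter, Finset.mem_univ, true_and] at hf
    have : ¬ Function.Injective f := fun hi => h (by
      rw [← hf, Finset.card_image_of_injective _ hi]; simp)
    simp only [Function.Injective, not_forall] at this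
    obtain ⟨a, b, hab, hne⟩ := this
    rw [det_zero_of_column_eq hne (by intro k; simp [hab]), zero_mul]

theorem right_inv {K : Type} [Field K] {E : Type} [Fintype E] [DecidableEq E] {d : ℕ}
    (P : Matrix (Fin d) E K) (hP : P.rank = d) : ∃ R : Matrix E (Fin d) K, P * R = 1 := by
  rw [← Matrix.mulVec_surjective_iff_exists_right_inverse]
  have : LinearMap.range P.mulVecLin = ⊤ := by
    apply Submodule.eq_top_of_finrank_eq
    rw [← Matrix.rank, hP]; simp
  exact LinearMap.range_eq_top.1 this

theorem part_one {K : Type} [Field K] {E : Type} [Fintype E] [LinearOrder E]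
    (d : ℕ) (hdN : d < Fintype.card E)
    (P : Matrix (Fin d) E K) (Q : Matrix (Fin (Fintype.card E - d)) E K)
    (hP : P.rank = d) (hQ : Q.rank = Fintype.card E - d)
    (hPQ : P * Qᵀ = 0) :
    ∃ c : K, c ≠ 0 ∧
      (∀ (S : Finset E) (h : S.card = d),
        Matrix.det (Matrix.of fun i j : Fin d => P i ((S.orderIsoOfFin h) j)) ^ 2 =
          c * Matrix.det (Matrix.of fun i j : Fin (Fintype.card E - d) =>
              Q i ((Sᶜ.orderIsoOfFin (by rw [Finset.card_compl, h])) j)) ^ 2) := by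
  obtain ⟨R, hR⟩ := right_inv P hP
  obtain ⟨T, hT⟩ := right_inv Q hQ
  have hTQ : Tᵀ * Qᵀ = 1 := by rw [← transpose_mul, hT, transpose_one]
  set Y := fromRows P Tᵀ with hY
  have key : ∀ φ : Fin d ⊕ Fin (Fintype.card E - d) ≃ E,
      (Y * Yᵀ).det = (Y.submatrix id φ).det ^ 2 := by
    intro φ
    have : Y * Yᵀ = Y.submatrix id φ * (Y.submatrix id φ)ᵀ := by
      rw [transpose_submatrix, submatrix_mul_equiv]; simp
    rw [this, det_mul, det_transpose, sq]
  refine ⟨(Y * Yᵀ).det, ?_, ?_⟩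
  · let φ : Fin d ⊕ Fin (Fintype.card E - d) ≃ E :=
      finSumFinEquiv.trans ((finCongr (by omega)).trans (Fintype.equivFin E).symm)
    rw [key φ]
    have h1 : Y.submatrix id φ * (fromCols R Qᵀ).submatrix φ id = fromBlocks 1 0 (Tᵀ * R) 1 := by
      rw [submatrix_mul_equiv, submatrix_id_id, hY, fromRows_mul_fromCols, hR, hPQ, hTQ]
    have h2 := congrArg det h1
    rw [det_mul, det_fromBlocks_zero₁₂, det_one, det_one, one_mul] at h2
    exact pow_ne_zero _ (left_ne_zero_of_mul_eq_one h2)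
  · intro S h
    have h' : Sᶜ.card = Fintype.card E - d := by rw [Finset.card_compl, h]
    let φ : Fin d ⊕ Fin (Fintype.card E - d) ≃ E :=
      (Equiv.sumCongr (S.orderIsoOfFin h).toEquiv ((Sᶜ.orderIsoOfFin h').toEquiv.trans
        (Equiv.subtypeEquivRight (by simp)))).trans (Equiv.sumCompl (· ∈ S))
    have hl : ∀ j, φ (Sum.inl j) = S.orderIsoOfFin h j := fun j => rfl
    have hr : ∀ j, φ (Sum.inr j) = Sᶜ.orderIsoOfFin h' j := fun j => rfl
    rw [key φ, ← mul_pow]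
    congr 1
    have hPQ' : ∀ i k, ∑ x, P i (φ x) * Q k (φ x) = 0 := fun i k => by
      rw [Equiv.sum_comp φ (fun e => P i e * Q k e)]
      exact congrFun (congrFun hPQ i) k
    have hTQ' : ∀ i k, ∑ x, T (φ x) i * Q k (φ x) = (1 : Matrix _ _ K) i k := fun i k => by
      rw [Equiv.sum_comp φ (fun e => T e i * Q k e)]
      exact congrFun (congrFun hTQ i) k
    have h1 : Y.submatrix id φ * fromBlocks 1 (Matrix.of fun i j => Q j (φ (Sum.inl i))) 0
        (Matrix.of fun i j => Q j (φ (Sum.inr i))) =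
        fromBlocks (Matrix.of fun i j => P i (φ (Sum.inl j))) 0
          (Matrix.of fun i j => T (φ (Sum.inl j)) i) 1 := by
      ext (i | i) (k | k)
      · simp [mul_apply, hY, Matrix.one_apply]
      · simpa [mul_apply, hY] using hPQ' i k
      · simp [mul_apply, hY, Matrix.one_apply]
      · simpa [mul_apply, hY] using hTQ' i k
    have h2 := congrArg det h1
    rw [det_mul, det_fromBlocks_zero₁₂, det_fromBlocks_zero₂₁, det_one, det_one, one_mul,
      mul_one] at h2
    rw [← det_transpose (Matrix.of fun i j => Q i _)]
    exact h2.symm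

/-- **The functional equation for configuration polynomials** (duality between a
configuration and its annihilator).  Let `K` be a field, `E` finite linearly ordered
with `N := #E`, `0 < d < N`, `P` a `d × N` matrix of rank `d`, `Q` an
`(N−d) × N` matrix of rank `N−d`, with `P·Qᵀ = 0`.  Then there is `c ≠ 0` in `K`
such that `det(P_S)² = c·det(Q_{E∖S})²` for every `S ⊆ E` with `#S = d`, and
equivalently
`det(P·diag(A)·Pᵀ) = c·∑_{#S = d} (∏_{e∈S} A_e)·det(Q_{E∖S})²` in `K[A_e : e ∈ E]`. -/
theorem config_poly_functional_equation
    {K : Type} [Field K] {E : Type} [Fintype E] [LinearOrder E]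
    (d : ℕ) (hd : 0 < d) (hdN : d < Fintype.card E)
    (P : Matrix (Fin d) E K) (Q : Matrix (Fin (Fintype.card E - d)) E K)
    (hP : P.rank = d) (hQ : Q.rank = Fintype.card E - d)
    (hPQ : P * Qᵀ = 0) :
    ∃ c : K, c ≠ 0 ∧
      (∀ (S : Finset E) (h : S.card = d),
        Matrix.det (Matrix.of fun i j : Fin d => P i ((S.orderIsoOfFin h) j)) ^ 2 =
          c * Matrix.det (Matrix.of fun i j : Fin (Fintype.card E - d) =>
              Q i ((Sᶜ.orderIsoOfFin (by rw [Finset.card_compl, h])) j)) ^ 2) ∧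
      Matrix.det
          (P.map (MvPolynomial.C (σ := E)) *
            Matrix.diagonal (fun e : E => (MvPolynomial.X e : MvPolynomial E K)) *
            (P.map (MvPolynomial.C (σ := E)))ᵀ) =
        MvPolynomial.C c *
          ∑ S : Finset E,
            if h : S.card = d then
              (∏ e ∈ S, MvPolynomial.X e) *
                MvPolynomial.C
                  (Matrix.det (Matrix.of fun i j : Fin (Fintype.card E - d) =>
                    Q i ((Sᶜ.orderIsoOfFin (by rw [Finset.card_compl, h])) j)) ^ 2)
            else 0 := by
  obtain ⟨c, hc, h1⟩ := part_one d hdN P Q hP hQ hPQ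
  refine ⟨c, hc, h1, ?_⟩
  rw [cb, Finset.mul_sum]
  refine Finset.sum_congr rfl fun S _ => ?_
  split_ifs with h
  · have e1 : ((P.map (MvPolynomial.C (σ := E)) *
        Matrix.diagonal (fun e : E => (MvPolynomial.X e : MvPolynomial E K))).submatrix id
          (fun j => ((S.orderIsoOfFin h) j : E))).det =
        (∏ e ∈ S, MvPolynomial.X e) * MvPolynomial.C
          (Matrix.det (Matrix.of fun i j : Fin d => P i ((S.orderIsoOfFin h) j))) := by
      rw [RingHom.map_det, ← Finset.prod_coe_sort S,
        ← Equiv.prod_comp (S.orderIsoOfFin h).toEquiv, ← det_mul_row]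
      congr 1
      ext1 i j
      simp [mul_comm]
    have e2 : ((P.map (MvPolynomial.C (σ := E)))ᵀ.submatrix
          (fun j => ((S.orderIsoOfFin h) j : E)) id).det = MvPolynomial.C
          (Matrix.det (Matrix.of fun i j : Fin d => P i ((S.orderIsoOfFin h) j))) := by
      rw [RingHom.map_det, ← det_transpose]
      rfl
    rw [e1, e2, mul_assoc, ← map_mul, ← sq, h1 S h, map_mul]
    ring
  · simp
end

section
/- Let Γ be a finite connected simple graph (in the notation below), let d := h_1(Γ), and let Ψ_Γ ∈ ℤ[A_e : e ∈ E] be its graph polynomial with respect to any ℤ-basis of ker ∂_ℤ. Then Ψ_Γ = ∑_T ∏_{e ∈ E∖E_T} A_e, where the sum runs over all spanning trees T of Γ. -/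
open scoped BigOperators

variable {V : Type} [Fintype V] [LinearOrder V]

/-- The incidence sign of a vertex `v` in an edge `e` of a graph whose vertices are
linearly ordered and whose edges are oriented from the smaller to the larger
endpoint: `+1` if `v` is the larger endpoint, `-1` if `v` is the smaller endpoint,
`0` otherwise. -/
def incSign (R : Type) [CommRing R] (v : V) (e : Sym2 V) : R :=
  (if v = Sym2.sup e then 1 else 0) - (if v = Sym2.inf e then 1 else 0)

/-- The incidence (boundary) map `∂_R : R^E → R^V` of a finite graph `G`, sending the
basis vector of an edge `e = {u,v}` with `u < v` to `1_v − 1_u`. -/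
noncomputable def boundary (R : Type) [CommRing R] (G : SimpleGraph V)
    [Fintype G.edgeSet] : (G.edgeSet → R) →ₗ[R] (V → R) :=
  Matrix.mulVecLin (Matrix.of fun (v : V) (e : G.edgeSet) => incSign R v e.1)

/-- The graph polynomial `Ψ_Γ = det(∑_e A_e·M_e)` of `G` with respect to a `ℤ`-basis
`b` of the cycle space `ker ∂_ℤ`, where `M_e` is the `d × d` matrix with entries
`(b i) e · (b j) e`; an element of the polynomial ring `ℤ[A_e : e ∈ E]`. -/
noncomputable def graphPoly (G : SimpleGraph V) [Fintype G.edgeSet] {d : ℕ}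
    (b : Module.Basis (Fin d) ℤ (LinearMap.ker (boundary ℤ G))) :
    MvPolynomial (Sym2 V) ℤ :=
  Matrix.det (Matrix.of fun i j : Fin d =>
    ∑ e : G.edgeSet, MvPolynomial.X (e : Sym2 V) *
      MvPolynomial.C (((b i : G.edgeSet → ℤ) e) * ((b j : G.edgeSet → ℤ) e)))

lemma bd_apply (G : SimpleGraph V) [Fintype G.edgeSet] (h : G.edgeSet → ℤ) (v : V) :
    boundary ℤ G h v = ∑ e : G.edgeSet, incSign ℤ v e.1 * h e := by
  simp [boundary, Matrix.mulVec, dotProduct]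

lemma bd_pair (G : SimpleGraph V) [Fintype G.edgeSet] (h : G.edgeSet → ℤ) (χ : V → ℤ) :
    ∑ v, χ v * boundary ℤ G h v
      = ∑ e : G.edgeSet, h e * (χ (Sym2.sup e.1) - χ (Sym2.inf e.1)) := by
  simp only [bd_apply, Finset.mul_sum]
  rw [Finset.sum_comm]
  refine Finset.sum_congr rfl fun e _ => ?_
  have : ∀ v, χ v * (incSign ℤ v e.1 * h e) =
      (if v = Sym2.sup e.1 then χ v * h e else 0) - (if v = Sym2.inf e.1 then χ v * h e else 0) := by
    intro v; unfold incSign; split_ifs <;> ring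
  simp only [this, Finset.sum_sub_distrib, Finset.sum_ite_eq', Finset.mem_univ, if_true]
  ring

lemma bd_single (G : SimpleGraph V) [Fintype G.edgeSet] [DecidableEq G.edgeSet] (e : G.edgeSet) :
    boundary ℤ G (Pi.single e 1) = Pi.single (Sym2.sup e.1) 1 - Pi.single (Sym2.inf e.1) 1 := by
  ext v
  rw [bd_apply]
  simp [Pi.single_apply, incSign]

lemma adj_chain (G : SimpleGraph V) [Fintype G.edgeSet] {u v : V} (e : G.edgeSet)
    (he : e.1 = s(u, v)) :
    ∃ h : G.edgeSet → ℤ, (∀ f, f ≠ e → h f = 0) ∧ (h e) * (h e) = 1 ∧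
      boundary ℤ G h = Pi.single v 1 - Pi.single u 1 := by
  classical
  rcases le_total u v with hl | hl
  · refine ⟨Pi.single e 1, fun f hf => by simp [hf], by simp, ?_⟩
    rw [bd_single, he]; simp [hl]
  · refine ⟨-Pi.single e 1, fun f hf => by simp [hf], by simp, ?_⟩
    rw [map_neg, bd_single, he]; simp [hl]

lemma reach_chain (G H : SimpleGraph V) [Fintype G.edgeSet] (hH : H ≤ G) {u v : V}
    (hr : H.Reachable u v) :
    ∃ h : G.edgeSet → ℤ, (∀ f : G.edgeSet, f.1 ∉ H.edgeSet → h f = 0) ∧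
      boundary ℤ G h = Pi.single v 1 - Pi.single u 1 := by
  obtain ⟨p⟩ := hr
  induction p with
  | nil => exact ⟨0, by simp, by simp⟩
  | @cons a b c hab p ih =>
    obtain ⟨h, h1, h2⟩ := ih
    obtain ⟨k, k1, -, k2⟩ := adj_chain G ⟨s(a, b), hH hab⟩ rfl
    refine ⟨h + k, fun f hf => ?_, by rw [map_add, h2, k2]; abel⟩
    rw [Pi.add_apply, h1 f hf, k1 f, zero_add]
    rintro rfl
    exact hf hab

lemma fund_cycle (G H : SimpleGraph V) [Fintype G.edgeSet] (hH : H ≤ G) {u v : V}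
    (hr : H.Reachable u v) (e : G.edgeSet) (he : e.1 = s(u, v)) (heH : e.1 ∉ H.edgeSet) :
    ∃ h : G.edgeSet → ℤ, boundary ℤ G h = 0 ∧ h e = 1 ∧
      ∀ f : G.edgeSet, f ≠ e → f.1 ∉ H.edgeSet → h f = 0 := by
  obtain ⟨h, h1, h2⟩ := reach_chain G H hH hr
  obtain ⟨k, k1, k3, k2⟩ := adj_chain G e he
  refine ⟨(k e) • (k - h), ?_, ?_, fun f hf hfH => ?_⟩
  · rw [map_smul, map_sub, h2, k2]; simp
  · simp [h1 e heH, k3]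
  · simp [h1 f hfH, k1 f hf]

lemma acyclic_zero (G H : SimpleGraph V) [Fintype G.edgeSet] (hA : H.IsAcyclic)
    (h : G.edgeSet → ℤ) (hk : boundary ℤ G h = 0)
    (hs : ∀ f : G.edgeSet, f.1 ∉ H.edgeSet → h f = 0) : h = 0 := by
  classical
  ext e
  by_cases heH : e.1 ∈ H.edgeSet
  swap
  · exact hs e heH
  have hb := SimpleGraph.isAcyclic_iff_forall_isBridge.1 hA heH
  have key : ∀ u v, e.1 = s(u, v) → h e = 0 := by
    intro u v he
    rw [he, SimpleGraph.isBridge_iff] at hb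
    set K := H.deleteEdges {s(u, v)} with hK
    let χ : V → ℤ := fun w => if K.Reachable u w then 1 else 0
    have hp := bd_pair G h χ
    rw [hk] at hp
    rw [Finset.sum_eq_single e] at hp
    · have hu : χ u = 1 := by simp [χ]
      have hv : χ v = 0 := by simp [χ, hb]
      rw [he] at hp
      rcases le_total u v with hl | hl <;> simp [hl, hu, hv] at hp <;> first | exact hp | exact hp.symm
    · intro f _ hf
      by_cases hfH : f.1 ∈ H.edgeSet
      swap
      · simp [hs f hfH]
      have hfK : f.1 ∈ K.edgeSet := by
        rw [hK, SimpleGraph.edgeSet_deleteEdges]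
        exact ⟨hfH, fun h' => hf (Subtype.ext (by rw [he]; exact h'))⟩
      have : ∀ a b, f.1 = s(a, b) → χ (Sym2.sup f.1) = χ (Sym2.inf f.1) := by
        intro a b hab
        rw [hab] at hfK ⊢
        have hadj : K.Adj a b := hfK
        have : K.Reachable u a ↔ K.Reachable u b :=
          ⟨fun h => h.trans hadj.reachable, fun h => h.trans hadj.reachable.symm⟩
        rcases le_total a b with hl | hl <;> simp [hl, χ, this]
      obtain ⟨⟨a, b⟩, hab⟩ := Sym2.mk_surjective f.1
      rw [this a b hab.symm]; simp
    · simp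
  obtain ⟨⟨u, v⟩, huv⟩ := Sym2.mk_surjective e.1
  exact key u v huv.symm

lemma tree_cycle (G T : SimpleGraph V) [Fintype G.edgeSet] (hT : T ≤ G) (hTr : T.IsTree)
    (e : G.edgeSet) (heT : e.1 ∉ T.edgeSet) :
    ∃ h : G.edgeSet → ℤ, boundary ℤ G h = 0 ∧ h e = 1 ∧
      ∀ f : G.edgeSet, f ≠ e → f.1 ∉ T.edgeSet → h f = 0 := by
  obtain ⟨⟨u, v⟩, huv⟩ := Sym2.mk_surjective e.1
  exact fund_cycle G T hT (hTr.connected.preconnected u v) e huv.symm heT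

lemma repr_apply' (G : SimpleGraph V) [Fintype G.edgeSet] {d : ℕ}
    (b : Module.Basis (Fin d) ℤ (LinearMap.ker (boundary ℤ G)))
    (h : LinearMap.ker (boundary ℤ G)) (e : G.edgeSet) :
    (h : G.edgeSet → ℤ) e = ∑ j, (b j : G.edgeSet → ℤ) e * b.repr h j := by
  have h1 := congrArg (fun z : LinearMap.ker (boundary ℤ G) => (z : G.edgeSet → ℤ) e) (b.sum_repr h)
  refine h1.symm.trans ?_
  simp only [Submodule.coe_sum, Finset.sum_apply]
  refine Finset.sum_congr rfl fun j _ => ?_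
  exact mul_comm _ _

lemma tree_card (G T : SimpleGraph V) [Fintype G.edgeSet] (hT : T ≤ G) (hTr : T.IsTree) {d : ℕ}
    (b : Module.Basis (Fin d) ℤ (LinearMap.ker (boundary ℤ G))) :
    Nat.card {e : G.edgeSet // e.1 ∉ T.edgeSet} = d := by
  classical
  choose c c1 c2 c3 using tree_cycle G T hT hTr
  let φ : LinearMap.ker (boundary ℤ G) →ₗ[ℤ] ({e : G.edgeSet // e.1 ∉ T.edgeSet} → ℤ) :=
    (LinearMap.funLeft ℤ ℤ Subtype.val).comp (Submodule.subtype _)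
  have hi : Function.Injective φ := by
    rw [← LinearMap.ker_eq_bot, LinearMap.ker_eq_bot']
    intro m hm
    apply Subtype.ext
    refine acyclic_zero G T hTr.isAcyclic m.1 m.2 fun f hf => ?_
    exact congrFun hm ⟨f, hf⟩
  have hsurj : Function.Surjective φ := by
    intro y
    refine ⟨∑ e, y e • ⟨c e.1 e.2, c1 e.1 e.2⟩, ?_⟩
    ext f
    rw [map_sum, Finset.sum_apply, Finset.sum_eq_single f]
    · simp [φ, LinearMap.funLeft, c2]
    · intro e _ hne
      have : c e.1 e.2 f.1 = 0 := c3 e.1 e.2 f.1 (fun h => hne (Subtype.ext h.symm)) f.2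
      simp [φ, LinearMap.funLeft, this]
    · simp
  have := (LinearEquiv.ofBijective φ ⟨hi, hsurj⟩).finrank_eq
  rw [Module.finrank_eq_card_basis b] at this
  simp at this
  simp [this]

/-- The minor of the cycle matrix. -/
noncomputable def minor (G : SimpleGraph V) [Fintype G.edgeSet] {d : ℕ}
    (b : Module.Basis (Fin d) ℤ (LinearMap.ker (boundary ℤ G))) (f : Fin d → G.edgeSet) :
    Matrix (Fin d) (Fin d) ℤ := Matrix.of fun i j => (b j : G.edgeSet → ℤ) (f i)

lemma minor_sq (G T : SimpleGraph V) [Fintype G.edgeSet] (hT : T ≤ G) (hTr : T.IsTree) {d : ℕ}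
    (b : Module.Basis (Fin d) ℤ (LinearMap.ker (boundary ℤ G))) (f : Fin d → G.edgeSet)
    (hf : Function.Injective f) (hfT : ∀ i, (f i).1 ∉ T.edgeSet) :
    (minor G b f).det * (minor G b f).det = 1 := by
  classical
  choose c c1 c2 c3 using tree_cycle G T hT hTr
  let A : Matrix (Fin d) (Fin d) ℤ := Matrix.of fun j i =>
    b.repr ⟨c (f i) (hfT i), c1 (f i) (hfT i)⟩ j
  have h1 : minor G b f * A = 1 := by
    ext i k
    rw [Matrix.mul_apply]
    have := repr_apply' G b ⟨c (f k) (hfT k), c1 (f k) (hfT k)⟩ (f i)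
    simp only [minor, A, Matrix.of_apply]
    rw [← this]
    by_cases hik : i = k
    · subst hik; simp [c2]
    · rw [Matrix.one_apply_ne hik]
      exact c3 _ _ _ (fun h => hik (hf h)) (hfT i)
  have h2 : IsUnit (minor G b f).det := by
    have := congrArg Matrix.det h1
    rw [Matrix.det_mul, Matrix.det_one] at this
    exact IsUnit.of_mul_eq_one _ this
  exact Int.isUnit_mul_self h2

lemma minor_inj (G : SimpleGraph V) [Fintype G.edgeSet] {d : ℕ}
    (b : Module.Basis (Fin d) ℤ (LinearMap.ker (boundary ℤ G))) (f : Fin d → G.edgeSet)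
    (hd : (minor G b f).det ≠ 0) : Function.Injective f := by
  intro i j hij
  by_contra hne
  apply hd
  refine Matrix.det_zero_of_row_eq hne ?_
  ext k
  simp [minor, hij]

lemma minor_tree (G : SimpleGraph V) [Fintype G.edgeSet] (hG : G.Connected) {d : ℕ}
    (b : Module.Basis (Fin d) ℤ (LinearMap.ker (boundary ℤ G))) (f : Fin d → G.edgeSet)
    (hd : (minor G b f).det ≠ 0) :
    (G.deleteEdges (Set.range fun i => (f i).1)).IsTree := by
  classical
  set H := G.deleteEdges (Set.range fun i => (f i).1) with hH
  have hHG : H ≤ G := G.deleteEdges_le _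
  have hfH : ∀ i, (f i).1 ∉ H.edgeSet := by
    intro i; rw [hH, SimpleGraph.edgeSet_deleteEdges]; simp
  have hAc : H.IsAcyclic := by
    rw [SimpleGraph.isAcyclic_iff_forall_adj_isBridge]
    intro u v huv
    rw [SimpleGraph.isBridge_iff]
    intro hr
    obtain ⟨h, h1, h2, h3⟩ := fund_cycle G (H.deleteEdges {s(u, v)})
      ((H.deleteEdges_le _).trans hHG) hr ⟨s(u, v), hHG huv⟩ rfl
      (by rw [SimpleGraph.edgeSet_deleteEdges]; simp)
    have h4 : ∀ i, h (f i) = 0 := by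
      intro i
      apply h3
      · intro h'
        apply hfH i
        rw [h']; exact huv
      · intro h'
        exact hfH i (SimpleGraph.edgeSet_mono (H.deleteEdges_le _) h')
    have h5 := Matrix.eq_zero_of_mulVec_eq_zero hd (v := fun j => b.repr ⟨h, h1⟩ j) (by
      ext i
      have := repr_apply' G b ⟨h, h1⟩ (f i)
      simp only [Matrix.mulVec, dotProduct, minor, Matrix.of_apply, Pi.zero_apply]
      rw [← this]; exact h4 i)
    have h6 := repr_apply' G b ⟨h, h1⟩ ⟨s(u, v), hHG huv⟩
    have h7 : ∀ j, b.repr ⟨h, h1⟩ j = 0 := fun j => congrFun h5 j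
    simp [h7, h2] at h6
  obtain ⟨T, hTG, hHT, hTr⟩ : ∃ T, T ≤ G ∧ H ≤ T ∧ T.IsTree := by
    obtain ⟨T, h1, h2, h3⟩ := hG.exists_isTree_le_of_le_of_isAcyclic hHG hAc
    exact ⟨T, by assumption, by assumption, by assumption⟩
  have hcard := tree_card G T hTG hTr b
  have hsub : (Finset.univ.filter fun e : G.edgeSet => e.1 ∉ T.edgeSet) ⊆
      Finset.univ.image f := by
    intro e he
    simp only [Finset.mem_filter, Finset.mem_univ, true_and] at he
    by_contra hn
    apply he
    apply SimpleGraph.edgeSet_mono hHT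
    rw [hH, SimpleGraph.edgeSet_deleteEdges]
    refine ⟨e.2, ?_⟩
    rintro ⟨i, hi⟩
    exact hn (Finset.mem_image.2 ⟨i, Finset.mem_univ _, Subtype.ext hi⟩)
  have heq := Finset.eq_of_subset_of_card_le hsub (by
    rw [Finset.card_image_of_injective _ (minor_inj G b f hd)]
    rw [Nat.card_eq_fintype_card, Fintype.card_subtype] at hcard
    rw [hcard]; simp)
  have : T = H := by
    refine le_antisymm ?_ hHT
    rw [← SimpleGraph.edgeSet_subset_edgeSet]
    intro e he
    rw [hH, SimpleGraph.edgeSet_deleteEdges]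
    refine ⟨SimpleGraph.edgeSet_mono hTG he, ?_⟩
    rintro ⟨i, hi⟩
    have : f i ∈ Finset.univ.filter fun e : G.edgeSet => e.1 ∉ T.edgeSet := by
      rw [heq]; exact Finset.mem_image_of_mem _ (Finset.mem_univ _)
    simp only [Finset.mem_filter, Finset.mem_univ, true_and] at this
    apply this
    rw [← hi] at he
    exact he
  rw [← this]; exact hTr

/-- Term of the multilinear expansion. -/
noncomputable def expTerm (G : SimpleGraph V) [Fintype G.edgeSet] {d : ℕ}
    (b : Module.Basis (Fin d) ℤ (LinearMap.ker (boundary ℤ G))) (f : Fin d → G.edgeSet) :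
    MvPolynomial (Sym2 V) ℤ :=
  (∏ i, MvPolynomial.X (f i).1) *
    MvPolynomial.C ((∏ i, (b i : G.edgeSet → ℤ) (f i)) * (minor G b f).det)

lemma graphPoly_expand (G : SimpleGraph V) [Fintype G.edgeSet] {d : ℕ}
    (b : Module.Basis (Fin d) ℤ (LinearMap.ker (boundary ℤ G))) :
    graphPoly G b = ∑ f : Fin d → G.edgeSet, expTerm G b f := by
  classical
  have h := (Matrix.detRowAlternating (n := Fin d)
    (R := MvPolynomial (Sym2 V) ℤ)).toMultilinearMap.map_sum
    (fun (i : Fin d) (e : G.edgeSet) => fun j : Fin d =>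
      MvPolynomial.X (e : Sym2 V) *
      MvPolynomial.C (((b i : G.edgeSet → ℤ) e) * ((b j : G.edgeSet → ℤ) e)))
  have h0 : graphPoly G b = Matrix.detRowAlternating (n := Fin d)
    (R := MvPolynomial (Sym2 V) ℤ) (fun i => ∑ e : G.edgeSet, fun j : Fin d =>
      MvPolynomial.X (e : Sym2 V) *
      MvPolynomial.C (((b i : G.edgeSet → ℤ) e) * ((b j : G.edgeSet → ℤ) e))) := by
    unfold graphPoly
    change Matrix.det _ = Matrix.det _
    congr 1
    ext1 i j
    simp [Finset.sum_apply]
  rw [h0]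
  refine h.trans (Finset.sum_congr rfl fun f _ => ?_)
  change Matrix.det _ = _
  have h2 : (fun i j => MvPolynomial.X ((f i : Sym2 V)) *
      MvPolynomial.C (((b i : G.edgeSet → ℤ) (f i)) * ((b j : G.edgeSet → ℤ) (f i))) :
      Matrix (Fin d) (Fin d) (MvPolynomial (Sym2 V) ℤ))
      = Matrix.of fun i j => (MvPolynomial.X ((f i : Sym2 V)) *
        MvPolynomial.C ((b i : G.edgeSet → ℤ) (f i))) *
        ((minor G b f).map (MvPolynomial.C : ℤ →+* MvPolynomial (Sym2 V) ℤ)) i j := by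
    funext i j
    simp [minor, mul_assoc]
  rw [h2, Matrix.det_mul_column, ← RingHom.mapMatrix_apply, ← RingHom.map_det, expTerm,
    Finset.prod_mul_distrib, map_mul, map_prod]
  ring

lemma tree_sum (G T : SimpleGraph V) [Fintype G.edgeSet] (hT : T ≤ G) (hTr : T.IsTree) {d : ℕ}
    (b : Module.Basis (Fin d) ℤ (LinearMap.ker (boundary ℤ G)))
    (s : Finset (Fin d → G.edgeSet))
    (hs : ∀ f, f ∈ s ↔ Function.Injective f ∧ G.deleteEdges (Set.range fun i => (f i).1) = T) :
    ∑ f ∈ s, expTerm G b f =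
      ∏ e ∈ (G.edgeSet \ T.edgeSet).toFinite.toFinset, MvPolynomial.X e := by
  classical
  have hcard := tree_card G T hT hTr b
  let g : Fin d ≃ {e : G.edgeSet // e.1 ∉ T.edgeSet} := (Finite.equivFinOfCardEq hcard).symm
  let g' : Fin d → G.edgeSet := fun i => (g i).1
  have hg' : Function.Injective g' := Subtype.val_injective.comp g.injective
  have hsq := minor_sq G T hT hTr b g' hg' (fun i => (g i).2)
  have hmem : ∀ f, f ∈ s ↔ Function.Injective f ∧ ∀ e : G.edgeSet, e ∈ Set.range f ↔ e.1 ∉ T.edgeSet := by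
    intro f
    rw [hs]
    refine and_congr_right fun _ => ?_
    rw [← SimpleGraph.edgeSet_inj, SimpleGraph.edgeSet_deleteEdges]
    constructor
    · intro h e
      rw [← h]
      simp [Subtype.ext_iff]
    · intro h
      ext e
      constructor
      · rintro ⟨h1, h2⟩
        by_contra h3
        obtain ⟨i, hi⟩ := (h ⟨e, h1⟩).2 h3
        exact h2 ⟨i, by simp [hi]⟩
      · intro h1
        refine ⟨SimpleGraph.edgeSet_mono hT h1, ?_⟩
        rintro ⟨i, rfl⟩
        exact (h (f i)).1 ⟨i, rfl⟩ h1
  have hbij : ∑ f ∈ s, expTerm G b f = ∑ σ : Equiv.Perm (Fin d), expTerm G b (g' ∘ σ) := by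
    symm
    refine Finset.sum_bij (fun σ _ => g' ∘ σ) ?_ ?_ ?_ (fun _ _ => rfl)
    · intro σ _
      rw [hmem]
      refine ⟨hg'.comp σ.injective, fun e => ⟨?_, fun he => ?_⟩⟩
      · rintro ⟨i, rfl⟩; exact (g (σ i)).2
      · exact ⟨σ.symm (g.symm ⟨e, he⟩), by simp [g']⟩
    · intro σ _ τ _ h
      ext i
      exact congrArg _ (hg' (congrFun h i))
    · intro f hf
      rw [hmem] at hf
      let k : Fin d → Fin d := fun i => g.symm ⟨f i, (hf.2 (f i)).1 ⟨i, rfl⟩⟩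
      have hk : Function.Injective k := by
        intro i j hij
        exact hf.1 (congrArg Subtype.val (g.symm.injective hij))
      refine ⟨Equiv.ofBijective k (Finite.injective_iff_bijective.1 hk), Finset.mem_univ _, ?_⟩
      ext1 i
      simp [g', k]
  rw [hbij]
  have hX : ∀ σ : Equiv.Perm (Fin d), (∏ i, (MvPolynomial.X ((g' ∘ σ) i).1 : MvPolynomial (Sym2 V) ℤ))
      = ∏ e ∈ (G.edgeSet \ T.edgeSet).toFinite.toFinset, MvPolynomial.X e := by
    intro σ
    refine Finset.prod_bij (fun i _ => (g' (σ i)).1) ?_ ?_ ?_ (fun _ _ => rfl)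
    · intro i _
      exact (Set.Finite.mem_toFinset _).2 ⟨(g' (σ i)).2, (g (σ i)).2⟩
    · intro i _ j _ h
      exact σ.injective (hg' (Subtype.ext h))
    · intro e he
      simp only [Set.Finite.mem_toFinset, Set.mem_sdiff] at he
      exact ⟨σ.symm (g.symm ⟨⟨e, he.1⟩, he.2⟩), Finset.mem_univ _, by simp [g']⟩
  have hD : ∀ σ : Equiv.Perm (Fin d), (minor G b (g' ∘ σ)).det
      = Equiv.Perm.sign σ * (minor G b g').det := fun σ => Matrix.det_permute σ (minor G b g')
  simp only [expTerm, hX, hD]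
  rw [← Finset.mul_sum, ← map_sum]
  have : ∑ σ : Equiv.Perm (Fin d), (∏ i, (b i : G.edgeSet → ℤ) ((g' ∘ σ) i)) *
      ((Equiv.Perm.sign σ : ℤ) * (minor G b g').det) = 1 := by
    rw [← hsq]
    have hdet := Matrix.det_apply' (minor G b g')
    generalize (minor G b g').det = D at hdet ⊢
    refine Eq.trans ?_ (congrArg (· * D) hdet.symm)
    simp only [Finset.sum_mul]
    refine Finset.sum_congr rfl fun σ _ => ?_
    simp only [minor, Matrix.of_apply, Function.comp, Int.cast_id]
    ring
  rw [this]; simp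

/-- **The matrix-tree expansion of the graph polynomial** (Proposition 2.2 of
Bloch–Esnault–Kreimer): for a finite connected simple graph `G`, with respect to any
`ℤ`-basis of the cycle space,
`Ψ_Γ = ∑_{T spanning tree} ∏_{e ∉ E_T} A_e`. -/
theorem graphPoly_eq_sum_spanning_trees
    (G : SimpleGraph V) [Fintype G.edgeSet] (hG : G.Connected)
    {d : ℕ} (b : Module.Basis (Fin d) ℤ (LinearMap.ker (boundary ℤ G))) :
    graphPoly G b =
      ∑ T ∈ {T : SimpleGraph V | T ≤ G ∧ T.IsTree}.toFinite.toFinset,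
        ∏ e ∈ (G.edgeSet \ T.edgeSet).toFinite.toFinset, MvPolynomial.X e := by
  classical
  rw [graphPoly_expand]
  rw [← Finset.sum_subset (Finset.subset_univ (Finset.univ.filter fun f : Fin d → G.edgeSet =>
    Function.Injective f ∧ (G.deleteEdges (Set.range fun i => (f i).1)).IsTree))]
  · rw [← Finset.sum_fiberwise_of_maps_to
      (t := {T : SimpleGraph V | T ≤ G ∧ T.IsTree}.toFinite.toFinset)
      (g := fun f : Fin d → G.edgeSet => G.deleteEdges (Set.range fun i => (f i).1))]
    · refine Finset.sum_congr rfl fun T hT => ?_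
      simp only [Set.Finite.mem_toFinset, Set.mem_ofPred_eq] at hT
      refine tree_sum G T hT.1 hT.2 b _ fun f => ?_
      simp only [Finset.mem_filter, Finset.mem_univ, true_and]
      constructor
      · rintro ⟨⟨h1, -⟩, h2⟩; exact ⟨h1, h2⟩
      · rintro ⟨h1, h2⟩; exact ⟨⟨h1, h2 ▸ hT.2⟩, h2⟩
    · intro f hf
      simp only [Finset.mem_filter, Finset.mem_univ, true_and] at hf
      simp only [Set.Finite.mem_toFinset, Set.mem_ofPred_eq]
      exact ⟨G.deleteEdges_le _, hf.2⟩
  · intro f _ hf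
    have : (minor G b f).det = 0 := by
      by_contra hd
      apply hf
      simp only [Finset.mem_filter, Finset.mem_univ, true_and]
      exact ⟨minor_inj G b f hd, minor_tree G hG b f hd⟩
    simp [expTerm, this]
end

section
/- Let Γ be a finite connected simple graph (in the notation below) and let Ψ_Γ ∈ ℤ[A_e : e ∈ E] be its graph polynomial with respect to any ℤ-basis of ker ∂_ℤ. Then every coefficient of Ψ_Γ is equal to 0 or to 1. -/
open scoped BigOperators

variable {V : Type} [Fintype V] [LinearOrder V]

theorem cyc_aux {V E : Type} [Fintype V] [DecidableEq V] [Fintype E] [DecidableEq E]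
    (s t : E → V) (N : ℤ) (h : E → ℤ)
    (hh : ∀ v, ∑ e, ((if v = t e then 1 else 0) - (if v = s e then 1 else 0)) * h e = 0)
    (e0 : E) (he0 : ¬ N ∣ h e0) :
    ∃ c : E → ℤ, (∀ v, ∑ e, ((if v = t e then 1 else 0) - (if v = s e then 1 else 0)) * c e = 0)
      ∧ c e0 ≠ 0 ∧ ∀ e, N ∣ h e → c e = 0 := by
  classical
  let r : V → V → Prop := fun u v => ∃ e, e ≠ e0 ∧ ¬ N ∣ h e ∧
    ((u = s e ∧ v = t e) ∨ (u = t e ∧ v = s e))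
  have key : ∀ u v, Relation.ReflTransGen r u v → ∃ c : E → ℤ,
      (∀ w, ∑ e, ((if w = t e then 1 else 0) - (if w = s e then 1 else 0)) * c e
        = (if w = v then 1 else 0) - (if w = u then 1 else 0)) ∧ c e0 = 0 ∧
        ∀ e, N ∣ h e → c e = 0 := by
    intro u v huv
    induction huv with
    | refl => exact ⟨0, by simp⟩
    | tail _ hr ih =>
      obtain ⟨c, hc1, hc2, hc3⟩ := ih
      obtain ⟨e, hne, hN, hcase⟩ := hr
      rcases hcase with ⟨rfl, rfl⟩ | ⟨rfl, rfl⟩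
      · refine ⟨c + Pi.single e 1, fun w => ?_, by simp [hc2, hne.symm], fun e' he' => ?_⟩
        · simp only [Pi.add_apply, mul_add, Finset.sum_add_distrib, hc1]
          simp [Pi.single_apply]
        · have : e' ≠ e := by rintro rfl; exact hN he'
          simp [hc3 e' he', this]
      · refine ⟨c - Pi.single e 1, fun w => ?_, by simp [hc2, hne.symm], fun e' he' => ?_⟩
        · simp only [Pi.sub_apply, mul_sub, Finset.sum_sub_distrib, hc1]
          simp [Pi.single_apply]
        · have : e' ≠ e := by rintro rfl; exact hN he'
          simp [hc3 e' he', this]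
  by_cases hr : Relation.ReflTransGen r (s e0) (t e0)
  · obtain ⟨c, hc1, hc2, hc3⟩ := key _ _ hr
    refine ⟨c - Pi.single e0 1, fun w => ?_, by simp [hc2], fun e' he' => ?_⟩
    · simp only [Pi.sub_apply, mul_sub, Finset.sum_sub_distrib, hc1]
      simp [Pi.single_apply]
    · have : e' ≠ e0 := by rintro rfl; exact he0 he'
      simp [hc3 e' he', this]
  · exfalso
    apply he0
    let C : V → ℤ := fun v => if Relation.ReflTransGen r (s e0) v then 1 else 0
    have h1 : ∑ v, C v * ∑ e, ((if v = t e then 1 else 0) - (if v = s e then 1 else 0)) * h e = 0 := by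
      simp [hh]
    have h2 : ∑ e, (C (t e) - C (s e)) * h e = 0 := by
      rw [← h1]
      simp only [Finset.mul_sum]
      rw [Finset.sum_comm]
      refine Finset.sum_congr rfl fun e _ => ?_
      simp only [← mul_assoc]
      rw [← Finset.sum_mul]
      simp [mul_sub]
    rw [← Finset.add_sum_erase _ _ (Finset.mem_univ e0)] at h2
    have hs : C (s e0) = 1 := by simp [C, Relation.ReflTransGen.refl]
    have ht : C (t e0) = 0 := by simp [C, hr]
    have h3 : N ∣ ∑ e ∈ Finset.univ.erase e0, (C (t e) - C (s e)) * h e := by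
      refine Finset.dvd_sum fun e he => ?_
      by_cases hN : N ∣ h e
      · exact Dvd.dvd.mul_left hN _
      · have hne := Finset.ne_of_mem_erase he
        have : C (t e) = C (s e) := by
          have : Relation.ReflTransGen r (s e0) (t e) ↔ Relation.ReflTransGen r (s e0) (s e) :=
            ⟨fun q => q.tail ⟨e, hne, hN, Or.inr ⟨rfl, rfl⟩⟩,
             fun q => q.tail ⟨e, hne, hN, Or.inl ⟨rfl, rfl⟩⟩⟩
          simp only [C, this]
        simp [this]
    rw [hs, ht] at h2
    have : h e0 = ∑ e ∈ Finset.univ.erase e0, (C (t e) - C (s e)) * h e := by linarith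
    rw [this]; exact h3

theorem coeff_cb {E σ : Type} [Fintype E] [DecidableEq E] (ι : E → σ)
    (hι : Function.Injective ι) {d : ℕ} (H : Fin d → E → ℤ) (m : σ →₀ ℕ) :
    MvPolynomial.coeff m (Matrix.det (Matrix.of fun i j : Fin d =>
      ∑ e : E, MvPolynomial.X (R := ℤ) (ι e) * MvPolynomial.C (H i e * H j e))) = 0 ∨
    ∃ f : Fin d → E, MvPolynomial.coeff m (Matrix.det (Matrix.of fun i j : Fin d =>
      ∑ e : E, MvPolynomial.X (R := ℤ) (ι e) * MvPolynomial.C (H i e * H j e))) =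
      (Matrix.det (Matrix.of fun i j : Fin d => H j (f i))) ^ 2 := by
  classical
  have hexp : Matrix.det (Matrix.of fun i j : Fin d =>
      ∑ e : E, MvPolynomial.X (R := ℤ) (ι e) * MvPolynomial.C (H i e * H j e)) =
      ∑ f : Fin d → E, MvPolynomial.monomial (∑ i, Finsupp.single (ι (f i)) 1)
        ((∏ i, H i (f i)) * Matrix.det (Matrix.of fun i j : Fin d => H j (f i))) := by
    have h1 : (Matrix.of fun i j : Fin d =>
      ∑ e : E, MvPolynomial.X (R := ℤ) (ι e) * MvPolynomial.C (H i e * H j e)) =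
      (fun i => ∑ e : E, (fun j => MvPolynomial.monomial (Finsupp.single (ι e) 1) (H i e) * MvPolynomial.C (H j e))) := by
      funext i j
      simp only [Matrix.of_apply, Finset.sum_apply]
      refine Finset.sum_congr rfl fun e _ => ?_
      rw [MvPolynomial.C_mul, ← mul_assoc, mul_comm (MvPolynomial.X _), MvPolynomial.C_mul_X_eq_monomial]
    rw [h1]
    change Matrix.detRowAlternating.toMultilinearMap _ = _
    rw [MultilinearMap.map_sum]
    refine Finset.sum_congr rfl fun f _ => ?_
    have h2 := Matrix.det_mul_column (fun i => MvPolynomial.monomial (Finsupp.single (ι (f i)) 1) (H i (f i)))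
      (Matrix.of fun i j : Fin d => (MvPolynomial.C (σ := σ) (H j (f i))))
    refine Eq.trans h2 ?_
    rw [← MvPolynomial.monomial_sum_prod, mul_comm _ (Matrix.det _), mul_comm _ (Matrix.det _),
      ← MvPolynomial.C_mul_monomial]
    congr 1
    rw [RingHom.map_det]
    rfl
  rw [hexp, MvPolynomial.coeff_sum]
  simp only [MvPolynomial.coeff_monomial]
  by_cases hex : ∃ f : Fin d → E, Function.Injective f ∧ ∑ i, Finsupp.single (ι (f i)) 1 = m
  · right
    obtain ⟨f, hf, rfl⟩ := hex
    refine ⟨f, ?_⟩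
    set D := Matrix.det (Matrix.of fun i j : Fin d => H j (f i)) with hD
    have hcnt : ∀ (g : Fin d → E) (e : E), Function.Injective g →
        ((∑ i, Finsupp.single (ι (g i)) 1 : σ →₀ ℕ) (ι e) ≠ 0 ↔ ∃ i, g i = e) := by
      intro g e hg
      rw [Finsupp.finsetSum_apply]
      simp [Finsupp.single_apply, hι.eq_iff]
    have hR : D ^ 2 = ∑ τ : Equiv.Perm (Fin d), (∏ i, H i (f (τ i))) *
        Matrix.det (Matrix.of fun i j : Fin d => H j (f (τ i))) := by
      have : ∀ τ : Equiv.Perm (Fin d), Matrix.det (Matrix.of fun i j : Fin d => H j (f (τ i))) =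
          ((Equiv.Perm.sign τ : ℤˣ) : ℤ) * D := fun τ => by
        have := Matrix.det_permute τ (Matrix.of fun i j : Fin d => H j (f i))
        rw [Int.cast_id] at this
        exact this
      simp only [this]
      rw [pow_two]
      have hD' : D = ∑ τ : Equiv.Perm (Fin d), ((Equiv.Perm.sign τ : ℤˣ) : ℤ) * ∏ i, H i (f (τ i)) := by
        rw [hD, Matrix.det_apply']; rfl
      conv_lhs => enter [1]; rw [hD']
      rw [Finset.sum_mul]
      refine Finset.sum_congr rfl fun τ _ => ?_
      ring
    rw [hR]
    symm
    apply Finset.sum_of_injOn (fun (τ : Equiv.Perm (Fin d)) => f ∘ τ)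
    · intro a _ b _ hab
      ext i
      exact congrArg _ (hf (congrFun hab i))
    · simp
    · intro g _ hg
      split_ifs with heq
      · by_cases hgi : Function.Injective g
        · exfalso
          apply hg
          have : ∀ i, ∃ k, f k = g i := by
            intro i
            rw [← hcnt f _ hf, ← heq, hcnt g _ hgi]
            exact ⟨i, rfl⟩
          choose k hk using this
          have hki : Function.Injective k := by
            intro a b hab
            apply hgi
            rw [← hk, ← hk, hab]
          refine ⟨Equiv.ofBijective k (Finite.injective_iff_bijective.mp hki), by simp, ?_⟩
          ext i
          exact hk i
        · rw [Function.not_injective_iff] at hgi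
          obtain ⟨a, b, hab, hne⟩ := hgi
          rw [Matrix.det_zero_of_row_eq hne, mul_zero]
          ext j
          simp [hab]
      · rfl
    · intro τ _
      rw [if_pos]
      · rfl
      · exact Equiv.sum_comp τ (fun i => Finsupp.single (ι (f i)) 1)
  · left
    refine Finset.sum_eq_zero fun g _ => ?_
    split_ifs with heq
    · by_cases hgi : Function.Injective g
      · exact absurd ⟨g, hgi, heq⟩ hex
      · rw [Function.not_injective_iff] at hgi
        obtain ⟨a, b, hab, hne⟩ := hgi
        rw [Matrix.det_zero_of_row_eq hne, mul_zero]
        ext j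
        simp [hab]
    · rfl

theorem mem_ker_bd (G : SimpleGraph V) [Fintype G.edgeSet] (c : G.edgeSet → ℤ) :
    c ∈ LinearMap.ker (boundary ℤ G) ↔ ∀ v, ∑ e : G.edgeSet,
      ((if v = Sym2.sup e.1 then 1 else 0) - (if v = Sym2.inf e.1 then 1 else 0)) * c e = 0 := by
  rw [LinearMap.mem_ker, funext_iff]
  rfl

theorem det_unit_aux (G : SimpleGraph V) [Fintype G.edgeSet]
    {d : ℕ} (b : Module.Basis (Fin d) ℤ (LinearMap.ker (boundary ℤ G))) (f : Fin d → G.edgeSet)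
    (hD : Matrix.det (Matrix.of fun i j : Fin d => (b j : G.edgeSet → ℤ) (f i)) ≠ 0) :
    IsUnit (Matrix.det (Matrix.of fun i j : Fin d => (b j : G.edgeSet → ℤ) (f i))) := by
  classical
  set M : Matrix (Fin d) (Fin d) ℤ := Matrix.of fun i j : Fin d => (b j : G.edgeSet → ℤ) (f i) with hM
  have hmul : ∀ x : LinearMap.ker (boundary ℤ G), ∀ i,
      (x : G.edgeSet → ℤ) (f i) = M.mulVec (b.repr x) i := by
    intro x i
    have h0 := congrFun (congrArg Subtype.val (b.sum_repr x)) (f i)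
    rw [← h0]
    simp only [Submodule.coe_sum, Submodule.coe_smul, Finset.sum_apply, Pi.smul_apply, smul_eq_mul,
      Matrix.mulVec, dotProduct, hM, Matrix.of_apply]
    exact Finset.sum_congr rfl fun _ _ => mul_comm _ _
  have hinj : ∀ x : LinearMap.ker (boundary ℤ G), (∀ i, (x : G.edgeSet → ℤ) (f i) = 0) → x = 0 := by
    intro x hx
    have : M.mulVec (b.repr x) = 0 := by
      ext i; rw [← hmul, hx]; rfl
    have := Matrix.eq_zero_of_mulVec_eq_zero hD this
    apply b.repr.injective
    ext i
    simpa using congrFun this i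
  have hdiv : ∀ k l, M.det ∣ M.adjugate k l := by
    intro k l
    let x : LinearMap.ker (boundary ℤ G) := ∑ i, M.adjugate i l • b i
    have hrepr : ∀ i, b.repr x i = M.adjugate i l := by
      intro i
      exact congrFun (b.repr_sum_self fun i => M.adjugate i l) i
    have hxf : ∀ i, M.det ∣ (x : G.edgeSet → ℤ) (f i) := by
      intro i
      have h1 : (x : G.edgeSet → ℤ) (f i) = (M * M.adjugate) i l := by
        rw [hmul]
        simp [Matrix.mulVec, dotProduct, Matrix.mul_apply, hrepr]
      rw [h1, Matrix.mul_adjugate, Matrix.smul_apply, smul_eq_mul]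
      exact dvd_mul_right _ _
    have hall : ∀ e, M.det ∣ (x : G.edgeSet → ℤ) e := by
      intro e0
      by_contra hcon
      obtain ⟨c, hc1, hc2, hc3⟩ := cyc_aux (fun e : G.edgeSet => Sym2.inf e.1)
        (fun e : G.edgeSet => Sym2.sup e.1) M.det x ((mem_ker_bd G _).1 x.2) e0 hcon
      have := hinj ⟨c, (mem_ker_bd G c).2 hc1⟩ (fun i => hc3 _ (hxf i))
      exact hc2 (congrFun (congrArg Subtype.val this) e0)
    choose y hy using hall
    have hyk : y ∈ LinearMap.ker (boundary ℤ G) := by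
      have hxy : (x : G.edgeSet → ℤ) = M.det • y := by
        ext e; simp [hy]
      have h2 : boundary ℤ G (M.det • y) = 0 := by rw [← hxy]; exact x.2
      rw [map_smul] at h2
      exact (smul_eq_zero.1 h2).resolve_left hD
    have hx2 : x = M.det • (⟨y, hyk⟩ : LinearMap.ker (boundary ℤ G)) := by
      ext e; simp [hy]
    rw [← hrepr k, hx2, map_smul]
    simp
  choose B hB using hdiv
  have hadj : M.adjugate = M.det • Matrix.of B := by
    ext k l; simp [hB]
  have h1 : M.det • (M * Matrix.of B) = M.det • (1 : Matrix (Fin d) (Fin d) ℤ) := by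
    rw [← Matrix.mul_smul, ← hadj, Matrix.mul_adjugate]
  have h2 : M * Matrix.of B = 1 := smul_right_injective _ hD h1
  have h3 := congrArg Matrix.det h2
  rw [Matrix.det_mul, Matrix.det_one] at h3
  exact IsUnit.of_mul_eq_one _ h3

/-- **All coefficients of the graph polynomial are `0` or `1`** (Corollary 2.4 of
Bloch–Esnault–Kreimer), for a finite connected simple graph and any `ℤ`-basis of its
cycle space. -/
theorem graphPoly_coeff_zero_or_one
    (G : SimpleGraph V) [Fintype G.edgeSet] (hG : G.Connected)
    {d : ℕ} (b : Module.Basis (Fin d) ℤ (LinearMap.ker (boundary ℤ G)))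
    (m : (Sym2 V) →₀ ℕ) :
    MvPolynomial.coeff m (graphPoly G b) = 0 ∨
      MvPolynomial.coeff m (graphPoly G b) = 1 := by
  classical
  rcases coeff_cb (fun e : G.edgeSet => (e : Sym2 V)) Subtype.val_injective
    (fun i => (b i : G.edgeSet → ℤ)) m with h | ⟨f, h⟩
  · exact Or.inl h
  · by_cases hD : Matrix.det (Matrix.of fun i j : Fin d => (b j : G.edgeSet → ℤ) (f i)) = 0
    · left
      refine h.trans ?_
      rw [hD]; rfl
    · right
      refine h.trans ?_
      rcases Int.isUnit_iff.1 (det_unit_aux G b f hD) with h1 | h1 <;> rw [h1] <;> rfl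
end

section
/- Let Γ be a finite connected simple graph (in the notation below) with graph polynomial Ψ_Γ ∈ ℤ[A_e : e ∈ E], and let S ⊆ E. Then the polynomial obtained from Ψ_Γ by substituting A_e = 0 for every e ∈ S is the zero polynomial if and only if h_1(S) > 0 (i.e., if and only if the subgraph of Γ with edge set S contains a cycle). Geometrically: the coordinate linear subspace {A_e = 0 for all e ∈ S} is contained in the graph hypersurface Ψ_Γ = 0 exactly when h_1(S) > 0. -/
open scoped BigOperators

variable {V : Type} [Fintype V] [LinearOrder V]

/-- The submodule of `R^E` spanned by the basis vectors of the edges in `S`,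
i.e. the functions on the edges of `G` vanishing outside of `S`. -/
def supportedIn (R : Type) [Field R] (G : SimpleGraph V) [Fintype G.edgeSet]
    (S : Set (Sym2 V)) : Submodule R (G.edgeSet → R) where
  carrier := {f | ∀ e : G.edgeSet, (e : Sym2 V) ∉ S → f e = 0}
  add_mem' := by
    intro f g hf hg e he
    simp only [Pi.add_apply, hf e he, hg e he, add_zero]
  zero_mem' := by
    intro e he
    rfl
  smul_mem' := by
    intro c f hf e he
    simp only [Pi.smul_apply, hf e he, smul_zero]

/-- `h_1(S)` for a set `S` of edges of `G`: the dimension over `ℚ` of the kernel of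
the boundary map restricted to the span of the basis vectors of the edges in `S`. -/
noncomputable def h1S (G : SimpleGraph V) [Fintype G.edgeSet] (S : Set (Sym2 V)) : ℕ :=
  Module.finrank ℚ ↥(LinearMap.ker (boundary ℚ G) ⊓ supportedIn ℚ G S)

lemma boundary_cast (G : SimpleGraph V) [Fintype G.edgeSet] (z : G.edgeSet → ℤ) (v : V) :
    boundary ℚ G (fun e => (z e : ℚ)) v = ((boundary ℤ G z v : ℤ) : ℚ) := by
  simp [boundary, Matrix.mulVec, dotProduct, incSign]

lemma h1S_pos_iff (G : SimpleGraph V) [Fintype G.edgeSet] (S : Set (Sym2 V)) :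
    0 < h1S G S ↔ ∃ z : G.edgeSet → ℤ, z ≠ 0 ∧ boundary ℤ G z = 0 ∧
      ∀ e : G.edgeSet, (e : Sym2 V) ∉ S → z e = 0 := by
  unfold h1S
  rw [Module.finrank_pos_iff, Submodule.nontrivial_iff_ne_bot, Submodule.ne_bot_iff]
  constructor
  · rintro ⟨q, ⟨hq1, hq2⟩, hq0⟩
    obtain ⟨m, hm⟩ := IsLocalization.exist_integer_multiples_of_finite (nonZeroDivisors ℤ) q
    choose z hz using hm
    have hm0 : ((m : ℤ) : ℚ) ≠ 0 := by
      exact_mod_cast nonZeroDivisors.coe_ne_zero m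
    have hz' : ∀ e, (z e : ℚ) = (m : ℤ) * q e := by
      intro e
      have := hz e
      simpa using this
    refine ⟨z, ?_, ?_, ?_⟩
    · rintro rfl
      apply hq0
      ext e
      have := hz' e
      simpa [hm0] using this
    · ext v
      have h := boundary_cast G z v
      have h2 : (fun e => (z e : ℚ)) = ((m : ℤ) : ℚ) • q := by
        ext e; simp [hz']
      have h3 : boundary ℚ G q = 0 := hq1
      rw [h2, map_smul, h3] at h
      simpa using h.symm
    · intro e he
      have := hz' e
      rw [hq2 e he] at this
      simpa using this
  · rintro ⟨z, hz0, hz1, hz2⟩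
    refine ⟨fun e => (z e : ℚ), ⟨?_, ?_⟩, ?_⟩
    · change boundary ℚ G _ = 0
      ext v
      rw [boundary_cast, hz1]; simp
    · intro e he
      simp [hz2 e he]
    · intro h
      apply hz0
      ext e
      simpa using congrFun h e

lemma aeval_graphPoly {A : Type} [CommRing A] [Algebra ℤ A] (G : SimpleGraph V) [Fintype G.edgeSet] {d : ℕ}
    (b : Module.Basis (Fin d) ℤ (LinearMap.ker (boundary ℤ G))) (f : Sym2 V → A) :
    MvPolynomial.aeval f (graphPoly G b) = Matrix.det (Matrix.of fun i j : Fin d =>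
      ∑ e : G.edgeSet, f e *
        ((((b i : G.edgeSet → ℤ) e * (b j : G.edgeSet → ℤ) e : ℤ)) : A)) := by
  unfold graphPoly
  rw [AlgHom.map_det]
  congr 1
  ext i j
  simp [AlgHom.mapMatrix_apply]

lemma mulVec_graph {A : Type} [CommRing A] (G : SimpleGraph V) [Fintype G.edgeSet] {d : ℕ}
    (b : Module.Basis (Fin d) ℤ (LinearMap.ker (boundary ℤ G))) (f : Sym2 V → A)
    (c : Fin d → ℤ) (i : Fin d) :
    Matrix.mulVec (Matrix.of fun i j : Fin d =>
      ∑ e : G.edgeSet, f e *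
        ((((b i : G.edgeSet → ℤ) e * (b j : G.edgeSet → ℤ) e : ℤ)) : A)) (fun j => (c j : A)) i
    = ∑ e : G.edgeSet, f e * ((b i : G.edgeSet → ℤ) e : A) *
      ((((∑ j, c j • b j : LinearMap.ker (boundary ℤ G)) : G.edgeSet → ℤ) e : ℤ) : A) := by
  simp only [Matrix.mulVec, dotProduct, Matrix.of_apply, Finset.sum_mul]
  rw [Finset.sum_comm]
  refine Finset.sum_congr rfl fun e _ => ?_
  simp only [Submodule.coe_sum, Submodule.coe_smul, Finset.sum_apply, Pi.smul_apply,
    smul_eq_mul, Int.cast_sum, Finset.mul_sum, Int.cast_mul]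
  refine Finset.sum_congr rfl fun j _ => ?_
  ring

/-- **Coordinate linear subspaces contained in the graph hypersurface correspond to
subgraphs with a cycle** (Proposition 3.1 of Bloch–Esnault–Kreimer): for a finite
connected simple graph `G` with graph polynomial `Ψ_Γ` and a set `S` of edges, the
polynomial obtained from `Ψ_Γ` by substituting `A_e = 0` for all `e ∈ S` vanishes
identically if and only if `h_1(S) > 0`. -/
theorem graphPoly_restrict_zero_iff_h1_pos
    (G : SimpleGraph V) [Fintype G.edgeSet] (hG : G.Connected)
    {d : ℕ} (b : Module.Basis (Fin d) ℤ (LinearMap.ker (boundary ℤ G)))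
    (S : Finset (Sym2 V)) (hS : (S : Set (Sym2 V)) ⊆ G.edgeSet) :
    MvPolynomial.aeval
        (fun e : Sym2 V =>
          if e ∈ S then (0 : MvPolynomial (Sym2 V) ℤ) else MvPolynomial.X e)
        (graphPoly G b) = 0
      ↔ 0 < h1S G (S : Set (Sym2 V)) := by
  rw [h1S_pos_iff]
  constructor
  · intro h
    have h1 := congrArg (MvPolynomial.aeval (fun _ : Sym2 V => (1 : ℤ))) h
    rw [← AlgHom.comp_apply, MvPolynomial.comp_aeval, aeval_graphPoly, map_zero] at h1
    obtain ⟨c, hc0, hc⟩ := Matrix.exists_mulVec_eq_zero_iff.mpr h1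
    have hmv : ∀ i, _ := fun i => mulVec_graph G b
      (fun e => MvPolynomial.aeval (fun _ : Sym2 V => (1 : ℤ))
        (if e ∈ S then (0 : MvPolynomial (Sym2 V) ℤ) else MvPolynomial.X e)) c i
    simp only [Int.cast_id] at hmv hc
    rw [hc] at hmv
    set z : LinearMap.ker (boundary ℤ G) := ∑ j, c j • b j with hz
    have key : ∑ e : G.edgeSet, (if (e : Sym2 V) ∈ S then (0 : ℤ) else 1) *
        ((z : G.edgeSet → ℤ) e * (z : G.edgeSet → ℤ) e) = 0 := by
      have h2 : ∑ i, c i * ∑ e : G.edgeSet, (if (e : Sym2 V) ∈ S then (0 : ℤ) else 1) *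
          (b i : G.edgeSet → ℤ) e * (z : G.edgeSet → ℤ) e = 0 := by
        refine Finset.sum_eq_zero fun i _ => ?_
        have := hmv i
        simp only [apply_ite (MvPolynomial.aeval (fun _ : Sym2 V => (1 : ℤ))), map_zero,
          MvPolynomial.aeval_X, Pi.zero_apply] at this
        rw [← this, mul_zero]
      refine Eq.trans ?_ h2
      simp only [Finset.mul_sum]
      rw [Finset.sum_comm]
      refine Finset.sum_congr rfl fun e _ => ?_
      have hze : (z : G.edgeSet → ℤ) e = ∑ i, c i * (b i : G.edgeSet → ℤ) e := by
        simp [hz, Submodule.coe_sum]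
      conv_lhs => rw [← mul_assoc]; lhs; rw [hze, Finset.mul_sum]
      rw [Finset.sum_mul]
      refine Finset.sum_congr rfl fun i _ => ?_
      ring
    rw [Finset.sum_eq_zero_iff_of_nonneg] at key
    · refine ⟨z, ?_, z.2, ?_⟩
      · intro hz0
        apply hc0
        have hz0' : ∑ j, c j • b j = 0 := Subtype.ext hz0
        ext i
        exact Fintype.linearIndependent_iff.mp b.linearIndependent c hz0' i
      · intro e he
        have := key e (Finset.mem_univ _)
        rw [if_neg (by simpa using he)] at this
        simpa using this
    · intro e _
      split_ifs
      · simp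
      · simpa using mul_self_nonneg _
  · rintro ⟨z, hz0, hz1, hz2⟩
    rw [aeval_graphPoly, ← Matrix.exists_mulVec_eq_zero_iff]
    let z' : LinearMap.ker (boundary ℤ G) := ⟨z, hz1⟩
    refine ⟨fun j => ((b.repr z' j : ℤ) : MvPolynomial (Sym2 V) ℤ), ?_, ?_⟩
    · intro h
      apply hz0
      have : z' = 0 := by
        apply b.repr.injective
        ext j
        have := congrFun h j
        simpa using this
      exact congrArg Subtype.val this
    · ext1 i
      rw [mulVec_graph G b (fun e : Sym2 V =>
        if e ∈ S then (0 : MvPolynomial (Sym2 V) ℤ) else MvPolynomial.X e)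
        (fun j => b.repr z' j) i, b.sum_repr]
      refine Finset.sum_eq_zero fun e _ => ?_
      by_cases he : (e : Sym2 V) ∈ S
      · simp [he]
      · have : (z' : G.edgeSet → ℤ) e = 0 := hz2 e (by simpa using he)
        rw [this]; simp
end

section
/- Let n ≥ 1 and let ℓ_1,…,ℓ_{2n} : ℝ^n → ℝ be linear functionals. For x = (x^{(1)},x^{(2)},x^{(3)},x^{(4)}) ∈ (ℝ^n)^4, identified with ℝ^{4n} carrying Lebesgue measure, set q_i(x) := ∑_{j=1}^{4} ℓ_i(x^{(j)})². Then the lower Lebesgue integral ∫⁻_{{x ∈ ℝ^{4n} : 1 ≤ ‖x‖ ≤ 2}} (∏_{i=1}^{2n} ENNReal.ofReal(q_i(x)))⁻¹ dx is finite if and only if for every nonempty subset I ⊆ {1,…,2n} with ⋂_{i∈I} ker ℓ_i ≠ {0} one has #I < 2·(n − dim_ℝ ⋂_{i∈I} ker ℓ_i). -/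
open MeasureTheory

lemma fq_card {ι V : Type*} [DecidableEq ι] [AddCommGroup V] [Module ℝ V] (ℓ : ι → V)
    (B : Finset ι) (h : LinearIndepOn ℝ ℓ (B : Set ι)) :
    Module.finrank ℝ (Submodule.span ℝ (ℓ '' (B : Set ι))) = B.card := by
  have := finrank_span_eq_card h.linearIndependent
  rw [Set.image_eq_range, this]
  simp

lemma fq_greedy {ι V : Type*} [DecidableEq ι] [AddCommGroup V] [Module ℝ V] (ℓ : ι → V)
    (s : ℝ) (a : ι → ℝ) (I : Finset ι)
    (h : ∀ J ⊆ I, (J.card : ℝ) ≤ s * (Module.finrank ℝ (Submodule.span ℝ (ℓ '' (J : Set ι))) : ℝ)) :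
    ∃ B ⊆ I, LinearIndepOn ℝ ℓ (B : Set ι) ∧
      Submodule.span ℝ (ℓ '' (B : Set ι)) = Submodule.span ℝ (ℓ '' (I : Set ι)) ∧
      ∀ t, (∀ i ∈ I, t ≤ a i) → ∑ i ∈ I, (a i - t) ≤ s * ∑ b ∈ B, (a b - t) := by
  induction I using Finset.induction_on_min_value (f := a) with
  | empty => exact ⟨∅, by simp, by simp, rfl, by simp⟩
  | insert m I hm hmin ih =>
    obtain ⟨B, hBI, hB, hspan, hle⟩ := ih (fun J hJ => h J (hJ.trans (Finset.subset_insert _ _)))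
    have hmB : m ∉ B := fun hh => hm (hBI hh)
    have key : ∀ B' : Finset ι, LinearIndepOn ℝ ℓ (B' : Set ι) →
        Submodule.span ℝ (ℓ '' (B' : Set ι)) = Submodule.span ℝ (ℓ '' (insert m I : Finset ι)) →
        (∑ b ∈ B', (a b - a m) = ∑ b ∈ B, (a b - a m)) → 
        ∀ t, (∀ i ∈ insert m I, t ≤ a i) →
          ∑ i ∈ insert m I, (a i - t) ≤ s * ∑ b ∈ B', (a b - t) := by
      intro B' hB' hs' hsum t ht
      have h1 := hle (a m) hmin
      have h2 := h (insert m I) subset_rfl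
      rw [← hs', fq_card ℓ B' hB'] at h2
      have h3 : ∑ i ∈ insert m I, (a i - t)
          = ∑ i ∈ I, (a i - a m) + ((insert m I).card : ℝ) * (a m - t) := by
        have : ∑ i ∈ I, (a i - a m) = ∑ i ∈ insert m I, (a i - a m) := by
          rw [Finset.sum_insert hm]; simp
        rw [this, ← nsmul_eq_mul, ← Finset.sum_const, ← Finset.sum_add_distrib]
        exact Finset.sum_congr rfl (fun _ _ => by ring)
      have h4 : ∑ b ∈ B', (a b - t)
          = ∑ b ∈ B, (a b - a m) + (B'.card : ℝ) * (a m - t) := by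
        rw [← hsum, ← nsmul_eq_mul, ← Finset.sum_const, ← Finset.sum_add_distrib]
        exact Finset.sum_congr rfl (fun _ _ => by ring)
      rw [h3, h4]
      have h5 : 0 ≤ a m - t := sub_nonneg.2 (ht m (Finset.mem_insert_self _ _))
      nlinarith [mul_le_mul_of_nonneg_right h2 h5]
    by_cases hin : ℓ m ∈ Submodule.span ℝ (ℓ '' (B : Set ι))
    · have hs' : Submodule.span ℝ (ℓ '' (B : Set ι))
          = Submodule.span ℝ (ℓ '' (insert m I : Finset ι)) := by
        rw [Finset.coe_insert, Set.image_insert_eq, Submodule.span_insert_eq_span, hspan]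
        rwa [← hspan]
      exact ⟨B, hBI.trans (Finset.subset_insert _ _), hB, hs', key B hB hs' rfl⟩
    · have hi' : LinearIndepOn ℝ ℓ ((insert m B : Finset ι) : Set ι) := by
        rw [Finset.coe_insert]; exact hB.insert hin
      have hs' : Submodule.span ℝ (ℓ '' ((insert m B : Finset ι) : Set ι))
          = Submodule.span ℝ (ℓ '' (insert m I : Finset ι)) := by
        rw [Finset.coe_insert, Set.image_insert_eq, Finset.coe_insert, Set.image_insert_eq,
          Submodule.span_insert, Submodule.span_insert, hspan]
      refine ⟨insert m B, Finset.insert_subset_insert _ hBI, hi', hs', key _ hi' hs' ?_⟩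
      rw [Finset.sum_insert hmB]; simp

lemma fq_rank {n : ℕ} {ι : Type*} (ℓ : ι → ((Fin n → ℝ) →ₗ[ℝ] ℝ)) (I : Finset ι) :
    Module.finrank ℝ (Submodule.span ℝ (ℓ '' (I : Set ι))) +
      Module.finrank ℝ ↥(⨅ i ∈ I, LinearMap.ker (ℓ i)) = n := by
  have h := Subspace.finrank_add_finrank_dualCoannihilator_eq
    (K := ℝ) (V := Fin n → ℝ) (Submodule.span ℝ (ℓ '' (I : Set ι)))
  have h2 : (Submodule.span ℝ (ℓ '' (I : Set ι))).dualCoannihilator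
      = (⨅ i ∈ I, LinearMap.ker (ℓ i)) := by
    apply SetLike.coe_injective
    rw [Submodule.coe_dualCoannihilator_span]
    ext x
    simp
  rw [h2] at h
  simpa using h

lemma fq_coords {n : ℕ} {ι : Type*} [DecidableEq ι] (ℓ : ι → ((Fin n → ℝ) →ₗ[ℝ] ℝ)) (hn : 1 ≤ n)
    (B : Finset ι) (h : LinearIndepOn ℝ ℓ (B : Set ι)) :
    ∃ L : (Fin n → ℝ) ≃ₗ[ℝ] (Fin n → ℝ), ∃ e : ι → Fin n, Set.InjOn e (B : Set ι) ∧
      ∀ b ∈ B, ∀ v, L v (e b) = ℓ b v := by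
  classical
  have hid : LinearIndepOn ℝ id (ℓ '' (B : Set ι)) := h.id_image
  let bs0 := Module.Basis.extend hid
  have hfr : Module.finrank ℝ (Module.Dual ℝ (Fin n → ℝ)) = n := by
    rw [Subspace.dual_finrank_eq]; simp
  have : Finite (hid.extend (Set.subset_univ _)) := Module.Finite.finite_basis bs0
  have : Fintype (hid.extend (Set.subset_univ _)) := Fintype.ofFinite _
  have hc : Fintype.card (hid.extend (Set.subset_univ _)) = n := by
    exact (Module.finrank_eq_card_basis bs0).symm.trans hfr
  let σ := Fintype.equivFinOfCardEq hc
  let bs : Module.Basis (Fin n) ℝ (Module.Dual ℝ (Fin n → ℝ)) := bs0.reindex σ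
  let L0 : (Fin n → ℝ) →ₗ[ℝ] (Fin n → ℝ) := LinearMap.pi (fun k => bs k)
  have hinj : Function.Injective L0 := by
    rw [← LinearMap.ker_eq_bot, LinearMap.ker_eq_bot']
    intro v hv
    rw [← Module.forall_dual_apply_eq_zero_iff ℝ v]
    intro φ
    rw [← bs.sum_repr φ]
    simp only [LinearMap.sum_apply, LinearMap.smul_apply]
    refine Finset.sum_eq_zero fun k _ => ?_
    have : bs k v = 0 := congrFun hv k
    rw [this]; simp
  have hmem : ∀ b ∈ B, ℓ b ∈ hid.extend (Set.subset_univ _) := fun b hb =>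
    hid.subset_extend _ (Set.mem_image_of_mem _ hb)
  refine ⟨LinearEquiv.ofInjectiveEndo L0 hinj,
    fun b => if hb : b ∈ B then σ ⟨ℓ b, hmem b hb⟩ else ⟨0, hn⟩, ?_, ?_⟩
  · intro b hb c hc hbc
    have hb' : b ∈ B := hb
    have hc' : c ∈ B := hc
    simp only [hb', hc', dif_pos] at hbc
    have := σ.injective hbc
    exact h.injOn hb hc (congrArg Subtype.val this)
  · intro b hb v
    simp only [hb, dif_pos, LinearEquiv.coe_ofInjectiveEndo]
    show bs (σ ⟨ℓ b, hmem b hb⟩) v = _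
    simp [bs, bs0]

lemma fq_one (p : ℝ) (hp : p < 1) (R : ℝ) :
    IntegrableOn (fun t : ℝ => |t| ^ (-p)) (Metric.closedBall 0 R) := by
  rcases lt_or_ge R 0 with hR | hR
  · rw [Metric.closedBall_eq_empty.2 hR]; exact integrableOn_empty
  rw [Real.closedBall_eq_Icc, zero_sub, zero_add]
  have h1 : IntervalIntegrable (fun t : ℝ => |t| ^ (-p)) volume 0 R := by
    refine (intervalIntegral.intervalIntegrable_rpow' (r := -p) (by linarith)).congr ?_
    intro t ht
    rw [Set.uIoc_of_le hR] at ht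
    simp [abs_of_pos ht.1]
  have h2 : IntervalIntegrable (fun t : ℝ => |t| ^ (-p)) volume (-R) 0 := by
    have := (h1.comp_mul_left (c := -1)).symm
    simpa [div_neg] using this
  have := h2.trans h1
  rwa [intervalIntegrable_iff_integrableOn_Icc_of_le (by linarith)] at this

lemma fq_int1 {n : ℕ} {ι : Type*} [DecidableEq ι] (ℓ : ι → ((Fin n → ℝ) →ₗ[ℝ] ℝ)) (hn : 1 ≤ n)
    (B : Finset ι) (h : LinearIndepOn ℝ ℓ (B : Set ι)) (p : ℝ) (hp : p < 1) (R : ℝ) :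
    IntegrableOn (fun v => ∏ b ∈ B, |ℓ b v| ^ (-p)) (Metric.closedBall 0 R) := by
  classical
  obtain ⟨L, e, he, hL⟩ := fq_coords ℓ hn B h
  let g : Fin n → ℝ → ℝ := fun k t => if k ∈ B.image e then |t| ^ (-p) else 1
  have hg : ∀ R' : ℝ, 0 ≤ R' → IntegrableOn (fun y : Fin n → ℝ => ∏ k, g k (y k))
      (Metric.closedBall 0 R') := by
    intro R' hR'
    rw [closedBall_pi _ hR', IntegrableOn, volume_pi, Measure.restrict_pi_pi]
    apply Integrable.fintype_prod
    intro k
    by_cases hk : k ∈ B.image e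
    · simp only [g, hk, if_true]
      exact fq_one p hp R'
    · simp only [g, hk, if_false]
      exact continuousOn_const.integrableOn_compact (isCompact_closedBall _ _)
  have hfg : (fun v => ∏ b ∈ B, |ℓ b v| ^ (-p)) = (fun y : Fin n → ℝ => ∏ k, g k (y k)) ∘ L := by
    ext v
    simp only [Function.comp, g]
    rw [Finset.prod_ite_mem, Finset.univ_inter, Finset.prod_image he]
    exact Finset.prod_congr rfl fun b hb => by rw [hL b hb]
  let Lc : (Fin n → ℝ) ≃L[ℝ] (Fin n → ℝ) := L.toContinuousLinearEquiv
  have hdet : LinearMap.det (L : (Fin n → ℝ) →ₗ[ℝ] (Fin n → ℝ)) ≠ 0 := L.isUnit_det'.ne_zero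
  have hmap := Measure.map_linearMap_addHaar_eq_smul_addHaar (volume : Measure (Fin n → ℝ)) hdet
  have hemb : MeasurableEmbedding L := Lc.toHomeomorph.measurableEmbedding
  rcases lt_or_ge R 0 with hR | hR
  · rw [Metric.closedBall_eq_empty.2 hR]; exact integrableOn_empty
  have hsub : Metric.closedBall (0 : Fin n → ℝ) R ⊆
      L ⁻¹' (Metric.closedBall 0 (‖(Lc : (Fin n → ℝ) →L[ℝ] (Fin n → ℝ))‖ * R)) := by
    intro v hv
    simp only [Set.mem_preimage, mem_closedBall_zero_iff] at hv ⊢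
    exact ((Lc : (Fin n → ℝ) →L[ℝ] (Fin n → ℝ)).le_opNorm v).trans
      (mul_le_mul_of_nonneg_left hv (norm_nonneg _))
  rw [hfg]
  refine IntegrableOn.mono_set ?_ hsub
  rw [← hemb.integrableOn_map_iff]
  have hmap' : Measure.map L volume = ENNReal.ofReal |(LinearMap.det
    (L : (Fin n → ℝ) →ₗ[ℝ] (Fin n → ℝ)))⁻¹| • (volume : Measure (Fin n → ℝ)) := hmap
  rw [hmap', IntegrableOn, Measure.restrict_smul]
  exact (hg _ (by positivity)).smul_measure ENNReal.ofReal_ne_top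

lemma fq_int4 {n : ℕ} {ι : Type*} [DecidableEq ι] (ℓ : ι → ((Fin n → ℝ) →ₗ[ℝ] ℝ)) (hn : 1 ≤ n)
    (B : Finset ι) (h : LinearIndepOn ℝ ℓ (B : Set ι)) (p : ℝ) (hp : p < 1) (R : ℝ) (hR : 0 ≤ R) :
    IntegrableOn (fun x : Fin 4 → Fin n → ℝ => ∏ j, ∏ b ∈ B, |ℓ b (x j)| ^ (-p))
      (Metric.closedBall 0 R) := by
  rw [closedBall_pi _ hR, IntegrableOn, volume_pi, Measure.restrict_pi_pi]
  exact Integrable.fintype_prod (f := fun _ v => ∏ b ∈ B, |ℓ b v| ^ (-p))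
    fun j => fq_int1 ℓ hn B h p hp R

lemma fq_amgm (z : Fin 4 → ℝ) (hz : ∀ j, z j ≠ 0) (s : ℝ) (hs : 0 ≤ s) :
    (∑ j, z j ^ 2) ^ (-s) ≤ ∏ j, |z j| ^ (-(s / 2)) := by
  set Q := ∑ j, z j ^ 2 with hQ
  have hzp : ∀ j, 0 < z j ^ 2 := fun j => by have := hz j; positivity
  have hle : ∀ j, z j ^ 2 ≤ Q := fun j =>
    Finset.single_le_sum (f := fun j => z j ^ 2) (fun i _ => (hzp i).le) (Finset.mem_univ j)
  have hQ0 : 0 < Q := (hzp 0).trans_le (hle 0)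
  have h1 : Q ^ (-s) = ∏ _j : Fin 4, Q ^ (-(s / 4)) := by
    rw [Finset.prod_const, Finset.card_univ, Fintype.card_fin, ← Real.rpow_natCast,
      ← Real.rpow_mul hQ0.le]
    congr 1; push_cast; ring
  rw [h1]
  refine Finset.prod_le_prod (fun _ _ => by positivity) fun j _ => ?_
  have h2 : |z j| ^ (-(s / 2)) = (z j ^ 2) ^ (-(s / 4)) := by
    rw [← sq_abs, ← Real.rpow_natCast, ← Real.rpow_mul (abs_nonneg _)]
    congr 1; push_cast; ring
  rw [h2]
  exact Real.rpow_le_rpow_of_nonpos (hzp j) (hle j) (by linarith)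

lemma fq_pointwise {ι V : Type*} [DecidableEq ι] [AddCommGroup V] [Module ℝ V] (ℓ : ι → V)
    (s : ℝ) (hs : 0 ≤ s) (I : Finset ι)
    (h : ∀ J ⊆ I, (J.card : ℝ) ≤ s * (Module.finrank ℝ (Submodule.span ℝ (ℓ '' (J : Set ι))) : ℝ))
    (C : ℝ) (hC : 1 ≤ C) (q : ι → ℝ) (hq : ∀ i ∈ I, 0 < q i) (hqC : ∀ i ∈ I, q i ≤ C) :
    ∃ B ⊆ I, LinearIndepOn ℝ ℓ (B : Set ι) ∧
      (∏ i ∈ I, q i)⁻¹ ≤ Real.exp (s * I.card * Real.log C) * ∏ b ∈ B, q b ^ (-s) := by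
  obtain ⟨B, hBI, hB, -, hle⟩ := fq_greedy ℓ s (fun i => - Real.log (q i)) I h
  refine ⟨B, hBI, hB, ?_⟩
  have h1 := hle (- Real.log C) (fun i hi => neg_le_neg (Real.log_le_log (hq i hi) (hqC i hi)))
  have e1 : (∏ i ∈ I, q i)⁻¹ = Real.exp (∑ i ∈ I, - Real.log (q i)) := by
    rw [Real.exp_sum, ← Finset.prod_inv_distrib]
    exact Finset.prod_congr rfl fun i hi => by rw [Real.exp_neg, Real.exp_log (hq i hi)]
  have e2 : ∏ b ∈ B, q b ^ (-s) = Real.exp (s * ∑ b ∈ B, - Real.log (q b)) := by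
    rw [Finset.mul_sum, Real.exp_sum]
    exact Finset.prod_congr rfl fun i hi => by
      rw [Real.rpow_def_of_pos (hq i (hBI hi))]; congr 1; ring
  rw [e1, e2, ← Real.exp_add, Real.exp_le_exp]
  simp only [sub_neg_eq_add, Finset.sum_add_distrib, Finset.sum_const, nsmul_eq_mul] at h1
  have hl : 0 ≤ Real.log C := Real.log_nonneg hC
  have hc : (B.card : ℝ) ≤ I.card := by exact_mod_cast Finset.card_le_card hBI
  have h2 : s * (B.card * Real.log C) ≤ s * (I.card * Real.log C) := by gcongr
  have h3 : 0 ≤ (I.card : ℝ) * Real.log C := by positivity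
  rw [mul_add] at h1
  linarith

lemma fq_cont {n : ℕ} {ι : Type*} (ℓ : ι → ((Fin n → ℝ) →ₗ[ℝ] ℝ)) (i : ι) :
    Continuous (fun x : Fin 4 → Fin n → ℝ => ∑ j, (ℓ i (x j)) ^ 2) := by
  have : Continuous (ℓ i) := (ℓ i).continuous_of_finiteDimensional
  fun_prop

lemma fq_bdd {n : ℕ} {ι : Type*} [Fintype ι] (ℓ : ι → ((Fin n → ℝ) →ₗ[ℝ] ℝ)) :
    ∃ C : ℝ, 1 ≤ C ∧ ∀ i, ∀ x : Fin 4 → Fin n → ℝ, ‖x‖ ≤ 2 → ∑ j, (ℓ i (x j)) ^ 2 ≤ C := by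
  have hc : Continuous (fun x : Fin 4 → Fin n → ℝ => ∑ i, ∑ j, (ℓ i (x j)) ^ 2) :=
    continuous_finsetSum _ fun i _ => fq_cont ℓ i
  obtain ⟨C, hC⟩ := (isCompact_closedBall (0 : Fin 4 → Fin n → ℝ) 2).bddAbove_image hc.continuousOn
  refine ⟨max 1 C, le_max_left _ _, fun i x hx => le_trans ?_ (le_max_right _ _)⟩
  refine le_trans ?_ (hC (Set.mem_image_of_mem _ (by simpa using hx)))
  exact Finset.single_le_sum (f := fun i => ∑ j, (ℓ i (x j)) ^ 2)
    (fun i _ => Finset.sum_nonneg fun _ _ => sq_nonneg _) (Finset.mem_univ i)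

lemma fq_ae {n : ℕ} (φ : (Fin n → ℝ) →ₗ[ℝ] ℝ) (hφ : φ ≠ 0) (j : Fin 4) :
    ∀ᵐ x : Fin 4 → Fin n → ℝ, φ (x j) ≠ 0 := by
  have h := Measure.addHaar_submodule (volume : Measure (Fin 4 → Fin n → ℝ))
    (LinearMap.ker (φ ∘ₗ LinearMap.proj j)) (by
      intro htop
      apply hφ
      ext1 k
      ext
      have : (fun _ : Fin 4 => (Pi.single k (1 : ℝ) : Fin n → ℝ)) ∈
        LinearMap.ker (φ ∘ₗ (LinearMap.proj j : (Fin 4 → Fin n → ℝ) →ₗ[ℝ] _)) := by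
          rw [htop]; trivial
      simpa using this)
  rw [ae_iff]
  convert h using 2
  ext x
  simp

lemma fq_conv (n : ℕ) (hn : 1 ≤ n)
    (ℓ : Fin (2 * n) → ((Fin n → ℝ) →ₗ[ℝ] ℝ))
    (H : ∀ I : Finset (Fin (2 * n)), I.Nonempty →
        (⨅ i ∈ I, LinearMap.ker (ℓ i)) ≠ ⊥ →
        I.card < 2 * (n - Module.finrank ℝ ↥(⨅ i ∈ I, LinearMap.ker (ℓ i)))) :
    (∫⁻ x in {x : Fin 4 → Fin n → ℝ | 1 ≤ ‖x‖ ∧ ‖x‖ ≤ 2},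
        (∏ i : Fin (2 * n), ENNReal.ofReal (∑ j : Fin 4, (ℓ i (x j)) ^ 2))⁻¹) < ⊤ := by
  classical
  obtain ⟨C, hC1, hC⟩ := fq_bdd ℓ
  set A := {x : Fin 4 → Fin n → ℝ | 1 ≤ ‖x‖ ∧ ‖x‖ ≤ 2} with hA
  have hAc : IsCompact A := by
    refine (isCompact_closedBall (0 : Fin 4 → Fin n → ℝ) 2).of_isClosed_subset ?_ ?_
    · exact (isClosed_le continuous_const continuous_norm).inter
        (isClosed_le continuous_norm continuous_const)
    · intro x hx; simpa using hx.2
  set q : Fin (2 * n) → (Fin 4 → Fin n → ℝ) → ℝ := fun i x => ∑ j : Fin 4, (ℓ i (x j)) ^ 2 with hq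
  have hq0 : ∀ i x, 0 ≤ q i x := fun i x => Finset.sum_nonneg fun _ _ => sq_nonneg _
  refine hAc.induction_on
    (p := fun S => ∫⁻ x in S, (∏ i : Fin (2 * n), ENNReal.ofReal (q i x))⁻¹ < ⊤) ?_ ?_ ?_ ?_
  · simp
  · intro S T hST hT
    exact (lintegral_mono_set hST).trans_lt hT
  · intro S T hS hT
    exact (lintegral_union_le _ _ _).trans_lt (ENNReal.add_lt_top.2 ⟨hS, hT⟩)
  intro x0 hx0
  set I : Finset (Fin (2 * n)) := Finset.univ.filter (fun i => q i x0 = 0) with hI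
  have hnR : (1 : ℝ) ≤ n := by exact_mod_cast hn
  set s : ℝ := 2 - 1 / n with hs
  have hinv : 1 / (n : ℝ) ≤ 1 := by rw [div_le_one (by linarith)]; exact hnR
  have hinv0 : 0 < 1 / (n : ℝ) := by positivity
  have hs0 : 0 ≤ s := by linarith
  have hJ : ∀ J ⊆ I, (J.card : ℝ) ≤
      s * (Module.finrank ℝ (Submodule.span ℝ (ℓ '' (J : Set (Fin (2 * n))))) : ℝ) := by
    intro J hJI
    rcases J.eq_empty_or_nonempty with rfl | hne
    · rw [Finset.card_empty, Nat.cast_zero]; positivity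
    have hbot : (⨅ i ∈ J, LinearMap.ker (ℓ i)) ≠ ⊥ := by
      intro hb
      have hx00 : x0 = 0 := by
        funext j
        have : x0 j ∈ (⨅ i ∈ J, LinearMap.ker (ℓ i)) := by
          simp only [Submodule.mem_iInf, LinearMap.mem_ker]
          intro i hi
          have h0 : q i x0 = 0 := (Finset.mem_filter.1 (hJI hi)).2
          have := (Finset.sum_eq_zero_iff_of_nonneg (fun _ _ => sq_nonneg _)).1 h0 j
            (Finset.mem_univ _)
          simpa using this
        rw [hb] at this
        simpa using this
      have := hx0.1
      rw [hx00, norm_zero] at this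
      linarith
    have h1 := H J hne hbot
    have h2 := fq_rank ℓ J
    set r := Module.finrank ℝ (Submodule.span ℝ (ℓ '' (J : Set (Fin (2 * n)))))
    have h3 : J.card + 1 ≤ 2 * r := by omega
    have h4 : r ≤ n := by omega
    have h3' : (J.card : ℝ) + 1 ≤ 2 * r := by exact_mod_cast h3
    have h4' : (r : ℝ) ≤ n := by exact_mod_cast h4
    have h5 : 1 / (n : ℝ) * r ≤ 1 := by
      rw [one_div, inv_mul_le_iff₀ (by linarith)]; linarith
    rw [hs]; linarith
  have hne0 : ∀ i ∈ I, ℓ i ≠ 0 := by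
    intro i hi h0
    have := hJ {i} (by simpa using hi)
    rw [Finset.coe_singleton, Set.image_singleton, h0, Submodule.span_zero_singleton,
      finrank_bot, Finset.card_singleton] at this
    norm_num at this
  set D : ℝ := (∏ i ∈ Iᶜ, (q i x0 / 2))⁻¹ with hD
  set K : ℝ := Real.exp (s * I.card * Real.log C) with hK
  let 𝓑 : Finset (Finset (Fin (2 * n))) := I.powerset.filter (fun B : Finset (Fin (2 * n)) => LinearIndepOn ℝ ℓ (B : Set (Fin (2 * n))))
  let G : (Fin 4 → Fin n → ℝ) → ℝ := fun x =>
    D * (K * ∑ B ∈ 𝓑, ∏ j, ∏ b ∈ B, |ℓ b (x j)| ^ (-(s / 2)))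
  have hpos : ∀ i ∈ Iᶜ, 0 < q i x0 := by
    intro i hi
    have : q i x0 ≠ 0 := by simpa [hI] using hi
    exact lt_of_le_of_ne (hq0 i x0) this.symm
  have hD0 : 0 ≤ D := inv_nonneg.2 (Finset.prod_nonneg fun i hi => by have := hpos i hi; positivity)
  have hGint : IntegrableOn G (Metric.closedBall 0 2) := by
    refine Integrable.const_mul (Integrable.const_mul (integrable_finsetSum _ fun B hB => ?_) _) _
    exact fq_int4 ℓ hn B (Finset.mem_filter.1 hB).2 (s / 2) (by linarith) 2 (by norm_num)
  let U : Set (Fin 4 → Fin n → ℝ) := {x | ∀ i ∈ Iᶜ, q i x0 / 2 < q i x}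
  have hU : U ∈ nhds x0 := by
    have : ∀ᶠ x in nhds x0, ∀ i ∈ Iᶜ, q i x0 / 2 < q i x := by
      rw [Filter.eventually_all_finset]
      intro i hi
      exact (fq_cont ℓ i).continuousAt.eventually_const_lt (by have := hpos i hi; simp only [q] at this ⊢; linarith)
    exact this
  have hUm : MeasurableSet U := by
    have : U = ⋂ i ∈ Iᶜ, {x | q i x0 / 2 < q i x} := by ext; simp [U]
    rw [this]
    exact Finset.measurableSet_biInter _ fun i _ =>
      (isOpen_lt continuous_const (fq_cont ℓ i)).measurableSet
  refine ⟨U ∩ Metric.closedBall 0 2, ?_, ?_⟩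
  · rw [mem_nhdsWithin_iff_exists_mem_nhds_inter]
    exact ⟨U, hU, fun x hx => ⟨hx.1, by simpa using hx.2.2⟩⟩
  have hlt : ∫⁻ x in Metric.closedBall 0 2, ENNReal.ofReal (G x) < ⊤ := hGint.lintegral_lt_top
  refine lt_of_le_of_lt ?_ ((lintegral_mono_set (Set.inter_subset_right (s := U))).trans_lt hlt)
  apply lintegral_mono_ae
  rw [ae_restrict_iff' (hUm.inter Metric.isClosed_closedBall.measurableSet)]
  have hae : ∀ᵐ x : Fin 4 → Fin n → ℝ, ∀ i : Fin (2 * n), i ∈ I → ∀ j : Fin 4, ℓ i (x j) ≠ 0 := by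
    rw [ae_all_iff]; intro i
    by_cases hi : i ∈ I
    · simp only [hi, true_imp_iff]
      rw [ae_all_iff]; intro j
      exact fq_ae (ℓ i) (hne0 i hi) j
    · simp [hi]
  filter_upwards [hae] with x hx hxU
  have hx2 : ‖x‖ ≤ 2 := by simpa using hxU.2
  have hqI : ∀ i ∈ I, 0 < q i x := fun i hi =>
    Finset.sum_pos (fun j _ => by have := hx i hi j; positivity) Finset.univ_nonempty
  have hqIc : ∀ i ∈ Iᶜ, 0 < q i x := fun i hi => by
    have h1 := hxU.1 i hi; have h2 := hpos i hi; linarith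
  have hqall : ∀ i, 0 < q i x := fun i => by
    by_cases hi : i ∈ I
    · exact hqI i hi
    · exact hqIc i (by simpa using hi)
  rw [← ENNReal.ofReal_prod_of_nonneg (fun i _ => hq0 i x),
    ← ENNReal.ofReal_inv_of_pos (Finset.prod_pos fun i _ => hqall i)]
  apply ENNReal.ofReal_le_ofReal
  rw [← Finset.prod_compl_mul_prod I, mul_inv]
  have hb1 : (∏ i ∈ Iᶜ, q i x)⁻¹ ≤ D := by
    apply inv_anti₀
    · exact Finset.prod_pos fun i hi => by have := hpos i hi; positivity
    · exact Finset.prod_le_prod (fun i hi => by have := hpos i hi; positivity)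
        fun i hi => (hxU.1 i hi).le
  obtain ⟨B, hBI, hB, hle⟩ := fq_pointwise ℓ s hs0 I hJ C hC1 (fun i => q i x) hqI
    (fun i _ => hC i x hx2)
  have hb2 : (∏ i ∈ I, q i x)⁻¹ ≤ K * ∑ B ∈ 𝓑, ∏ j, ∏ b ∈ B, |ℓ b (x j)| ^ (-(s / 2)) := by
    refine hle.trans (mul_le_mul_of_nonneg_left ?_ (Real.exp_pos _).le)
    have hBm : B ∈ 𝓑 := Finset.mem_filter.2 ⟨Finset.mem_powerset.2 hBI, hB⟩
    refine le_trans ?_ (Finset.single_le_sum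
      (f := fun B => ∏ j, ∏ b ∈ B, |ℓ b (x j)| ^ (-(s / 2))) (fun B _ => ?_) hBm)
    · rw [Finset.prod_comm]
      exact Finset.prod_le_prod (fun b _ => Real.rpow_nonneg (hq0 b x) _) fun b hb =>
        fq_amgm (fun j => ℓ b (x j)) (hx b (hBI hb)) s hs0
    · exact Finset.prod_nonneg fun _ _ => Finset.prod_nonneg fun _ _ =>
        Real.rpow_nonneg (abs_nonneg _) _
  exact mul_le_mul hb1 hb2 (inv_nonneg.2 (Finset.prod_nonneg fun i _ => hq0 i x)) hD0

lemma fq_spanbd {V ι : Type*} [AddCommGroup V] [Module ℝ V] (ℓ : ι → (V →ₗ[ℝ] ℝ)) (B : Set ι)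
    (φ : V →ₗ[ℝ] ℝ) (h : φ ∈ Submodule.span ℝ (ℓ '' B)) :
    ∃ M : ℝ, 0 ≤ M ∧ ∀ v ε, 0 ≤ ε → (∀ b ∈ B, |ℓ b v| ≤ ε) → |φ v| ≤ M * ε := by
  induction h using Submodule.span_induction with
  | mem x hx =>
    obtain ⟨b, hb, rfl⟩ := hx
    exact ⟨1, zero_le_one, fun v ε _ h => by simpa using h b hb⟩
  | zero => exact ⟨0, le_rfl, by simp⟩
  | add x y _ _ hx hy =>
    obtain ⟨M, hM, h1⟩ := hx
    obtain ⟨N, hN, h2⟩ := hy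
    refine ⟨M + N, by positivity, fun v ε he h => ?_⟩
    have := abs_add_le (x v) (y v)
    have := h1 v ε he h
    have := h2 v ε he h
    rw [LinearMap.add_apply]; linarith
  | smul c x _ hx =>
    obtain ⟨M, hM, h1⟩ := hx
    refine ⟨|c| * M, by positivity, fun v ε he h => ?_⟩
    rw [LinearMap.smul_apply, smul_eq_mul, abs_mul, mul_assoc]
    exact mul_le_mul_of_nonneg_left (h1 v ε he h) (abs_nonneg _)

lemma fq_div (n : ℕ) (hn : 1 ≤ n)
    (ℓ : Fin (2 * n) → ((Fin n → ℝ) →ₗ[ℝ] ℝ))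
    (hfin : (∫⁻ x in {x : Fin 4 → Fin n → ℝ | 1 ≤ ‖x‖ ∧ ‖x‖ ≤ 2},
        (∏ i : Fin (2 * n), ENNReal.ofReal (∑ j : Fin 4, (ℓ i (x j)) ^ 2))⁻¹) < ⊤)
    (I : Finset (Fin (2 * n))) (hne : I.Nonempty)
    (hbot : (⨅ i ∈ I, LinearMap.ker (ℓ i)) ≠ ⊥) :
    I.card < 2 * (n - Module.finrank ℝ ↥(⨅ i ∈ I, LinearMap.ker (ℓ i))) := by
  classical
  by_contra hcon
  obtain ⟨C, hC1, hC⟩ := fq_bdd ℓ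
  set A := {x : Fin 4 → Fin n → ℝ | 1 ≤ ‖x‖ ∧ ‖x‖ ≤ 2} with hA
  set q : Fin (2 * n) → (Fin 4 → Fin n → ℝ) → ℝ := fun i x => ∑ j : Fin 4, (ℓ i (x j)) ^ 2 with hq
  have hq0 : ∀ i x, 0 ≤ q i x := fun i x => Finset.sum_nonneg fun _ _ => sq_nonneg _
  obtain ⟨B0, hB0I, -, hspan0, hB0⟩ := exists_linearIndepOn_extension
    (linearIndepOn_empty ℝ ℓ) (Set.empty_subset (I : Set (Fin (2 * n))))
  obtain ⟨B, rfl⟩ : ∃ B : Finset (Fin (2 * n)), (B : Set (Fin (2 * n))) = B0 :=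
    ⟨B0.toFinset, by simp⟩
  have hspan : Submodule.span ℝ (ℓ '' (B : Set (Fin (2 * n)))) =
      Submodule.span ℝ (ℓ '' (I : Set (Fin (2 * n)))) :=
    le_antisymm (Submodule.span_mono (Set.image_mono hB0I)) (Submodule.span_le.2 hspan0)
  have hrk := fq_rank ℓ I
  rw [← hspan, fq_card ℓ B hB0] at hrk
  have hd : 0 < Module.finrank ℝ ↥(⨅ i ∈ I, LinearMap.ker (ℓ i)) := by
    rw [Nat.pos_iff_ne_zero]
    intro h0
    exact hbot (Submodule.finrank_eq_zero.1 h0)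
  have hcard : 2 * B.card ≤ I.card := by omega
  have hBn : B.card < n := by omega
  obtain ⟨L, e, he, hL⟩ := fq_coords ℓ hn B hB0
  set S := B.image e with hS
  have hScard : S.card = B.card := Finset.card_image_of_injOn he
  obtain ⟨k0, hk0⟩ : ∃ k, k ∉ S := by
    by_contra hall
    push Not at hall
    have : S = Finset.univ := Finset.eq_univ_of_forall hall
    rw [this] at hScard
    simp at hScard
    omega
  -- base point
  obtain ⟨y0, hy0S, hy0⟩ : ∃ y0 : Fin n → ℝ, (∀ k ∈ S, y0 k = 0) ∧ ‖L.symm y0‖ = 3 / 2 := by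
    have hu : L.symm (Pi.single k0 (1 : ℝ)) ≠ 0 := by simp
    refine ⟨(3 / 2 / ‖L.symm (Pi.single k0 (1 : ℝ))‖) • Pi.single k0 (1 : ℝ), ?_, ?_⟩
    · intro k hk
      have : k ≠ k0 := fun h => hk0 (h ▸ hk)
      simp [this]
    · have := norm_pos_iff.2 hu
      rw [map_smul, norm_smul, Real.norm_of_nonneg (by positivity)]
      field_simp
  have hLs : Continuous L.symm :=
    (L.symm : (Fin n → ℝ) →ₗ[ℝ] (Fin n → ℝ)).continuous_of_finiteDimensional
  obtain ⟨δ, hδ, hball⟩ : ∃ δ > 0, ∀ y ∈ Metric.ball y0 δ, 1 < ‖L.symm y‖ ∧ ‖L.symm y‖ < 2 := by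
    have ho : IsOpen {y | 1 < ‖L.symm y‖ ∧ ‖L.symm y‖ < 2} :=
      (isOpen_lt continuous_const hLs.norm).inter (isOpen_lt hLs.norm continuous_const)
    exact Metric.isOpen_iff.1 ho y0 (by simp only [Set.mem_ofPred_eq, hy0]; norm_num)
  let box : ℝ → Set (Fin n → ℝ) := fun ε =>
    Set.univ.pi fun k => Metric.ball (y0 k) (if k ∈ S then ε else δ)
  let T : ℝ → Set (Fin 4 → Fin n → ℝ) := fun ε => Set.univ.pi fun _ => L ⁻¹' (box ε)
  have hTA : ∀ ε, ε ≤ δ → T ε ⊆ A := by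
    intro ε hε x hx
    have hxj : ∀ j, 1 < ‖x j‖ ∧ ‖x j‖ < 2 := by
      intro j
      have h1 : L (x j) ∈ box ε := hx j trivial
      have h2 : L (x j) ∈ Metric.ball y0 δ := by
        rw [ball_pi _ hδ]
        intro k _
        refine Metric.ball_subset_ball ?_ (h1 k trivial)
        split_ifs <;> simp [hε]
      simpa using hball _ h2
    exact ⟨(hxj 0).1.le.trans (norm_le_pi_norm x 0),
      (pi_norm_le_iff_of_nonneg (by norm_num)).2 fun j => (hxj j).2.le⟩
  have hdet : LinearMap.det (L : (Fin n → ℝ) →ₗ[ℝ] (Fin n → ℝ)) ≠ 0 := L.isUnit_det'.ne_zero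
  set c : ℝ := |(LinearMap.det (L : (Fin n → ℝ) →ₗ[ℝ] (Fin n → ℝ)))⁻¹| with hc
  have hc0 : 0 < c := abs_pos.2 (inv_ne_zero hdet)
  set w : ℝ := ∏ k : Fin n, (if k ∈ S then 2 else 2 * δ) with hw
  have hw0 : 0 < w := Finset.prod_pos fun k _ => by split_ifs <;> positivity
  set W : ℝ := (c * w) ^ 4 with hW
  have hW0 : 0 < W := by positivity
  have hvol : ∀ ε, 0 < ε → volume (T ε) = ENNReal.ofReal (ε ^ (4 * B.card) * W) := by
    intro ε hε
    have h1 : volume (L ⁻¹' (box ε)) = ENNReal.ofReal (c * (ε ^ B.card * w)) := by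
      have h2 := Measure.addHaar_preimage_linearMap (volume : Measure (Fin n → ℝ)) hdet (box ε)
      have h3 : volume (box ε) = ENNReal.ofReal (ε ^ B.card * w) := by
        simp only [box]
        rw [volume_pi_pi]
        simp only [Real.volume_ball]
        rw [← ENNReal.ofReal_prod_of_nonneg (fun k _ => by split_ifs <;> positivity)]
        congr 1
        have : ε ^ B.card = ∏ k : Fin n, (if k ∈ S then ε else 1) := by
          rw [Finset.prod_ite_mem, Finset.univ_inter, Finset.prod_const, hScard]
        rw [this, hw, ← Finset.prod_mul_distrib]
        refine Finset.prod_congr rfl fun k _ => ?_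
        split_ifs <;> ring
      rw [ENNReal.ofReal_mul hc0.le, ← h3]
      exact h2
    simp only [T]
    rw [volume_pi_pi, Finset.prod_const, h1, Finset.card_univ, Fintype.card_fin,
      ← ENNReal.ofReal_pow (by positivity)]
    congr 1
    rw [hW, pow_mul']
    ring
  rcases Nat.eq_zero_or_pos B.card with hz | hr
  · -- all forms in `I` vanish
    obtain ⟨i, hi⟩ := hne
    have hB : B = ∅ := Finset.card_eq_zero.1 hz
    have hi0 : ℓ i = 0 := by
      have : ℓ i ∈ Submodule.span ℝ (ℓ '' (I : Set (Fin (2 * n)))) :=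
        Submodule.subset_span (Set.mem_image_of_mem _ hi)
      rw [← hspan, hB] at this
      simpa using this
    have hf : ∀ x, (∏ i : Fin (2 * n), ENNReal.ofReal (q i x))⁻¹ = ⊤ := by
      intro x
      rw [ENNReal.inv_eq_top]
      exact Finset.prod_eq_zero (Finset.mem_univ i) (by simp [hq, hi0])
    replace hfin : ∫⁻ x in A, (∏ i : Fin (2 * n), ENNReal.ofReal (q i x))⁻¹ < ⊤ := hfin
    simp only [hf] at hfin
    rw [setLIntegral_const] at hfin
    have hpos : volume A ≠ 0 := by
      have h1 := measure_mono (μ := volume) (hTA δ le_rfl)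
      rw [hvol δ hδ] at h1
      have : 0 < ENNReal.ofReal (δ ^ (4 * B.card) * W) := by
        rw [ENNReal.ofReal_pos]; positivity
      exact (this.trans_le h1).ne'
    rw [ENNReal.top_mul hpos] at hfin
    exact lt_irrefl _ hfin
  -- main case
  have hM : ∀ i, ∃ M : ℝ, 0 ≤ M ∧ (i ∈ I → ∀ v ε, 0 ≤ ε → (∀ b ∈ B, |ℓ b v| ≤ ε) →
      |ℓ i v| ≤ M * ε) := by
    intro i
    by_cases hi : i ∈ I
    · obtain ⟨M, h1, h2⟩ := fq_spanbd ℓ (B : Set (Fin (2 * n))) (ℓ i)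
        (hspan0 (Set.mem_image_of_mem _ hi))
      exact ⟨M, h1, fun _ => h2⟩
    · exact ⟨0, le_rfl, fun h => absurd h hi⟩
  choose M hM0 hM using hM
  set P : ℝ := ∏ i, (C + 4 * M i ^ 2) with hP
  have hP0 : 0 < P := Finset.prod_pos fun i _ => by positivity
  have hprod : ∀ ε, 0 < ε → ε ≤ δ → ε ≤ 1 → ∀ x ∈ T ε,
      ∏ i, q i x ≤ P * ε ^ (4 * B.card) := by
    intro ε hε hεδ hε1 x hx
    have h1 : ∏ i, q i x ≤ ∏ i, ((C + 4 * M i ^ 2) * (if i ∈ I then ε ^ 2 else 1)) := by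
      refine Finset.prod_le_prod (fun i _ => hq0 i x) fun i _ => ?_
      split_ifs with hi
      · have hj : ∀ j, (ℓ i (x j)) ^ 2 ≤ M i ^ 2 * ε ^ 2 := by
          intro j
          have h2 : |ℓ i (x j)| ≤ M i * ε := by
            refine hM i hi (x j) ε hε.le fun b hb => ?_
            have hS' : e b ∈ S := Finset.mem_image_of_mem _ hb
            have h3 : L (x j) (e b) ∈ Metric.ball (y0 (e b)) (if e b ∈ S then ε else δ) :=
              hx j trivial (e b) trivial
            rw [hy0S _ hS', if_pos hS', hL b hb, mem_ball_zero_iff, Real.norm_eq_abs] at h3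
            exact h3.le
          rw [← mul_pow, ← sq_abs]
          exact pow_le_pow_left₀ (abs_nonneg _) h2 2
        have h4 : q i x ≤ ∑ _j : Fin 4, M i ^ 2 * ε ^ 2 := Finset.sum_le_sum fun j _ => hj j
        simp only [Finset.sum_const, Finset.card_univ, Fintype.card_fin, nsmul_eq_mul] at h4
        push_cast at h4
        have : 0 ≤ C * ε ^ 2 := by positivity
        linarith
      · have h2 := hC i x (hTA ε hεδ hx).2
        have : 0 ≤ M i ^ 2 := sq_nonneg _
        simp only [q]; linarith
    refine h1.trans ?_
    rw [Finset.prod_mul_distrib]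
    refine mul_le_mul_of_nonneg_left ?_ hP0.le
    rw [Finset.prod_ite_mem, Finset.univ_inter, Finset.prod_const, ← pow_mul]
    exact pow_le_pow_of_le_one hε.le hε1 (by omega)
  have hlow : ∀ ε, 0 < ε → ε ≤ δ → ε ≤ 1 →
      ENNReal.ofReal (W / P) ≤
        ∫⁻ x in T ε, (∏ i, ENNReal.ofReal (q i x))⁻¹ ∂(volume.restrict A) := by
    intro ε hε hεδ hε1
    have hTm : MeasurableSet (T ε) := by
      refine MeasurableSet.univ_pi fun _ => ?_
      have hLm : Measurable L :=
        ((L : (Fin n → ℝ) →ₗ[ℝ] (Fin n → ℝ)).continuous_of_finiteDimensional).measurable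
      exact hLm (MeasurableSet.univ_pi fun _ => Metric.isOpen_ball.measurableSet)
    rw [Measure.restrict_restrict_of_subset (hTA ε hεδ)]
    have h1 : ∫⁻ _x in T ε, ENNReal.ofReal ((P * ε ^ (4 * B.card))⁻¹) ≤
        ∫⁻ x in T ε, (∏ i, ENNReal.ofReal (q i x))⁻¹ := by
      refine setLIntegral_mono' hTm fun x hx => ?_
      rw [ENNReal.ofReal_inv_of_pos (by positivity),
        ← ENNReal.ofReal_prod_of_nonneg (fun i _ => hq0 i x)]
      exact ENNReal.inv_le_inv.2 (ENNReal.ofReal_le_ofReal (hprod ε hε hεδ hε1 x hx))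
    refine le_trans (le_of_eq ?_) h1
    rw [setLIntegral_const, hvol ε hε, ← ENNReal.ofReal_mul (by positivity)]
    congr 1
    field_simp
  have hlim : Filter.Tendsto (⇑(volume.restrict A) ∘ T) (nhdsWithin 0 (Set.Ioi 0)) (nhds 0) := by
    have h1 : Filter.Tendsto (fun ε : ℝ => ENNReal.ofReal (ε ^ (4 * B.card) * W))
        (nhdsWithin 0 (Set.Ioi 0)) (nhds 0) := by
      have h2 : Continuous (fun ε : ℝ => ENNReal.ofReal (ε ^ (4 * B.card) * W)) :=
        ENNReal.continuous_ofReal.comp (by fun_prop)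
      have h3 := (h2.tendsto 0).mono_left (nhdsWithin_le_nhds (s := Set.Ioi 0))
      have h4 : (0 : ℝ) ^ (4 * B.card) = 0 := zero_pow (by omega)
      simpa [h4] using h3
    refine tendsto_of_tendsto_of_tendsto_of_le_of_le' tendsto_const_nhds h1
      (Filter.Eventually.of_forall fun _ => zero_le) ?_
    filter_upwards [self_mem_nhdsWithin] with ε hε
    rw [← hvol ε hε]
    exact Measure.restrict_apply_le _ _
  have hlim2 := tendsto_setLIntegral_zero hfin.ne hlim
  have hge : ENNReal.ofReal (W / P) ≤ 0 := by
    refine ge_of_tendsto hlim2 ?_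
    have hev : Set.Ioo (0 : ℝ) (min δ 1) ∈ nhdsWithin (0 : ℝ) (Set.Ioi 0) :=
      Ioo_mem_nhdsGT (by positivity)
    filter_upwards [hev] with ε hε
    exact hlow ε hε.1 (hε.2.le.trans (min_le_left _ _)) (hε.2.le.trans (min_le_right _ _))
  have : 0 < ENNReal.ofReal (W / P) := ENNReal.ofReal_pos.2 (by positivity)
  exact absurd hge (not_le.2 this)

/-- **Convergence criterion for the period of a family of Feynman quadrics**
(Lemma 4.1 of Bloch–Esnault–Kreimer).  Let `ℓ_1, …, ℓ_{2n}` be linear functionals on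
`ℝ^n` and, for `x = (x⁽¹⁾,…,x⁽⁴⁾) ∈ (ℝ^n)^4 ≅ ℝ^{4n}`, let
`q_i(x) := ∑_{j=1}^4 ℓ_i(x⁽ʲ⁾)²` be the associated Feynman quadrics.  Then
`∫⁻_{1 ≤ ‖x‖ ≤ 2} (∏ᵢ q_i(x))⁻¹ dx < ∞` if and only if every nonempty
`I ⊆ {1,…,2n}` with `⋂_{i∈I} ker ℓ_i ≠ 0` satisfies
`#I < 2·(n − dim ⋂_{i∈I} ker ℓ_i)`. -/
theorem feynman_quadrics_convergence (n : ℕ) (hn : 1 ≤ n)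
    (ℓ : Fin (2 * n) → ((Fin n → ℝ) →ₗ[ℝ] ℝ)) :
    (∫⁻ x in {x : Fin 4 → Fin n → ℝ | 1 ≤ ‖x‖ ∧ ‖x‖ ≤ 2},
        (∏ i : Fin (2 * n), ENNReal.ofReal (∑ j : Fin 4, (ℓ i (x j)) ^ 2))⁻¹) < ⊤ ↔
      ∀ I : Finset (Fin (2 * n)), I.Nonempty →
        (⨅ i ∈ I, LinearMap.ker (ℓ i)) ≠ ⊥ →
        I.card < 2 * (n - Module.finrank ℝ ↥(⨅ i ∈ I, LinearMap.ker (ℓ i))) := by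
  exact ⟨fun h I hI hb => fq_div n hn ℓ h I hI hb, fun H => fq_conv n hn ℓ H⟩
end

section
/- Let Γ be a finite connected simple graph (in the notation below) with n := h_1(Γ) ≥ 1 and with exactly 2n edges (a logarithmically divergent graph). Fix a linear isomorphism φ : ℝ^n → ker ∂_ℝ ⊆ ℝ^E and for each edge e ∈ E let ℓ_e : ℝ^n → ℝ be the composite of φ with the e-th coordinate functional on ℝ^E. For x = (x^{(1)},x^{(2)},x^{(3)},x^{(4)}) ∈ (ℝ^n)^4, identified with ℝ^{4n} carrying Lebesgue measure, set q_e(x) := ∑_{j=1}^{4} ℓ_e(x^{(j)})². Then the lower Lebesgue integral ∫⁻_{{x ∈ ℝ^{4n} : 1 ≤ ‖x‖ ≤ 2}} (∏_{e∈E} ENNReal.ofReal(q_e(x)))⁻¹ dx is finite if and only if Γ is primitive log divergent, i.e., every nonempty proper subset S ⊊ E satisfies #S > 2·h_1(S). -/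
open MeasureTheory

open scoped BigOperators

variable {V : Type} [Fintype V] [LinearOrder V]

lemma fp_greedy {E W : Type} [DecidableEq E] [AddCommGroup W] [Module ℝ W] (v : E → W) (a : E → ℝ)
    (s : Finset E) : ∃ B : Finset E, B ⊆ s ∧ LinearIndepOn ℝ v (B : Set E) ∧
      ∀ t : ℝ, Submodule.span ℝ (v '' {e | e ∈ s ∧ t ≤ a e}) ≤
        Submodule.span ℝ (v '' {e | e ∈ B ∧ t ≤ a e}) := by
  induction s using Finset.induction_on_min_value a with
  | empty => exact ⟨∅, by simp, by simp, by simp⟩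
  | insert e s hes hmin ih =>
    obtain ⟨B, hBs, hB, hsp⟩ := ih
    by_cases hv : v e ∈ Submodule.span ℝ (v '' (B : Set E))
    · refine ⟨B, hBs.trans (Finset.subset_insert _ _), hB, fun t => ?_⟩
      rw [Submodule.span_le]
      rintro _ ⟨f, ⟨hf, htf⟩, rfl⟩
      rcases Finset.mem_insert.1 hf with rfl | hf
      · refine Submodule.span_mono ?_ hv
        rintro _ ⟨g, hg, rfl⟩
        exact ⟨g, ⟨hg, htf.trans (hmin g (hBs hg))⟩, rfl⟩
      · exact hsp t (Submodule.subset_span ⟨f, ⟨hf, htf⟩, rfl⟩)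
    · refine ⟨insert e B, Finset.insert_subset_insert _ hBs, ?_, fun t => ?_⟩
      · rw [Finset.coe_insert]
        exact hB.insert hv
      · rw [Submodule.span_le]
        rintro _ ⟨f, ⟨hf, htf⟩, rfl⟩
        rcases Finset.mem_insert.1 hf with rfl | hf
        · exact Submodule.subset_span ⟨f, ⟨Finset.mem_insert_self _ _, htf⟩, rfl⟩
        · refine Submodule.span_mono ?_ (hsp t (Submodule.subset_span ⟨f, ⟨hf, htf⟩, rfl⟩))
          rintro _ ⟨g, ⟨hg, hg2⟩, rfl⟩
          exact ⟨g, ⟨Finset.mem_insert_of_mem hg, hg2⟩, rfl⟩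

lemma fp_layer {E : Type} [Fintype E] (a w : E → ℝ) (ha : ∀ e, 0 ≤ a e)
    (h : ∀ t : ℝ, 0 < t → ∑ e with t ≤ a e, w e ≤ 0) : ∑ e, w e * a e ≤ 0 := by
  classical
  set M : ℝ := ∑ e, a e
  have hM : ∀ e, a e ≤ M := fun e => Finset.single_le_sum (fun i _ => ha i) (Finset.mem_univ e)
  have key : ∀ e, ∫ t in Set.Ioc 0 M, (Set.Iic (a e)).indicator (fun _ => (1:ℝ)) t = a e := by
    intro e
    rw [integral_indicator measurableSet_Iic, Measure.restrict_restrict measurableSet_Iic]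
    have : Set.Iic (a e) ∩ Set.Ioc 0 M = Set.Ioc 0 (a e) := by
      ext t; simp only [Set.mem_inter_iff, Set.mem_Iic, Set.mem_Ioc]
      have := hM e
      constructor
      · rintro ⟨h1, h2, h3⟩; exact ⟨h2, h1⟩
      · rintro ⟨h1, h2⟩; exact ⟨h2, h1, h2.trans this⟩
    rw [this]
    simp [ha e]
  have hint : ∀ e, Integrable ((Set.Iic (a e)).indicator (fun _ => (1:ℝ)))
      (volume.restrict (Set.Ioc 0 M)) := by
    intro e
    exact (integrable_const (1:ℝ)).indicator measurableSet_Iic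
  have : ∑ e, w e * a e =
      ∫ t in Set.Ioc 0 M, ∑ e, w e * (Set.Iic (a e)).indicator (fun _ => (1:ℝ)) t := by
    rw [integral_finsetSum _ (fun e _ => (hint e).const_mul _)]
    refine Finset.sum_congr rfl fun e _ => ?_
    rw [integral_const_mul, key]
  rw [this]
  refine setIntegral_nonpos measurableSet_Ioc fun t ht => ?_
  refine le_trans (le_of_eq ?_) (h t ht.1)
  rw [Finset.sum_filter]
  refine Finset.sum_congr rfl fun e _ => ?_
  by_cases hte : t ≤ a e <;> simp [Set.indicator, hte]

noncomputable def fpRk {E : Type} {n : ℕ} (l : E → Module.Dual ℝ (Fin n → ℝ)) (T : Finset E) : ℕ :=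
  Module.finrank ℝ (Submodule.span ℝ (l '' (T : Set E)))

lemma fpRk_le {E : Type} {n : ℕ} (l : E → Module.Dual ℝ (Fin n → ℝ)) (T : Finset E) :
    fpRk l T ≤ n := by
  refine (Submodule.finrank_le _).trans ?_
  rw [Subspace.dual_finrank_eq]; simp

lemma fpRk_le_card {E : Type} [DecidableEq E] {n : ℕ} (l : E → Module.Dual ℝ (Fin n → ℝ))
    (T : Finset E) : fpRk l T ≤ T.card := by
  unfold fpRk
  classical
  rw [← Finset.coe_image]
  exact (finrank_span_finset_le_card _).trans Finset.card_image_le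

lemma fp_span_top {E : Type} {n : ℕ} (l : E → Module.Dual ℝ (Fin n → ℝ)) (T : Finset E) 
    (h : fpRk l T = n) : Submodule.span ℝ (l '' (T : Set E)) = ⊤ := by
  apply Submodule.eq_top_of_finrank_eq
  rw [Subspace.dual_finrank_eq]; simpa [fpRk] using h

lemma fp_combi {E : Type} [Fintype E] [DecidableEq E] {n : ℕ} (hn : 1 ≤ n)
    (l : E → Module.Dual ℝ (Fin n → ℝ)) (huniv : fpRk l Finset.univ = n)
    (hP : ∀ T : Finset E, T.Nonempty → T ≠ Finset.univ → T.card < 2 * fpRk l T)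
    (a : E → ℝ) (ha : ∀ e, 0 ≤ a e)
    (hrk : ∀ t : ℝ, 0 < t → fpRk l (Finset.univ.filter fun e => t ≤ a e) ≠ n) :
    ∃ B : Finset E, B.card = n ∧ fpRk l B = n ∧ 
      2 * ∑ e, a e ≤ (4 - 2 / n) * ∑ e ∈ B, a e := by
  obtain ⟨B, -, hB, hsp⟩ := fp_greedy l a Finset.univ
  have hBrk : fpRk l B = n := by
    apply le_antisymm (fpRk_le _ _)
    have := Submodule.finrank_mono (hsp 0)
    have e1 : {e | e ∈ Finset.univ ∧ 0 ≤ a e} = ((Finset.univ : Finset E) : Set E) := by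
      ext e; simp [ha]
    have e2 : {e | e ∈ B ∧ 0 ≤ a e} = (B : Set E) := by
      ext e; simp [ha]
    rw [e1, e2] at this
    exact le_trans (le_of_eq huniv.symm) this
  refine ⟨B, ?_, hBrk, ?_⟩
  · rw [← hBrk]
    unfold fpRk
    have h1 := finrank_span_eq_card (R := ℝ) (b := fun e : (B : Set E) => l e) hB
    rw [Set.image_eq_range]
    rw [h1]; simp
  · have := fp_layer a (fun e => 2 - (4 - 2 / n) * (if e ∈ B then 1 else 0)) ha ?_
    · simp only [sub_mul _ _ (a _), Finset.sum_sub_distrib, ← Finset.mul_sum, mul_assoc, ite_mul, one_mul, zero_mul, Finset.sum_ite_mem, Finset.univ_inter] at this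
      linarith
    · intro t ht
      set T := Finset.univ.filter fun e => t ≤ a e with hT
      have hcardB : fpRk l T ≤ (T ∩ B).card := by
        refine le_trans ?_ (fpRk_le_card l (T ∩ B))
        have := Submodule.finrank_mono (hsp t)
        have e1 : {e | e ∈ Finset.univ ∧ t ≤ a e} = (T : Set E) := by
          ext e; simp [hT]
        have e2 : {e | e ∈ B ∧ t ≤ a e} = ((T ∩ B : Finset E) : Set E) := by
          ext e; simp [hT, and_comm]
        rw [e1, e2] at this
        exact this
      have hmain : (2:ℝ) * T.card ≤ (4 - 2 / n) * (T ∩ B).card := by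
        have hn' : (1:ℝ) ≤ n := by exact_mod_cast hn
        have hpos : (0:ℝ) ≤ 4 - 2 / n := by
          have : (2:ℝ) / n ≤ 2 := by rw [div_le_iff₀ (by linarith)]; linarith
          linarith
        have h2 : (2:ℝ) * T.card ≤ (4 - 2 / n) * fpRk l T := by
          by_cases hTe : T.Nonempty
          · have hTu : T ≠ Finset.univ := by
              intro h
              exact hrk t ht (by rw [← hT, h, huniv])
            have h3 : (T.card : ℝ) + 1 ≤ 2 * fpRk l T := by exact_mod_cast hP T hTe hTu
            have h4 : (fpRk l T : ℝ) ≤ n := by exact_mod_cast fpRk_le l T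
            have h5 : (2:ℝ) / n * fpRk l T ≤ 2 := by
              rw [div_mul_eq_mul_div, div_le_iff₀ (by linarith)]; linarith
            linarith
          · rw [Finset.not_nonempty_iff_eq_empty.1 hTe]
            simp only [Finset.card_empty, Nat.cast_zero, mul_zero]
            exact mul_nonneg hpos (Nat.cast_nonneg _)
        refine h2.trans ?_
        gcongr
      rw [Finset.sum_sub_distrib, ← Finset.mul_sum, Finset.sum_ite_mem]
      simp only [Finset.sum_const, nsmul_eq_mul, mul_one]
      linarith

noncomputable def fpY {E : Type} {n : ℕ} (l : E → Module.Dual ℝ (Fin n → ℝ)) (T : Finset E) :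
    (Fin 4 → Fin n → ℝ) →ₗ[ℝ] (T → Fin 4 → ℝ) :=
  LinearMap.pi fun e => LinearMap.pi fun j => (l e) ∘ₗ LinearMap.proj j

lemma fpY_inj {E : Type} {n : ℕ} (l : E → Module.Dual ℝ (Fin n → ℝ)) (T : Finset E)
    (h : fpRk l T = n) : LinearMap.ker (fpY l T) = ⊥ := by
  rw [LinearMap.ker_eq_bot']
  intro x hx
  funext j
  have : ∀ f ∈ Submodule.span ℝ (l '' (T : Set E)), f (x j) = 0 := by
    intro f hf
    induction hf using Submodule.span_induction with
    | mem f hf =>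
      obtain ⟨e, he, rfl⟩ := hf
      exact congrFun (congrFun hx ⟨e, he⟩) j
    | zero => rfl
    | add f g _ _ hf hg => simp [hf, hg]
    | smul c f _ hf => simp [hf]
  rw [fp_span_top l T h] at this
  exact (Module.forall_dual_apply_eq_zero_iff ℝ (x j)).1 fun f => this f trivial

lemma fp_eta {E : Type} [Fintype E] {n : ℕ} (l : E → Module.Dual ℝ (Fin n → ℝ)) :
    ∃ K : ℝ, 0 < K ∧ ∀ T : Finset E, fpRk l T = n → ∀ (x : Fin 4 → Fin n → ℝ) (r : ℝ), 0 ≤ r →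
      (∀ e ∈ T, ‖fun j => l e (x j)‖ ≤ r) → ‖x‖ ≤ K * r := by
  classical
  have : ∀ T : Finset E, ∃ K : ℝ, 0 < K ∧ (fpRk l T = n → ∀ (x : Fin 4 → Fin n → ℝ) (r : ℝ), 0 ≤ r →
      (∀ e ∈ T, ‖fun j => l e (x j)‖ ≤ r) → ‖x‖ ≤ K * r) := by
    intro T
    by_cases h : fpRk l T = n
    · obtain ⟨K, hK, hK2⟩ := LinearMap.exists_antilipschitzWith (fpY l T) (fpY_inj l T h)
      refine ⟨K, hK, fun _ x r hr hx => ?_⟩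
      have h1 := hK2.le_mul_dist x 0
      simp only [dist_zero_right, map_zero] at h1
      refine h1.trans ?_
      gcongr
      rw [pi_norm_le_iff_of_nonneg hr]
      intro e
      exact hx e e.2
    · exact ⟨1, one_pos, fun h' => absurd h' h⟩
  choose K hK hK2 using this
  refine ⟨∑ T, K T, Finset.sum_pos (fun T _ => hK T) Finset.univ_nonempty,
    fun T hT x r hr hx => (hK2 T hT x r hr hx).trans ?_⟩
  gcongr
  exact Finset.single_le_sum (fun i _ => (hK i).le) (Finset.mem_univ T)

lemma fp_upper {E : Type} [Fintype E] {n : ℕ} (l : E → Module.Dual ℝ (Fin n → ℝ)) :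
    ∃ M : ℝ, 0 < M ∧ ∀ (e : E) (x : Fin 4 → Fin n → ℝ), ‖fun j => l e (x j)‖ ≤ M * ‖x‖ := by
  obtain ⟨M, hM, h⟩ := (LinearMap.toContinuousLinearMap (fpY l Finset.univ)).isBoundedLinearMap.bound
  refine ⟨M, hM, fun e x => le_trans ?_ (h x)⟩
  exact norm_le_pi_norm (fpY l Finset.univ x) ⟨e, Finset.mem_univ e⟩

lemma fp_pointwise {E : Type} [Fintype E] [DecidableEq E] {n : ℕ} (hn : 1 ≤ n)
    (l : E → Module.Dual ℝ (Fin n → ℝ)) (huniv : fpRk l Finset.univ = n)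
    (hP : ∀ T : Finset E, T.Nonempty → T ≠ Finset.univ → T.card < 2 * fpRk l T) :
    ∃ C R : ℝ, 0 < C ∧ 0 < R ∧ ∀ x : Fin 4 → Fin n → ℝ, 1 ≤ ‖x‖ → ‖x‖ ≤ 2 →
      (∀ e, (fun j => l e (x j)) ≠ 0) →
      (∀ e, ‖fun j => l e (x j)‖ < R) ∧
      ∃ B : Finset E, B.card = n ∧ fpRk l B = n ∧
        ∏ e, (‖fun j => l e (x j)‖ ^ 2)⁻¹ ≤
          C * ∏ e ∈ B, (R / ‖fun j => l e (x j)‖) ^ (4 - 2 / n : ℝ) := by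
  obtain ⟨K, hK, hK2⟩ := fp_eta l
  obtain ⟨M, hM, hM2⟩ := fp_upper l
  set η : ℝ := 1 / (2 * K) with hη
  have hηpos : 0 < η := by positivity
  set R : ℝ := 2 * M + 1 + η with hR
  refine ⟨(∏ _e : E, (η ^ 2)⁻¹), R, by positivity, by positivity, fun x hx1 hx2 hx0 => ?_⟩
  set y : E → ℝ := fun e => ‖fun j => l e (x j)‖ with hy
  have hypos : ∀ e, 0 < y e := fun e => norm_pos_iff.2 (hx0 e)
  have hyR : ∀ e, y e < R := by
    intro e
    have := hM2 e x
    have : y e ≤ M * 2 := this.trans (by gcongr)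
    linarith
  refine ⟨hyR, ?_⟩
  set a : E → ℝ := fun e => max 0 (Real.log (η / y e)) with ha
  have ha0 : ∀ e, 0 ≤ a e := fun e => le_max_left _ _
  obtain ⟨B, hB1, hB2, hB3⟩ := fp_combi hn l huniv hP a ha0 (by
    intro t ht hrk
    have := hK2 _ hrk x η hηpos.le (by
      intro e he
      have he : t ≤ a e := by simpa using he
      have h1 : 0 < Real.log (η / y e) := by
        by_contra h
        have : a e = 0 := max_eq_left (not_lt.1 h)
        linarith
      have h2 : 1 < η / y e := (Real.log_pos_iff (by have := hypos e; positivity)).1 h1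
      rw [lt_div_iff₀ (hypos e)] at h2
      linarith)
    have h3 : K * η = 1 / 2 := by rw [hη]; field_simp
    linarith)
  refine ⟨B, hB1, hB2, ?_⟩
  have hc : (0:ℝ) ≤ 4 - 2 / n := by
    have hn' : (1:ℝ) ≤ n := by exact_mod_cast hn
    have : (2:ℝ) / n ≤ 2 := by rw [div_le_iff₀ (by linarith)]; linarith
    linarith
  set c : ℝ := 4 - 2 / n with hcdef
  have h1 : ∀ e, (y e ^ 2)⁻¹ ≤ (η ^ 2)⁻¹ * Real.exp (2 * a e) := by
    intro e
    have h2 : η / y e ≤ Real.exp (a e) := by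
      rw [← Real.log_le_iff_le_exp (by have := hypos e; positivity)]
      exact le_max_right _ _
    have h3 : (η / y e) ^ 2 ≤ Real.exp (2 * a e) := by
      rw [two_mul, Real.exp_add, ← sq]
      have := hypos e
      gcongr
    calc (y e ^ 2)⁻¹ = (η ^ 2)⁻¹ * (η / y e) ^ 2 := by
          have := hypos e
          field_simp
      _ ≤ _ := by gcongr
  have h2 : ∀ e, Real.exp (c * a e) ≤ (R / y e) ^ c := by
    intro e
    have hq : 0 < R / y e := by have := hypos e; positivity
    rw [Real.rpow_def_of_pos hq, mul_comm c]
    refine Real.exp_le_exp.2 (mul_le_mul_of_nonneg_right ?_ hc)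
    refine max_le ?_ ?_
    · apply Real.log_nonneg
      rw [le_div_iff₀ (hypos e)]
      linarith [hyR e]
    · have := hypos e
      apply Real.log_le_log (by positivity)
      gcongr
      linarith
  calc ∏ e, (y e ^ 2)⁻¹ ≤ ∏ e, ((η ^ 2)⁻¹ * Real.exp (2 * a e)) :=
        Finset.prod_le_prod (fun e _ => by positivity) (fun e _ => h1 e)
    _ = (∏ _e : E, (η ^ 2)⁻¹) * Real.exp (2 * ∑ e, a e) := by
        rw [Finset.prod_mul_distrib, Finset.mul_sum, Real.exp_sum]
    _ ≤ (∏ _e : E, (η ^ 2)⁻¹) * Real.exp (c * ∑ e ∈ B, a e) := by gcongr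
    _ = (∏ _e : E, (η ^ 2)⁻¹) * ∏ e ∈ B, Real.exp (c * a e) := by
        rw [Finset.mul_sum, Real.exp_sum]
    _ ≤ _ := by
        gcongr with e he
        exact h2 e

noncomputable def fpF (R c : ℝ) (z : Fin 4 → ℝ) : ℝ :=
  (Metric.ball (0 : Fin 4 → ℝ) R).indicator (fun z => (R / ‖z‖) ^ c) z

lemma fpF_integrable (R c : ℝ) (hR : 0 < R) (hc : c < 4) : Integrable (fpF R c) := by
  unfold fpF
  rw [integrable_indicator_iff measurableSet_ball]
  rw [integrableOn_fun_norm_addHaar volume (f := fun y => (R / y) ^ c)]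
  have h1 : IntegrableOn (fun y : ℝ => R ^ c * y ^ (3 - c)) (Set.Ioo 0 R) := by
    have := (intervalIntegral.intervalIntegrable_rpow' (a := 0) (b := R) (r := 3 - c) (by linarith))
    rw [intervalIntegrable_iff_integrableOn_Ioo_of_le hR.le] at this
    exact this.const_mul _
  refine h1.congr_fun ?_ measurableSet_Ioo
  intro y hy
  have hy0 : 0 < y := hy.1
  simp only [Module.finrank_fintype_fun_eq_card, Fintype.card_fin, smul_eq_mul]
  rw [Real.div_rpow hR.le hy0.le, Real.rpow_sub hy0]
  norm_num
  field_simp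

lemma fpF_nonneg (R c : ℝ) (hR : 0 < R) (z : Fin 4 → ℝ) : 0 ≤ fpF R c z := by
  unfold fpF
  apply Set.indicator_nonneg
  intro z _
  positivity

lemma fp_gB_integrable {E : Type} {n : ℕ} (l : E → Module.Dual ℝ (Fin n → ℝ)) (B : Finset E)
    (hB : B.card = n) (hB2 : fpRk l B = n) (F : (Fin 4 → ℝ) → ℝ) (hF : Integrable F) :
    Integrable (fun x : Fin 4 → Fin n → ℝ => ∏ e ∈ B, F (fun j => l e (x j))) := by
  let L : (Fin 4 → Fin n → ℝ) ≃L[ℝ] (B → Fin 4 → ℝ) :=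
    (LinearEquiv.ofInjectiveOfFinrankEq (fpY l B) (LinearMap.ker_eq_bot.1 (fpY_inj l B hB2))
      (by simp [Module.finrank_pi_fintype, hB, mul_comm])).toContinuousLinearEquiv
  have hL : ∀ x, L x = fpY l B x := fun x => rfl
  have h1 : Integrable (fun y : B → Fin 4 → ℝ => ∏ e, F (y e)) :=
    Integrable.fintype_prod (f := fun _ => F) fun _ => hF
  have h2 : Integrable (fun y : B → Fin 4 → ℝ => ∏ e, F (y e)) (Measure.map L volume) := by
    have i1 : (volume : Measure (Fin 4 → Fin n → ℝ)).IsAddHaarMeasure :=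
      Measure.instIsAddHaarMeasureForallVolumeOfMeasurableAddOfSigmaFinite
    have i2 : (volume : Measure (B → Fin 4 → ℝ)).IsAddHaarMeasure :=
      Measure.instIsAddHaarMeasureForallVolumeOfMeasurableAddOfSigmaFinite
    rw [Measure.isAddLeftInvariant_eq_smul (Measure.map L volume) (volume : Measure (B → Fin 4 → ℝ))]
    exact h1.smul_measure_nnreal
  have h3 := (L.toHomeomorph.measurableEmbedding.integrable_map_iff).1 h2
  refine h3.congr (Filter.Eventually.of_forall fun x => ?_)
  simp only [Function.comp]
  exact Finset.prod_coe_sort B (fun e => F (fun j => l e (x j)))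

lemma fp_conv {E : Type} [Fintype E] [DecidableEq E] {n : ℕ} (hn : 1 ≤ n)
    (hE : Fintype.card E = 2 * n)
    (l : E → Module.Dual ℝ (Fin n → ℝ)) (huniv : fpRk l Finset.univ = n)
    (hP : ∀ T : Finset E, T.Nonempty → T ≠ Finset.univ → T.card < 2 * fpRk l T) :
    (∫⁻ x in {x : Fin 4 → Fin n → ℝ | 1 ≤ ‖x‖ ∧ ‖x‖ ≤ 2},
        (∏ e : E, ENNReal.ofReal (∑ j : Fin 4, (l e (x j)) ^ 2))⁻¹) < ⊤ := by
  obtain ⟨C, R, hC, hR, hpt⟩ := fp_pointwise hn l huniv hP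
  have hl : ∀ e, l e ≠ 0 := by
    intro e he
    have h1 := hP {e} (by simp) (by
      intro h
      have := congrArg Finset.card h
      rw [Finset.card_univ, hE] at this
      simp at this; omega)
    have h2 : fpRk l {e} = 0 := by simp [fpRk, he]
    omega
  have hnull : ∀ e, ∀ᵐ x : Fin 4 → Fin n → ℝ, (fun j => l e (x j)) ≠ 0 := by
    intro e
    let S : Submodule ℝ (Fin 4 → Fin n → ℝ) :=
      LinearMap.ker (LinearMap.pi fun j => (l e) ∘ₗ LinearMap.proj j : (Fin 4 → Fin n → ℝ) →ₗ[ℝ] (Fin 4 → ℝ))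
    have hS : S ≠ ⊤ := by
      intro h
      apply hl e
      ext v
      have : (fun _ => LinearMap.single ℝ (fun _ => ℝ) v 1) ∈ S := h ▸ trivial
      exact congrFun (LinearMap.mem_ker.1 this) 0
    have := Measure.addHaar_submodule volume S hS
    rw [ae_iff]
    convert this using 2
    ext x
    simp only [not_not]
    exact (LinearMap.mem_ker (f := (LinearMap.pi fun j => (l e) ∘ₗ LinearMap.proj j : (Fin 4 → Fin n → ℝ) →ₗ[ℝ] (Fin 4 → ℝ)))).symm
  set c : ℝ := 4 - 2 / n
  have hc : c < 4 := by
    have : (0:ℝ) < 2 / n := by positivity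
    simp only [c]; linarith
  set 𝓑 : Finset (Finset E) := Finset.univ.filter fun B => B.card = n ∧ fpRk l B = n with h𝓑
  set g : (Fin 4 → Fin n → ℝ) → ℝ := fun x => ∑ B ∈ 𝓑, C * ∏ e ∈ B, fpF R c (fun j => l e (x j)) with hg
  have hgint : Integrable g := by
    apply integrable_finsetSum
    intro B hB
    simp only [h𝓑, Finset.mem_filter, Finset.mem_univ, true_and] at hB
    exact (fp_gB_integrable l B hB.1 hB.2 _ (fpF_integrable R c hR hc)).const_mul _
  refine lt_of_le_of_lt ?_ (hgint.integrableOn (s := {x | 1 ≤ ‖x‖ ∧ ‖x‖ ≤ 2})).lintegral_lt_top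
  have hmeas : MeasurableSet {x : Fin 4 → Fin n → ℝ | 1 ≤ ‖x‖ ∧ ‖x‖ ≤ 2} := by
    apply MeasurableSet.inter
    · exact measurableSet_le measurable_const measurable_norm
    · exact measurableSet_le measurable_norm measurable_const
  apply lintegral_mono_ae
  filter_upwards [ae_restrict_mem hmeas, ae_restrict_of_ae (ae_all_iff.2 hnull)] with x hx hx0
  obtain ⟨hyR, B, hB1, hB2, hB3⟩ := hpt x hx.1 hx.2 hx0
  have hypos : ∀ e, 0 < ‖fun j => l e (x j)‖ := fun e => norm_pos_iff.2 (hx0 e)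
  have hq : ∀ e, ‖fun j => l e (x j)‖ ^ 2 ≤ ∑ j : Fin 4, (l e (x j)) ^ 2 := by
    intro e
    rw [← Real.le_sqrt (norm_nonneg _) (by positivity)]
    rw [pi_norm_le_iff_of_nonneg (Real.sqrt_nonneg _)]
    intro j
    apply Real.le_sqrt_of_sq_le
    rw [Real.norm_eq_abs, sq_abs]
    exact Finset.single_le_sum (f := fun j => (l e (x j)) ^ 2) (fun i _ => sq_nonneg _) (Finset.mem_univ j)
  have hq0 : ∀ e, 0 < ∑ j : Fin 4, (l e (x j)) ^ 2 := fun e =>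
    lt_of_lt_of_le (by have := hypos e; positivity) (hq e)
  rw [← ENNReal.ofReal_prod_of_nonneg (fun e _ => (hq0 e).le),
    ← ENNReal.ofReal_inv_of_pos (Finset.prod_pos fun e _ => hq0 e)]
  apply ENNReal.ofReal_le_ofReal
  rw [← Finset.prod_inv_distrib]
  calc _ ≤ ∏ e, (‖fun j => l e (x j)‖ ^ 2)⁻¹ := by
        refine Finset.prod_le_prod (fun e _ => inv_nonneg.2 (hq0 e).le) fun e _ => ?_
        have := hypos e
        exact inv_anti₀ (by positivity) (hq e)
    _ ≤ _ := hB3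
    _ = C * ∏ e ∈ B, fpF R c (fun j => l e (x j)) := by
        congr 1
        refine Finset.prod_congr rfl fun e _ => ?_
        rw [fpF, Set.indicator_of_mem]
        simpa using hyR e
    _ ≤ g x := by
        refine Finset.single_le_sum (f := fun B => C * ∏ e ∈ B, fpF R c (fun j => l e (x j))) (fun B _ => ?_) ?_
        · exact mul_nonneg hC.le (Finset.prod_nonneg fun e _ => fpF_nonneg R c hR _)
        · simp [h𝓑, hB1, hB2]

lemma fp_split {E : Type} {n : ℕ} (l : E → Module.Dual ℝ (Fin n → ℝ)) (T : Finset E)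
    (hT : fpRk l T < n) : ∃ h : ℕ, 0 < h ∧
      ∃ Ψ : ((Fin h → ℝ) × (Fin (fpRk l T) → ℝ)) ≃ₗ[ℝ] (Fin n → ℝ),
        ∀ e ∈ T, ∀ p, l e (Ψ (p, 0)) = 0 := by
  set W := Submodule.span ℝ (l '' (T : Set E)) with hW
  set L := W.dualCoannihilator with hL
  have hfin : Module.finrank ℝ W + Module.finrank ℝ L = n := by
    have := Subspace.finrank_add_finrank_dualCoannihilator_eq W
    rw [Module.finrank_fin_fun] at this
    exact this
  obtain ⟨C, hC⟩ := Submodule.exists_isCompl L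
  have hr : Module.finrank ℝ W = fpRk l T := rfl
  have hCfin : Module.finrank ℝ C = fpRk l T := by
    have := Submodule.finrank_add_eq_of_isCompl hC
    simp at this
    omega
  let e1 : (Fin (Module.finrank ℝ L) → ℝ) ≃ₗ[ℝ] L := LinearEquiv.ofFinrankEq _ _ (by simp)
  let e2 : (Fin (fpRk l T) → ℝ) ≃ₗ[ℝ] C := LinearEquiv.ofFinrankEq _ _ (by simp [hCfin])
  refine ⟨Module.finrank ℝ L, by omega, 
    (LinearEquiv.prodCongr e1 e2).trans (Submodule.prodEquivOfIsCompl L C hC), ?_⟩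
  intro e he p
  have h1 : ((LinearEquiv.prodCongr e1 e2).trans (Submodule.prodEquivOfIsCompl L C hC)) (p, 0)
    = (e1 p : Fin n → ℝ) := by simp
  rw [h1]
  exact (Submodule.mem_dualCoannihilator _).1 (e1 p).2 (l e) (Submodule.subset_span ⟨e, he, rfl⟩)

def fpPsi {h r n : ℕ} (Ψ : ((Fin h → ℝ) × (Fin r → ℝ)) ≃ₗ[ℝ] (Fin n → ℝ)) :
    ((Fin 4 → Fin h → ℝ) × (Fin 4 → Fin r → ℝ)) ≃ₗ[ℝ] (Fin 4 → Fin n → ℝ) where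
  toFun z := fun j => Ψ (z.1 j, z.2 j)
  invFun x := (fun j => (Ψ.symm (x j)).1, fun j => (Ψ.symm (x j)).2)
  map_add' z w := by
    funext j
    rw [Pi.add_apply, ← map_add]; rfl
  map_smul' c z := by
    funext j
    rw [RingHom.id_apply, Pi.smul_apply, ← map_smul]; rfl
  left_inv z := by simp
  right_inv x := by simp

lemma fp_q_le {v : Fin 4 → ℝ} {b : ℝ} (h : ‖v‖ ≤ b) : ∑ j, (v j) ^ 2 ≤ 4 * b ^ 2 := by
  have : ∀ j, (v j) ^ 2 ≤ b ^ 2 := by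
    intro j
    have h1 := (norm_le_pi_norm v j).trans h
    rw [Real.norm_eq_abs] at h1
    rw [← sq_abs]
    gcongr
  calc ∑ j, (v j) ^ 2 ≤ ∑ _j : Fin 4, b ^ 2 := Finset.sum_le_sum fun j _ => this j
    _ = _ := by simp

lemma fp_div {E : Type} [Fintype E] [DecidableEq E] {n : ℕ} (hn : 1 ≤ n)
    (l : E → Module.Dual ℝ (Fin n → ℝ)) (T : Finset E) (hT0 : T.Nonempty)
    (hTn : fpRk l T < n) (hT : 2 * fpRk l T ≤ T.card) :
    (∫⁻ x in {x : Fin 4 → Fin n → ℝ | 1 ≤ ‖x‖ ∧ ‖x‖ ≤ 2},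
        (∏ e : E, ENNReal.ofReal (∑ j : Fin 4, (l e (x j)) ^ 2))⁻¹) = ⊤ := by
  have : NeZero n := ⟨by omega⟩
  set A := {x : Fin 4 → Fin n → ℝ | 1 ≤ ‖x‖ ∧ ‖x‖ ≤ 2} with hA
  have hopen : IsOpen {x : Fin 4 → Fin n → ℝ | 1 < ‖x‖ ∧ ‖x‖ < 2} :=
    (isOpen_lt continuous_const continuous_norm).inter (isOpen_lt continuous_norm continuous_const)
  have hsubA : {x : Fin 4 → Fin n → ℝ | 1 < ‖x‖ ∧ ‖x‖ < 2} ⊆ A :=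
    fun x hx => ⟨hx.1.le, hx.2.le⟩
  rcases Nat.eq_zero_or_pos (fpRk l T) with hr | hr
  · have hl : ∀ e ∈ T, l e = 0 := by
      intro e he
      have : Submodule.span ℝ (l '' (T : Set E)) = ⊥ := Submodule.finrank_eq_zero.1 hr
      rw [Submodule.span_eq_bot] at this
      exact this _ ⟨e, he, rfl⟩
    obtain ⟨e, he⟩ := hT0
    have : ∀ x : Fin 4 → Fin n → ℝ,
        (∏ e : E, ENNReal.ofReal (∑ j : Fin 4, (l e (x j)) ^ 2))⁻¹ = ⊤ := by
      intro x
      rw [ENNReal.inv_eq_top, Finset.prod_eq_zero_iff]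
      exact ⟨e, Finset.mem_univ e, by simp [hl e he]⟩
    simp only [this]
    rw [setLIntegral_const, ENNReal.top_mul]
    refine ne_of_gt (lt_of_lt_of_le ?_ (measure_mono hsubA))
    refine hopen.measure_pos volume ⟨fun _ _ => 3 / 2, ?_⟩
    have : ‖(fun _ _ => 3 / 2 : Fin 4 → Fin n → ℝ)‖ = 3 / 2 := by
      rw [show (fun _ _ => 3 / 2 : Fin 4 → Fin n → ℝ) = fun _ => (fun _ => 3 / 2 : Fin n → ℝ) from rfl,
        pi_norm_const, pi_norm_const]; norm_num
    show 1 < ‖_‖ ∧ ‖_‖ < 2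
    rw [this]; norm_num
  · by_contra hfin
    obtain ⟨h, hh, hex⟩ := fp_split l T hTn
    have : NeZero h := ⟨by omega⟩
    set r := fpRk l T with hrdef
    obtain ⟨Ψ0, hΨ0⟩ := hex
    let Ψ : ((Fin 4 → Fin h → ℝ) × (Fin 4 → Fin r → ℝ)) ≃L[ℝ] (Fin 4 → Fin n → ℝ) :=
      (fpPsi Ψ0).toContinuousLinearEquiv
    have hΨ : ∀ z j, Ψ z j = Ψ0 (z.1 j, z.2 j) := fun z j => rfl
    obtain ⟨p0, hp0⟩ : ∃ p0, ‖Ψ (p0, 0)‖ = 3 / 2 := by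
      have hne : Ψ ((fun _ _ => 1), 0) ≠ 0 := by
        rw [Ne, map_eq_zero_iff _ Ψ.injective]
        intro h0
        have := congrFun (congrFun (congrArg Prod.fst h0) 0) 0
        simp at this
      have hpos := norm_pos_iff.2 hne
      refine ⟨(3 / 2 / ‖Ψ ((fun _ _ => 1), 0)‖) • (fun _ _ => 1), ?_⟩
      have : (((3 / 2 / ‖Ψ ((fun _ _ => 1), 0)‖) • (fun _ _ => 1), 0) :
          (Fin 4 → Fin h → ℝ) × (Fin 4 → Fin r → ℝ)) =
          (3 / 2 / ‖Ψ ((fun _ _ => 1), 0)‖) • ((fun _ _ => 1), 0) := by simp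
      rw [this, map_smul, norm_smul, Real.norm_of_nonneg (by positivity)]
      field_simp
    obtain ⟨ε, hε, hεs⟩ : ∃ ε > 0, Metric.closedBall p0 ε ×ˢ Metric.closedBall 0 ε ⊆ Ψ ⁻¹' A := by
      have h1 := hopen.preimage Ψ.continuous
      have h2 : (p0, 0) ∈ Ψ ⁻¹' {x : Fin 4 → Fin n → ℝ | 1 < ‖x‖ ∧ ‖x‖ < 2} := by
        show 1 < ‖_‖ ∧ ‖_‖ < 2
        rw [hp0]; norm_num
      obtain ⟨ε, hε, h3⟩ := Metric.nhds_basis_closedBall.mem_iff.1 (h1.mem_nhds h2)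
      refine ⟨ε, hε, ?_⟩
      rw [closedBall_prod_same]
      exact h3.trans (Set.preimage_mono hsubA)
    let V : ℝ → Set (Fin 4 → Fin n → ℝ) := fun s =>
      Ψ.symm ⁻¹' (Metric.closedBall p0 ε ×ˢ Metric.closedBall 0 s)
    have i1 : (volume : Measure (Fin 4 → Fin n → ℝ)).IsAddHaarMeasure :=
      Measure.instIsAddHaarMeasureForallVolumeOfMeasurableAddOfSigmaFinite
    have i2 : (volume : Measure (Fin 4 → Fin h → ℝ)).IsAddHaarMeasure :=
      Measure.instIsAddHaarMeasureForallVolumeOfMeasurableAddOfSigmaFinite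
    have i3 : (volume : Measure (Fin 4 → Fin r → ℝ)).IsAddHaarMeasure :=
      Measure.instIsAddHaarMeasureForallVolumeOfMeasurableAddOfSigmaFinite
    have i4 : ((volume : Measure (Fin 4 → Fin h → ℝ)).prod 
      (volume : Measure (Fin 4 → Fin r → ℝ))).IsAddHaarMeasure :=
      Measure.prod.instIsAddHaarMeasure _ _
    -- volume of V s
    obtain ⟨κ, hκ0, hκt, hκ⟩ : ∃ κ : ENNReal, κ ≠ 0 ∧ κ ≠ ⊤ ∧
        ∀ s : ℝ, 0 ≤ s → volume (V s) = κ * ENNReal.ofReal (s ^ (4 * r)) := by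
      have hmap := Measure.isAddLeftInvariant_eq_smul (Measure.map Ψ.symm volume)
        ((volume : Measure (Fin 4 → Fin h → ℝ)).prod (volume : Measure (Fin 4 → Fin r → ℝ)))
      set k := Measure.addHaarScalarFactor (Measure.map Ψ.symm volume)
        ((volume : Measure (Fin 4 → Fin h → ℝ)).prod (volume : Measure (Fin 4 → Fin r → ℝ))) with hk
      have hkpos : 0 < k := Measure.addHaarScalarFactor_pos_of_isAddHaarMeasure _ _
      refine ⟨(k : ENNReal) * (volume (Metric.closedBall p0 ε) *
        volume (Metric.ball (0 : Fin 4 → Fin r → ℝ) 1)), ?_, ?_, ?_⟩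
      · refine mul_ne_zero (by simpa using hkpos.ne') (mul_ne_zero ?_ ?_)
        · exact (Metric.measure_closedBall_pos _ _ hε).ne'
        · exact (Metric.measure_ball_pos _ _ one_pos).ne'
      · refine ENNReal.mul_ne_top ENNReal.coe_ne_top (ENNReal.mul_ne_top ?_ ?_)
        · exact measure_closedBall_lt_top.ne
        · exact measure_ball_lt_top.ne
      · intro s hs
        have h1 : volume (V s) = Measure.map Ψ.symm volume
            (Metric.closedBall p0 ε ×ˢ Metric.closedBall 0 s) :=
          (Ψ.symm.toHomeomorph.measurableEmbedding.map_apply _ _).symm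
        rw [h1, hmap, Measure.smul_apply, Measure.prod_prod,
          Measure.addHaar_closedBall volume (0 : Fin 4 → Fin r → ℝ) hs]
        have h2 : Module.finrank ℝ (Fin 4 → Fin r → ℝ) = 4 * r := by
          simp [Module.finrank_pi_fintype]
        rw [h2, ENNReal.smul_def, smul_eq_mul]
        ring
    have hVA : ∀ s, s ≤ ε → V s ⊆ A := by
      intro s hs x hx
      have : Ψ.symm x ∈ Metric.closedBall p0 ε ×ˢ Metric.closedBall 0 ε :=
        ⟨hx.1, Metric.closedBall_subset_closedBall hs hx.2⟩
      have := hεs this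
      simpa using this
    have hVm : ∀ s, MeasurableSet (V s) := by
      intro s
      exact Ψ.symm.continuous.measurable
        (Metric.isClosed_closedBall.measurableSet.prod Metric.isClosed_closedBall.measurableSet)
    -- upper bound of the quadrics
    obtain ⟨M, hM, hM2⟩ := fp_upper l
    obtain ⟨N, hN, hN2⟩ := Ψ.toContinuousLinearMap.isBoundedLinearMap.bound
    set D0 : ℝ := 1 + 4 * (M * 2) ^ 2 + 4 * (M * N) ^ 2 with hD0
    have hD0pos : 0 < D0 := by positivity
    set D : ℝ := D0 ^ Fintype.card E with hD
    have hDpos : 0 < D := by positivity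
    have hq : ∀ s, 0 < s → s ≤ ε → s ≤ 1 → ∀ x ∈ V s,
        (ENNReal.ofReal (D * s ^ (4 * r)))⁻¹ ≤
          (∏ e : E, ENNReal.ofReal (∑ j : Fin 4, (l e (x j)) ^ 2))⁻¹ := by
      intro s hs0 hsε hs1 x hx
      rw [ENNReal.inv_le_inv, ← ENNReal.ofReal_prod_of_nonneg (fun e _ => by positivity)]
      apply ENNReal.ofReal_le_ofReal
      have hb : ∀ e, ∑ j : Fin 4, (l e (x j)) ^ 2 ≤ D0 * (if e ∈ T then s ^ 2 else 1) := by
        intro e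
        split_ifs with he
        · have h1 : (fun j => l e (x j)) = fun j => l e (Ψ (0, (Ψ.symm x).2) j) := by
            funext j
            have h2 : x j = Ψ0 ((Ψ.symm x).1 j, 0) + Ψ0 (0, (Ψ.symm x).2 j) := by
              rw [← map_add]
              conv_lhs => rw [← Ψ.apply_symm_apply x, hΨ]
              simp
            rw [h2, map_add, hΨ0 e he, zero_add, hΨ]; rfl
          have h3 : ‖fun j => l e (x j)‖ ≤ M * N * s := by
            rw [h1]
            refine (hM2 e _).trans ?_
            rw [mul_assoc]
            gcongr
            refine (hN2 _).trans ?_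
            gcongr
            have h4 : ‖(Ψ.symm x).2‖ ≤ s := by simpa using hx.2
            rw [Prod.norm_def]
            simpa using h4
          refine (fp_q_le h3).trans ?_
          have : 0 ≤ 1 + 4 * (M * 2) ^ 2 := by positivity
          have h5 : 0 ≤ s ^ 2 := by positivity
          rw [hD0]
          nlinarith
        · have h3 : ‖fun j => l e (x j)‖ ≤ M * 2 := by
            refine (hM2 e _).trans ?_
            gcongr
            exact (hVA s hsε hx).2
          refine (fp_q_le h3).trans ?_
          have : 0 ≤ 4 * (M * N) ^ 2 := by positivity
          rw [hD0]
          linarith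
      calc _ ≤ ∏ e : E, D0 * (if e ∈ T then s ^ 2 else 1) :=
            Finset.prod_le_prod (fun e _ => by positivity) fun e _ => hb e
        _ = D * s ^ (2 * T.card) := by
            rw [Finset.prod_mul_distrib, Finset.prod_ite_mem]
            simp [hD, pow_mul]
        _ ≤ _ := by
            gcongr 1
            exact pow_le_pow_of_le_one hs0.le hs1 (by omega)
    have htend : Filter.Tendsto (volume ∘ V) (nhdsWithin 0 (Set.Ioi 0)) (nhds 0) := by
      have h1 : Filter.Tendsto (fun s : ℝ => κ * ENNReal.ofReal (s ^ (4 * r)))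
          (nhdsWithin 0 (Set.Ioi 0)) (nhds (κ * 0)) := by
        refine ENNReal.Tendsto.const_mul ?_ (Or.inr hκt)
        have h2 : Continuous fun s : ℝ => ENNReal.ofReal (s ^ (4 * r)) :=
          ENNReal.continuous_ofReal.comp (continuous_pow _)
        have h3 := h2.tendsto 0
        rw [zero_pow (by omega), ENNReal.ofReal_zero] at h3
        exact h3.mono_left nhdsWithin_le_nhds
      rw [mul_zero] at h1
      refine h1.congr' ?_
      filter_upwards [self_mem_nhdsWithin] with s hs
      exact (hκ s (le_of_lt hs)).symm
    have htend' : Filter.Tendsto ((volume.restrict A) ∘ V) (nhdsWithin 0 (Set.Ioi 0)) (nhds 0) :=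
      tendsto_of_tendsto_of_tendsto_of_le_of_le tendsto_const_nhds htend (fun _ => zero_le)
        (fun s => Measure.restrict_apply_le _ _)
    have hlim := tendsto_setLIntegral_zero hfin htend'
    have hlow : κ * (ENNReal.ofReal D)⁻¹ ≤ 0 := by
      refine ge_of_tendsto hlim ?_
      have hmem : Set.Ioc 0 (min ε 1) ∈ nhdsWithin (0:ℝ) (Set.Ioi 0) :=
        Ioc_mem_nhdsGT (by positivity)
      filter_upwards [hmem] with s hs
      have hs1 := hs.2.trans (min_le_left _ _)
      have hs2 := hs.2.trans (min_le_right _ _)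
      rw [Measure.restrict_restrict_of_subset (hVA s hs1)]
      calc κ * (ENNReal.ofReal D)⁻¹ = (ENNReal.ofReal (D * s ^ (4 * r)))⁻¹ * volume (V s) := by
            rw [hκ s hs.1.le, ENNReal.ofReal_mul hDpos.le]
            have hs3 : 0 < s ^ (4 * r) := pow_pos hs.1 _
            have h0 : ENNReal.ofReal (s ^ (4 * r)) ≠ 0 := by simpa using hs3
            rw [ENNReal.mul_inv (Or.inr ENNReal.ofReal_ne_top) (Or.inr h0)]
            rw [mul_comm κ (ENNReal.ofReal (s ^ (4 * r))), mul_assoc, ← mul_assoc _ _ κ,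
              ENNReal.inv_mul_cancel h0 ENNReal.ofReal_ne_top, one_mul, mul_comm]
        _ = ∫⁻ _x in V s, (ENNReal.ofReal (D * s ^ (4 * r)))⁻¹ := by rw [setLIntegral_const]
        _ ≤ _ := setLIntegral_mono' (hVm s) (hq s hs.1 hs1 hs2)
    have hne : κ * (ENNReal.ofReal D)⁻¹ ≠ 0 :=
      mul_ne_zero hκ0 (ENNReal.inv_ne_zero.2 ENNReal.ofReal_ne_top)
    exact hne (le_antisymm hlow zero_le)

lemma fp_span_baseChange {ι m : Type} [Finite ι] [Finite m] (v : ι → m → ℚ) :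
    Module.finrank ℝ (Submodule.span ℝ (Set.range fun i => (algebraMap ℚ ℝ) ∘ v i)) =
      Module.finrank ℚ (Submodule.span ℚ (Set.range v)) := by
  obtain ⟨κ, a, ha, hsp, hli⟩ := exists_linearIndependent' ℚ v
  have : Finite κ := Finite.of_injective a ha
  have := Fintype.ofFinite κ
  have hli' : LinearIndependent ℝ (fun k => (algebraMap ℚ ℝ) ∘ (v ∘ a) k) :=
    linearIndependent_algebraMap_comp_iff.2 hli
  have hsp' : Submodule.span ℝ (Set.range fun i => (algebraMap ℚ ℝ) ∘ v i) =
      Submodule.span ℝ (Set.range fun k => (algebraMap ℚ ℝ) ∘ (v ∘ a) k) := by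
    apply le_antisymm
    · rw [Submodule.span_le]
      rintro _ ⟨i, rfl⟩
      have hi : v i ∈ Submodule.span ℚ (Set.range (v ∘ a)) := by
        rw [hsp]; exact Submodule.subset_span ⟨i, rfl⟩
      show (algebraMap ℚ ℝ) ∘ v i ∈ Submodule.span ℝ (Set.range fun k => (algebraMap ℚ ℝ) ∘ (v ∘ a) k)
      generalize v i = w at hi
      induction hi using Submodule.span_induction with
      | mem w hw =>
        obtain ⟨k, rfl⟩ := hw
        exact Submodule.subset_span ⟨k, rfl⟩
      | zero =>
        have h0 : (algebraMap ℚ ℝ) ∘ (0 : m → ℚ) = 0 := by ext; simp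
        rw [h0]; exact Submodule.zero_mem _
      | add x y _ _ hx hy =>
        have h0 : (algebraMap ℚ ℝ) ∘ (x + y) =
            (algebraMap ℚ ℝ) ∘ x + (algebraMap ℚ ℝ) ∘ y := by ext; simp
        rw [h0]; exact Submodule.add_mem _ hx hy
      | smul c x _ hx =>
        have h0 : (algebraMap ℚ ℝ) ∘ (c • x) = (c : ℝ) • ((algebraMap ℚ ℝ) ∘ x) := by
          ext; simp
        rw [h0]; exact Submodule.smul_mem _ (c : ℝ) hx
    · apply Submodule.span_mono
      rintro _ ⟨k, rfl⟩
      exact ⟨a k, rfl⟩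
  rw [hsp', finrank_span_eq_card hli', ← hsp, finrank_span_eq_card hli]

lemma fp_ker_baseChange {m ι : Type} [Finite m] [Fintype ι] (A : Matrix m ι ℚ) :
    Module.finrank ℝ (LinearMap.ker (A.map (algebraMap ℚ ℝ)).mulVecLin) =
      Module.finrank ℚ (LinearMap.ker A.mulVecLin) := by
  have h1 := LinearMap.finrank_range_add_finrank_ker A.mulVecLin
  have h2 := LinearMap.finrank_range_add_finrank_ker (A.map (algebraMap ℚ ℝ)).mulVecLin
  have h3 : (A.map (algebraMap ℚ ℝ)).rank = A.rank := by
    rw [Matrix.rank_eq_finrank_span_cols, Matrix.rank_eq_finrank_span_cols]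
    exact fp_span_baseChange A.col
  unfold Matrix.rank at h3
  simp only [Module.finrank_fintype_fun_eq_card] at h1 h2
  omega

noncomputable def fpStack (R : Type) [Field R] (G : SimpleGraph V) [Fintype G.edgeSet]
    (S : Set (Sym2 V)) : Matrix (V ⊕ G.edgeSet) G.edgeSet R := by
  classical
  exact Matrix.of fun i e => Sum.elim (fun v => incSign R v e.1)
    (fun e' => if e' = e ∧ (e : Sym2 V) ∉ S then 1 else 0) i

lemma fpStack_ker (R : Type) [Field R] (G : SimpleGraph V) [Fintype G.edgeSet]
    (S : Set (Sym2 V)) : LinearMap.ker (fpStack R G S).mulVecLin =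
      LinearMap.ker (boundary R G) ⊓ supportedIn R G S := by
  classical
  ext f
  rw [Submodule.mem_inf, LinearMap.mem_ker, LinearMap.mem_ker]
  constructor
  · intro h
    refine ⟨?_, ?_⟩
    · funext v
      exact congrFun h (Sum.inl v)
    · intro e he
      have := congrFun h (Sum.inr e)
      simpa [fpStack, Matrix.mulVec, dotProduct, ite_and, he] using this
  · rintro ⟨h1, h2⟩
    funext i
    rcases i with v | e
    · exact congrFun h1 v
    · by_cases he : (e : Sym2 V) ∈ S
      · simp [fpStack, Matrix.mulVec, dotProduct, ite_and, he]
      · have := h2 e he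
        simp [fpStack, Matrix.mulVec, dotProduct, ite_and, he, this]

lemma fp_h1S_real (G : SimpleGraph V) [Fintype G.edgeSet] (S : Set (Sym2 V)) :
    Module.finrank ℝ ↥(LinearMap.ker (boundary ℝ G) ⊓ supportedIn ℝ G S) = h1S G S := by
  classical
  unfold h1S
  rw [← fpStack_ker, ← fpStack_ker, ← fp_ker_baseChange]
  have : (fpStack ℚ G S).map (algebraMap ℚ ℝ) = fpStack ℝ G S := by
    ext i e
    rcases i with v | e'
    · simp only [fpStack, incSign, Matrix.map_apply, Matrix.of_apply, Sum.elim_inl]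
      split_ifs <;> simp
    · simp only [fpStack, Matrix.map_apply, Matrix.of_apply, Sum.elim_inr]
      split_ifs <;> simp
  rw [this]

noncomputable def fpL (G : SimpleGraph V) [Fintype G.edgeSet] {n : ℕ}
    (φ : (Fin n → ℝ) ≃ₗ[ℝ] ↥(LinearMap.ker (boundary ℝ G))) (e : G.edgeSet) :
    Module.Dual ℝ (Fin n → ℝ) :=
  LinearMap.proj e ∘ₗ (LinearMap.ker (boundary ℝ G)).subtype ∘ₗ φ.toLinearMap

lemma fpL_rk (G : SimpleGraph V) [Fintype G.edgeSet] {n : ℕ}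
    (φ : (Fin n → ℝ) ≃ₗ[ℝ] ↥(LinearMap.ker (boundary ℝ G))) (T : Finset G.edgeSet)
    (S : Set (Sym2 V)) (hTS : ∀ e : G.edgeSet, (e : Sym2 V) ∉ S ↔ e ∈ T) :
    fpRk (fpL G φ) T + h1S G S = n := by
  set W := Submodule.span ℝ (fpL G φ '' (T : Set G.edgeSet)) with hW
  have hfin := Subspace.finrank_add_finrank_dualCoannihilator_eq W
  rw [Module.finrank_fin_fun] at hfin
  have hmem : ∀ x, x ∈ W.dualCoannihilator ↔ ∀ e ∈ T, (φ x : G.edgeSet → ℝ) e = 0 := by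
    intro x
    rw [Submodule.mem_dualCoannihilator]
    constructor
    · intro h e he
      exact h (fpL G φ e) (Submodule.subset_span ⟨e, he, rfl⟩)
    · intro h f hf
      induction hf using Submodule.span_induction with
      | mem f hf =>
        obtain ⟨e, he, rfl⟩ := hf
        exact h e he
      | zero => rfl
      | add f g _ _ hf hg => simp [hf, hg]
      | smul c f _ hf => simp [hf]
  let ψ : (Fin n → ℝ) →ₗ[ℝ] (G.edgeSet → ℝ) :=
    (LinearMap.ker (boundary ℝ G)).subtype ∘ₗ φ.toLinearMap
  have hψ : Function.Injective ψ := Subtype.val_injective.comp φ.injective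
  have hmap : W.dualCoannihilator.map ψ = LinearMap.ker (boundary ℝ G) ⊓ supportedIn ℝ G S := by
    ext f
    rw [Submodule.mem_map, Submodule.mem_inf]
    constructor
    · rintro ⟨x, hx, rfl⟩
      refine ⟨(φ x).2, fun e he => ?_⟩
      exact (hmem x).1 hx e ((hTS e).1 he)
    · rintro ⟨h1, h2⟩
      refine ⟨φ.symm ⟨f, h1⟩, (hmem _).2 fun e he => ?_, ?_⟩
      · rw [LinearEquiv.apply_symm_apply]
        exact h2 e ((hTS e).2 he)
      · show ((φ (φ.symm ⟨f, h1⟩) : LinearMap.ker (boundary ℝ G)) : G.edgeSet → ℝ) = f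
        rw [LinearEquiv.apply_symm_apply]
  have h3 : Module.finrank ℝ (W.dualCoannihilator.map ψ) = Module.finrank ℝ W.dualCoannihilator :=
    (Submodule.equivMapOfInjective ψ hψ _).finrank_eq.symm
  rw [hmap, fp_h1S_real] at h3
  rw [h3]
  exact hfin

lemma fp_card (G : SimpleGraph V) [Fintype G.edgeSet] (T : Finset G.edgeSet)
    (S : Set (Sym2 V)) (hS : S ⊆ G.edgeSet) (hTS : ∀ e : G.edgeSet, (e : Sym2 V) ∉ S ↔ e ∈ T) :
    T.card + S.toFinite.toFinset.card = Fintype.card G.edgeSet := by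
  classical
  have : S.toFinite.toFinset = Tᶜ.map (Function.Embedding.subtype _) := by
    ext e
    simp only [Set.Finite.mem_toFinset, Finset.mem_map, Finset.mem_compl,
      Function.Embedding.coe_subtype]
    constructor
    · intro he
      exact ⟨⟨e, hS he⟩, fun h => (hTS ⟨e, hS he⟩).2 h he, rfl⟩
    · rintro ⟨e, he, rfl⟩
      by_contra h
      exact he ((hTS e).1 h)
  rw [this, Finset.card_map, Finset.card_add_card_compl]

/-- **Convergence of the Feynman period iff the graph is primitive log divergent**
(Proposition 4.2 of Bloch–Esnault–Kreimer).  Let `G` be a finite connected simple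
graph with `n = h_1(G) ≥ 1` loops and `2n` edges, let `φ : ℝ^n ≅ ker ∂_ℝ` be a
linear isomorphism, `ℓ_e` the composite of `φ` with the `e`-th coordinate, and
`q_e(x) := ∑_{j=1}^4 ℓ_e(x⁽ʲ⁾)²` the Feynman quadrics of `G` on `ℝ^{4n}`.  Then
`∫⁻_{1 ≤ ‖x‖ ≤ 2} (∏_e q_e(x))⁻¹ dx < ∞` if and only if every nonempty proper
subset `S ⊊ E` satisfies `#S > 2·h_1(S)`. -/
theorem feynman_period_converges_iff_primitive_log_divergent
    (G : SimpleGraph V) [Fintype G.edgeSet] (hG : G.Connected)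
    (n : ℕ) (hn : 1 ≤ n)
    (hloops : Module.finrank ℚ ↥(LinearMap.ker (boundary ℚ G)) = n)
    (hedges : Fintype.card G.edgeSet = 2 * n)
    (φ : (Fin n → ℝ) ≃ₗ[ℝ] ↥(LinearMap.ker (boundary ℝ G))) :
    (∫⁻ x in {x : Fin 4 → Fin n → ℝ | 1 ≤ ‖x‖ ∧ ‖x‖ ≤ 2},
        (∏ e : G.edgeSet,
          ENNReal.ofReal (∑ j : Fin 4, ((φ (x j) : G.edgeSet → ℝ) e) ^ 2))⁻¹) < ⊤
      ↔ ∀ S : Set (Sym2 V), S ⊆ G.edgeSet → S.Nonempty → S ≠ G.edgeSet →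
          2 * h1S G S < S.toFinite.toFinset.card := by
  classical
  show (∫⁻ x in {x : Fin 4 → Fin n → ℝ | 1 ≤ ‖x‖ ∧ ‖x‖ ≤ 2},
        (∏ e : G.edgeSet, ENNReal.ofReal (∑ j : Fin 4, (fpL G φ e (x j)) ^ 2))⁻¹) < ⊤ ↔ _
  constructor
  · intro hfin S hS hS0 hSE
    by_contra hlt
    set T : Finset G.edgeSet := Finset.univ.filter fun e => (e : Sym2 V) ∉ S with hT
    have hTS : ∀ e : G.edgeSet, (e : Sym2 V) ∉ S ↔ e ∈ T := by intro e; simp [hT]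
    have h1 := fpL_rk G φ T S hTS
    have h2 := fp_card G T S hS hTS
    have h3 : 0 < S.toFinite.toFinset.card := by
      rw [Finset.card_pos]
      simpa using hS0
    have hT0 : T.Nonempty := by
      by_contra h
      rw [Finset.not_nonempty_iff_eq_empty] at h
      refine hSE (Set.Subset.antisymm hS fun e he => ?_)
      by_contra heS
      have := (hTS ⟨e, he⟩).1 heS
      rw [h] at this
      simp at this
    exact hfin.ne (fp_div hn (fpL G φ) T hT0 (by omega) (by omega))
  · intro h
    have huniv : fpRk (fpL G φ) Finset.univ = n := by
      have h1 := fpL_rk G φ Finset.univ ∅ (by simp)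
      have h2 : h1S G (∅ : Set (Sym2 V)) = 0 := by
        unfold h1S
        have : supportedIn ℚ G ∅ = ⊥ := by
          rw [eq_bot_iff]
          intro f hf
          rw [Submodule.mem_bot]
          funext e
          exact hf e (by simp)
        rw [this]
        simp
      omega
    refine fp_conv hn hedges (fpL G φ) huniv fun T hT0 hTu => ?_
    set S : Set (Sym2 V) := Subtype.val '' {e : G.edgeSet | e ∉ T} with hSdef
    have hTS : ∀ e : G.edgeSet, (e : Sym2 V) ∉ S ↔ e ∈ T := by
      intro e
      simp [hSdef]
    have hS : S ⊆ G.edgeSet := by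
      rintro _ ⟨e, _, rfl⟩
      exact e.2
    have h1 := fpL_rk G φ T S hTS
    have h2 := fp_card G T S hS hTS
    have h3 := h S hS ?_ ?_
    · omega
    · by_contra hne
      rw [Set.not_nonempty_iff_eq_empty] at hne
      apply hTu
      ext e
      simp [← hTS e, hne]
    · intro hSE
      obtain ⟨e, he⟩ := hT0
      exact (hTS e).2 he (by rw [hSE]; exact e.2)
end

section
/- Let R be a commutative ring, n ≥ 2, and M an n×n matrix over R. For subsets S, T ⊆ {1,…,n} of equal size let M(S,T) denote the square matrix obtained from M by deleting the rows with index in S and the columns with index in T (the determinant of the empty 0×0 matrix being 1). Then det M({1,2},{1,2}) · det M − det M({1},{1}) · det M({2},{2}) = − det M({1},{2}) · det M({2},{1}). -/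
open Matrix in
theorem dodgson_aux {R : Type} [CommRing R] (m : ℕ)
    (M : Matrix (Fin (m + 2)) (Fin (m + 2)) R) :
    M.det * (M.adjugate 0 0 * M.adjugate 1 1 - M.adjugate 0 1 * M.adjugate 1 0) =
      M.det * (M.det *
      (M.submatrix (fun i : Fin m => i.succ.succ) (fun j : Fin m => j.succ.succ)).det) := by
  let e : Fin 2 ⊕ Fin m ≃ Fin (m + 2) := finSumFinEquiv.trans (finCongr (Nat.add_comm 2 m))
  have e0 : e (Sum.inl 0) = 0 := rfl
  have e1 : e (Sum.inl 1) = 1 := rfl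
  have e2 : ∀ i, e (Sum.inr i) = i.succ.succ := by
    intro i
    ext
    simp [e]
  let M' := M.submatrix e e
  let A := M.adjugate.submatrix e e
  have hMA : M' * A = M.det • 1 := by
    simp only [M', A]
    rw [Matrix.submatrix_mul_equiv, Matrix.mul_adjugate]
    ext i j
    simp [Matrix.one_apply]
  let N : Matrix (Fin 2 ⊕ Fin m) (Fin 2 ⊕ Fin m) R := fromBlocks A.toBlocks₁₁ 0 A.toBlocks₂₁ 1
  have hP : M' * N = fromBlocks (M.det • 1) M'.toBlocks₁₂ 0 M'.toBlocks₂₂ := by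
    have h1 := hMA
    rw [← fromBlocks_toBlocks M', ← fromBlocks_toBlocks A, fromBlocks_multiply,
      ← fromBlocks_one, fromBlocks_smul, fromBlocks_inj] at h1
    simp only [N]
    conv_lhs => rw [← fromBlocks_toBlocks M']
    rw [fromBlocks_multiply, h1.1, h1.2.2.1]
    simp
  have hdet := congrArg Matrix.det hP
  rw [det_mul, det_fromBlocks_zero₂₁, det_fromBlocks_zero₁₂, det_submatrix_equiv_self,
    det_fin_two, det_smul] at hdet
  have h22 : M'.toBlocks₂₂ =
      M.submatrix (fun i : Fin m => i.succ.succ) (fun j : Fin m => j.succ.succ) := by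
    ext i j
    simp [M', toBlocks₂₂, e2]
  rw [h22] at hdet
  simp [toBlocks₁₁, A, e0, e1] at hdet
  rw [hdet]
  ring

open Matrix in
theorem dodgson_adj {R : Type} [CommRing R] (m : ℕ)
    (M : Matrix (Fin (m + 2)) (Fin (m + 2)) R) :
    (M.adjugate 0 0 * M.adjugate 1 1 - M.adjugate 0 1 * M.adjugate 1 0) =
      (M.det *
      (M.submatrix (fun i : Fin m => i.succ.succ) (fun j : Fin m => j.succ.succ)).det) := by
  let X := mvPolynomialX (Fin (m + 2)) (Fin (m + 2)) ℤ
  have hX := mul_left_cancel₀ (det_mvPolynomialX_ne_zero (Fin (m + 2)) ℤ) (dodgson_aux m X)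
  let f : MvPolynomial (Fin (m + 2) × Fin (m + 2)) ℤ →+* R :=
    MvPolynomial.eval₂Hom (Int.castRingHom R) (fun p => M p.1 p.2)
  have hf : f.mapMatrix X = M := by
    ext i j
    simp [f, X]
  have h := congrArg f hX
  have ha : ∀ i j, f (X.adjugate i j) = M.adjugate i j := by
    intro i j
    rw [← hf, ← RingHom.map_adjugate]
    rfl
  rw [map_sub, map_mul, map_mul, map_mul, ha, ha, ha, ha, RingHom.map_det, RingHom.map_det, hf] at h
  rw [h, ← hf]
  rfl

/-- **Dodgson / Desnanot–Jacobi identity** over a commutative ring.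
For an `n × n` matrix `M` (`n = m + 2 ≥ 2`), writing `M(S,T)` for the matrix with the
rows in `S` and columns in `T` deleted (in the paper's 1-based indexing),
`det M({1,2},{1,2}) · det M − det M({1},{1}) · det M({2},{2})
  = − det M({1},{2}) · det M({2},{1})`. -/
theorem dodgson_identity {R : Type} [CommRing R] (m : ℕ)
    (M : Matrix (Fin (m + 2)) (Fin (m + 2)) R) :
    (M.submatrix (fun i : Fin m => i.succ.succ) (fun j : Fin m => j.succ.succ)).det * M.det
      - (M.submatrix Fin.succ Fin.succ).det *
          (M.submatrix (Fin.succAbove 1) (Fin.succAbove 1)).det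
      = -((M.submatrix Fin.succ (Fin.succAbove 1)).det *
          (M.submatrix (Fin.succAbove 1) Fin.succ).det) := by
  have h := dodgson_adj m M
  simp only [Matrix.adjugate_fin_succ_eq_det_submatrix, Fin.succAbove_zero] at h
  simp at h
  linear_combination -h
end

section
/- Let R be a commutative ring, n ≥ 2, and M a symmetric n×n matrix over R. For subsets S, T ⊆ {1,…,n} of equal size let M(S,T) denote the square matrix obtained from M by deleting the rows with index in S and the columns with index in T (the determinant of the empty 0×0 matrix being 1). Then det M({1},{1}) · det M({2},{2}) − det M · det M({1,2},{1,2}) = (det M({1},{2}))². -/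
open Matrix in
theorem jacobi_aux {R : Type*} [CommRing R] {m : ℕ}
    (N : Matrix (Fin 2 ⊕ Fin m) (Fin 2 ⊕ Fin m) R) :
    N.det * N.adjugate.toBlocks₁₁.det = N.det * (N.det * N.toBlocks₂₂.det) := by
  have h : N * fromBlocks N.adjugate.toBlocks₁₁ 0 N.adjugate.toBlocks₂₁ 1
      = fromBlocks (N.det • 1) N.toBlocks₁₂ 0 N.toBlocks₂₂ := by
    have h1 := Matrix.mul_adjugate N
    ext i j
    have h2 := congrFun (congrFun h1 i) j
    rcases j with j | j
    · simp only [Matrix.mul_apply, Fintype.sum_sum_type] at h2 ⊢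
      rcases i with i | i <;>
      simpa [toBlocks₁₁, toBlocks₂₁, Matrix.one_apply] using h2
    · rcases i with i | i <;>
      simp [Matrix.mul_apply, Matrix.one_apply, toBlocks₁₂, toBlocks₂₂]
  have h3 := congrArg Matrix.det h
  rw [Matrix.det_mul, det_fromBlocks_zero₁₂, det_fromBlocks_zero₂₁] at h3
  simp only [det_one, mul_one, det_smul, Fintype.card_fin] at h3
  rw [h3]; ring

open Matrix in
theorem jacobi_gen {R : Type*} [CommRing R] {m : ℕ}
    (N : Matrix (Fin 2 ⊕ Fin m) (Fin 2 ⊕ Fin m) R) :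
    N.adjugate.toBlocks₁₁.det = N.det * N.toBlocks₂₂.det := by
  let X := mvPolynomialX (Fin 2 ⊕ Fin m) (Fin 2 ⊕ Fin m) ℤ
  have hX : X.adjugate.toBlocks₁₁.det = X.det * X.toBlocks₂₂.det :=
    mul_left_cancel₀ (det_mvPolynomialX_ne_zero _ ℤ) (jacobi_aux X)
  let f : MvPolynomial ((Fin 2 ⊕ Fin m) × (Fin 2 ⊕ Fin m)) ℤ →+* R :=
    MvPolynomial.eval₂Hom (Int.castRingHom R) (fun p => N p.1 p.2)
  have hf : f.mapMatrix X = N := by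
    ext i j; simp [f, X]
  have h := congrArg f hX
  rw [map_mul, RingHom.map_det, RingHom.map_det, RingHom.map_det] at h
  have e1 : f.mapMatrix X.adjugate.toBlocks₁₁ = (f.mapMatrix X).adjugate.toBlocks₁₁ := by
    rw [← RingHom.map_adjugate]; rfl
  have e2 : f.mapMatrix X.toBlocks₂₂ = (f.mapMatrix X).toBlocks₂₂ := rfl
  rwa [e1, e2, hf] at h

/-- **Symmetric Dodgson identity.**  For a symmetric `n × n` matrix `M`
(`n = m + 2 ≥ 2`) over a commutative ring, writing `M(S,T)` for the matrix with the
rows in `S` and the columns in `T` deleted (1-based indexing as in the paper),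
`det M({1},{1}) · det M({2},{2}) − det M · det M({1,2},{1,2}) = (det M({1},{2}))²`. -/
theorem dodgson_identity_symm {R : Type} [CommRing R] (m : ℕ)
    (M : Matrix (Fin (m + 2)) (Fin (m + 2)) R) (hM : M.IsSymm) :
    (M.submatrix Fin.succ Fin.succ).det *
        (M.submatrix (Fin.succAbove 1) (Fin.succAbove 1)).det
      - M.det *
        (M.submatrix (fun i : Fin m => i.succ.succ) (fun j : Fin m => j.succ.succ)).det
      = (M.submatrix Fin.succ (Fin.succAbove 1)).det ^ 2 := by
  let e : Fin 2 ⊕ Fin m ≃ Fin (m + 2) := finSumFinEquiv.trans (finCongr (add_comm 2 m))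
  have e0 : e (Sum.inl 0) = 0 := by ext; simp [e]
  have e1 : e (Sum.inl 1) = 1 := by ext; simp [e]
  have e2 : ∀ i, e (Sum.inr i) = i.succ.succ := by
    intro i; ext; simp [e]
  have h := jacobi_gen (M.submatrix e e)
  have hT : (M.submatrix e e).toBlocks₂₂ =
      M.submatrix (fun i : Fin m => i.succ.succ) (fun j : Fin m => j.succ.succ) := by
    ext i j; simp [Matrix.toBlocks₂₂, e2]
  rw [hT, Matrix.det_submatrix_equiv_self, Matrix.adjugate_submatrix_equiv_self,
    Matrix.det_fin_two] at h
  simp only [Matrix.toBlocks₁₁, Matrix.of_apply, Matrix.submatrix_apply, e0, e1,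
    Matrix.adjugate_fin_succ_eq_det_submatrix] at h
  have hs : (M.submatrix (Fin.succAbove 1) Fin.succ).det
      = (M.submatrix Fin.succ (Fin.succAbove 1)).det := by
    rw [← Matrix.det_transpose, Matrix.transpose_submatrix, hM.eq]
  have hz : (Fin.succAbove (0 : Fin (m + 2))) = Fin.succ := by
    ext i; simp
  simp only [hz, hs] at h
  rw [← h]
  simp
  ring
end

section
/- For n ≥ 3 let WS_n (the wheel with n spokes) be the simple graph with vertex set {0,1,…,n} in which vertex 0 is adjacent to each of 1,…,n, vertex i is adjacent to vertex i+1 for 1 ≤ i ≤ n−1, and vertex n is adjacent to vertex 1. Then: (1) WS_n has exactly 2n edges; (2) h_1(WS_n) = n; and (3) every nonempty proper subset S ⊊ E of the edge set satisfies #S > 2·h_1(S), i.e., every proper subgraph of WS_n is convergent, so WS_n is primitive log divergent. -/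
open scoped BigOperators

variable {V : Type} [Fintype V] [LinearOrder V]

/-- The wheel with `n` spokes: vertices `0, 1, …, n`, with `0` adjacent to each of
`1, …, n`, vertex `i` adjacent to `i + 1` for `1 ≤ i ≤ n − 1`, and vertex `n`
adjacent to vertex `1`. -/
def wheel (n : ℕ) : SimpleGraph (Fin (n + 1)) :=
  SimpleGraph.fromRel (fun i j =>
    (i = 0 ∧ j ≠ 0) ∨
    (i ≠ 0 ∧ j ≠ 0 ∧ ((j : ℕ) = (i : ℕ) + 1 ∨ ((i : ℕ) = n ∧ (j : ℕ) = 1))))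

noncomputable instance (n : ℕ) : Fintype (wheel n).edgeSet := Fintype.ofFinite _


theorem incSign_mk_aux {V : Type} [Fintype V] [LinearOrder V] (w u v : V) (h : u < v) :
    incSign ℚ w s(u, v) = (if w = v then 1 else 0) - (if w = u then 1 else 0) := by
  simp [incSign, Sym2.sup, Sym2.inf, sup_eq_right.2 h.le, inf_eq_left.2 h.le]

def wNext {m : ℕ} (i : Fin (m + 1)) : Fin (m + 1) := i + 1

theorem wNext_val {m : ℕ} (i : Fin (m + 1)) :
    (wNext i : ℕ) = if (i : ℕ) = m then 0 else (i : ℕ) + 1 := by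
  unfold wNext
  rw [Fin.val_add_one]
  simp [Fin.ext_iff]

def wEdge {m : ℕ} : Fin (m + 1) ⊕ Fin (m + 1) → Sym2 (Fin (m + 1 + 1))
  | .inl i => s(0, i.succ)
  | .inr i => s(i.succ, (wNext i).succ)

theorem wEdge_mem {m : ℕ} (hm : 2 ≤ m) (x : Fin (m + 1) ⊕ Fin (m + 1)) :
    wEdge x ∈ (wheel (m + 1)).edgeSet := by
  rcases x with i | i
  · simp [wEdge, wheel, (Fin.succ_ne_zero i).symm]
  · have h1 := wNext_val i
    have := i.2
    simp only [wEdge, wheel, SimpleGraph.mem_edgeSet, SimpleGraph.fromRel_adj, ne_eq,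
      Fin.ext_iff, Fin.val_succ, Fin.val_zero]
    split_ifs at h1 <;> omega

theorem wEdge_inj {m : ℕ} (hm : 2 ≤ m) : Function.Injective (wEdge (m := m)) := by
  rintro (i | i) (j | j) h
  · simpa [wEdge] using h
  · simp [wEdge, (Fin.succ_ne_zero _).symm] at h
  · simp [wEdge, (Fin.succ_ne_zero _).symm] at h
  · have h1 := wNext_val i
    have h2 := wNext_val j
    have := i.2
    have := j.2
    simp only [wEdge, Sym2.eq_iff, Fin.ext_iff, Fin.val_succ] at h
    congr 1
    ext
    split_ifs at * <;> omega

theorem wEdge_surj {m : ℕ} (e : Sym2 (Fin (m + 1 + 1)))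
    (he : e ∈ (wheel (m + 1)).edgeSet) : ∃ x, wEdge (m := m) x = e := by
  induction e using Sym2.ind with
  | _ u v =>
  have key : ∀ u v : Fin (m + 1 + 1), ((u = 0 ∧ v ≠ 0) ∨
    (u ≠ 0 ∧ v ≠ 0 ∧ ((v : ℕ) = (u : ℕ) + 1 ∨ ((u : ℕ) = m + 1 ∧ (v : ℕ) = 1)))) →
      ∃ x, wEdge (m := m) x = s(u, v) := by
    rintro u v (⟨rfl, hv⟩ | ⟨hu, hv, h⟩)
    · exact ⟨.inl (v.pred hv), by simp [wEdge]⟩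
    · refine ⟨.inr (u.pred hu), ?_⟩
      have h1 := wNext_val (u.pred hu)
      have : (wNext (u.pred hu)).succ = v := by
        ext
        have := v.2
        have hu' : (u : ℕ) ≠ 0 := fun h => hu (Fin.ext h)
        simp only [Fin.val_succ, Fin.val_pred] at *
        split_ifs at * <;> omega
      simp [wEdge, this]
  simp only [wheel, SimpleGraph.mem_edgeSet, SimpleGraph.fromRel_adj] at he
  rcases he.2 with h | h
  · exact key u v h
  · rw [Sym2.eq_swap]; exact key v u h

noncomputable def wEquiv {m : ℕ} (hm : 2 ≤ m) :
    Fin (m + 1) ⊕ Fin (m + 1) ≃ (wheel (m + 1)).edgeSet :=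
  Equiv.ofBijective (fun x => ⟨wEdge x, wEdge_mem hm x⟩)
    ⟨fun x y h => wEdge_inj hm (Subtype.ext_iff.1 h),
     fun e => by
      obtain ⟨x, hx⟩ := wEdge_surj e.1 e.2
      exact ⟨x, Subtype.ext hx⟩⟩

theorem wEquiv_val {m : ℕ} (hm : 2 ≤ m) (x) : (wEquiv hm x).1 = wEdge x := rfl

def wEps {m : ℕ} (i : Fin (m + 1)) : ℚ := if (i : ℕ) = m then -1 else 1

theorem wEps_ne {m : ℕ} (i : Fin (m + 1)) : wEps i ≠ 0 := by
  unfold wEps; split_ifs <;> norm_num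

theorem incSign_rim {m : ℕ} (hm : 2 ≤ m) (w) (i : Fin (m + 1)) :
    incSign ℚ w (wEdge (.inr i)) = wEps i *
      ((if w = (wNext i).succ then 1 else 0) - (if w = i.succ then 1 else 0)) := by
  have h1 := wNext_val i
  unfold wEps
  by_cases h : (i : ℕ) = m
  · rw [if_pos h] at h1
    simp only [wEdge]
    rw [Sym2.eq_swap, incSign_mk_aux, if_pos h]
    · ring
    · rw [Fin.lt_def]; simp only [Fin.val_succ]; omega
  · rw [if_neg h] at h1
    simp only [wEdge]
    rw [incSign_mk_aux, if_neg h]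
    · ring
    · rw [Fin.lt_def]; simp only [Fin.val_succ]; omega

theorem boundary_succ {m : ℕ} (hm : 2 ≤ m) (f : (wheel (m + 1)).edgeSet → ℚ)
    (j : Fin (m + 1)) :
    boundary ℚ (wheel (m + 1)) f (wNext j).succ =
      f (wEquiv hm (.inl (wNext j))) + wEps j * f (wEquiv hm (.inr j))
        - wEps (wNext j) * f (wEquiv hm (.inr (wNext j))) := by
  have hinj : ∀ i : Fin (m + 1), wNext j = wNext i ↔ j = i := by
    intro i; unfold wNext; exact add_left_inj 1
  simp only [boundary, Matrix.mulVecLin_apply, Matrix.mulVec, dotProduct, Matrix.of_apply]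
  rw [← (wEquiv hm).sum_comp, Fintype.sum_sum_type]
  simp only [wEquiv_val, incSign_rim hm]
  have : ∀ i : Fin (m + 1), incSign ℚ (wNext j).succ (wEdge (.inl i)) =
      if wNext j = i then 1 else 0 := by
    intro i
    simp only [wEdge]
    rw [incSign_mk_aux _ _ _ (Fin.succ_pos i)]
    simp
  simp only [this, Fin.succ_inj, hinj, mul_sub, sub_mul, Finset.sum_sub_distrib]
  simp
  ring

theorem boundary_zero {m : ℕ} (hm : 2 ≤ m) (f : (wheel (m + 1)).edgeSet → ℚ) :
    boundary ℚ (wheel (m + 1)) f 0 = - ∑ i, f (wEquiv hm (.inl i)) := by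
  simp only [boundary, Matrix.mulVecLin_apply, Matrix.mulVec, dotProduct, Matrix.of_apply]
  rw [← (wEquiv hm).sum_comp, Fintype.sum_sum_type]
  simp only [wEquiv_val, incSign_rim hm]
  have : ∀ i : Fin (m + 1), incSign ℚ 0 (wEdge (.inl i)) = -1 := by
    intro i
    simp only [wEdge]
    rw [incSign_mk_aux _ _ _ (Fin.succ_pos i)]
    simp [(Fin.succ_ne_zero i).symm]
  simp [this, (Fin.succ_ne_zero _).symm]

theorem wNext_surj {m : ℕ} (i : Fin (m + 1)) : ∃ j, wNext j = i :=
  ⟨i - 1, by simp [wNext]⟩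

theorem boundary_sum {V : Type} [Fintype V] [LinearOrder V] (G : SimpleGraph V)
    [Fintype G.edgeSet] (f : G.edgeSet → ℚ) : ∑ v, boundary ℚ G f v = 0 := by
  simp only [boundary, Matrix.mulVecLin_apply, Matrix.mulVec, dotProduct, Matrix.of_apply]
  rw [Finset.sum_comm]
  simp [← Finset.sum_mul, incSign]

theorem finrank_le_aux {ι E : Type} [Fintype E] (K : Submodule ℚ (E → ℚ)) (X : Finset ι)
    (g : ι → E) (h : ∀ f ∈ K, (∀ x ∈ X, f (g x) = 0) → f = 0) :
    Module.finrank ℚ K ≤ X.card := by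
  let L : K →ₗ[ℚ] (X → ℚ) := (LinearMap.funLeft ℚ ℚ (fun x : X => g x)).comp K.subtype
  have hL : Function.Injective L := by
    rw [← LinearMap.ker_eq_bot, LinearMap.ker_eq_bot']
    intro f hf
    refine Subtype.ext (h f f.2 fun x hx => ?_)
    exact congrFun hf ⟨x, hx⟩
  simpa using LinearMap.finrank_le_finrank_of_injective hL

section
variable {m : ℕ} (hm : 2 ≤ m) (f : (wheel (m + 1)).edgeSet → ℚ)

theorem ker_rim (hf : boundary ℚ (wheel (m + 1)) f = 0)
    (h : ∀ i, f (wEquiv hm (.inr i)) = 0) : f = 0 := by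
  funext e
  obtain ⟨x, rfl⟩ := (wEquiv hm).surjective e
  rcases x with i | i
  · obtain ⟨j, rfl⟩ := wNext_surj i
    have := boundary_succ hm f j
    rw [hf] at this
    simpa [h] using this.symm
  · exact h i

theorem ker_spoke (hf : boundary ℚ (wheel (m + 1)) f = 0)
    (h : ∀ i, f (wEquiv hm (.inl i)) = 0) (k) (hk : f (wEquiv hm (.inr k)) = 0) : f = 0 := by
  have step : ∀ j, wEps j * f (wEquiv hm (.inr j)) =
      wEps (wNext j) * f (wEquiv hm (.inr (wNext j))) := by
    intro j
    have := boundary_succ hm f j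
    rw [hf, h] at this
    simp only [Pi.zero_apply] at this
    linarith
  have const : ∀ j, wEps j * f (wEquiv hm (.inr j)) = wEps (0 : Fin (m + 1)) * f (wEquiv hm (.inr 0)) := by
    intro j
    induction j using Fin.induction with
    | zero => rfl
    | succ i ih =>
      rw [← ih, step i.castSucc]
      simp [wNext]
  refine ker_rim hm f hf fun i => ?_
  have h1 := const i
  rw [← const k, hk, mul_zero] at h1
  exact (mul_eq_zero.1 h1).resolve_left (wEps_ne i)

theorem ker_spoke' (hf : boundary ℚ (wheel (m + 1)) f = 0) (t)
    (h : ∀ i, i ≠ t → f (wEquiv hm (.inl i)) = 0) (k) (hk : f (wEquiv hm (.inr k)) = 0) :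
    f = 0 := by
  refine ker_spoke hm f hf (fun i => ?_) k hk
  by_cases hi : i = t
  · subst hi
    have := boundary_zero hm f
    rw [hf, Finset.sum_eq_single i (fun b _ hb => h b hb) (by simp)] at this
    simpa using this.symm
  · exact h i hi
end

theorem wheel_finrank {m : ℕ} (hm : 2 ≤ m) :
    Module.finrank ℚ ↥(LinearMap.ker (boundary ℚ (wheel (m + 1)))) = m + 1 := by
  apply le_antisymm
  · have := finrank_le_aux (LinearMap.ker (boundary ℚ (wheel (m + 1))))
      (Finset.univ : Finset (Fin (m + 1))) (fun i => wEquiv hm (.inr i))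
      (fun f hf h => ker_rim hm f hf fun i => h i (Finset.mem_univ i))
    simpa using this
  · let L : ((wheel (m + 1)).edgeSet → ℚ) →ₗ[ℚ] (Fin (m + 1) → ℚ) :=
      (LinearMap.funLeft ℚ ℚ Fin.succ).comp (boundary ℚ (wheel (m + 1)))
    have hker : LinearMap.ker (boundary ℚ (wheel (m + 1))) = LinearMap.ker L := by
      ext f
      simp only [LinearMap.mem_ker]
      constructor
      · intro h
        simp [L, h]
      · intro h
        have h1 : ∀ i : Fin (m + 1), boundary ℚ (wheel (m + 1)) f i.succ = 0 :=
          fun i => congrFun h i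
        have h2 := boundary_sum (wheel (m + 1)) f
        rw [Fin.sum_univ_succ] at h2
        simp only [h1, Finset.sum_const_zero, add_zero] at h2
        funext v
        refine Fin.cases h2 h1 v
    rw [hker]
    have h1 := LinearMap.finrank_range_add_finrank_ker L
    have h2 := Submodule.finrank_le (LinearMap.range L)
    have h3 : Fintype.card (wheel (m + 1)).edgeSet = (m + 1) + (m + 1) := by
      rw [← Fintype.card_congr (wEquiv hm)]; simp
    simp only [Module.finrank_fintype_fun_eq_card, Fintype.card_fin, h3] at h1 h2
    omega

open Classical in
theorem wheel_conv {m : ℕ} (hm : 2 ≤ m) (S : Set (Sym2 (Fin (m + 1 + 1))))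
    (hS : S ⊆ (wheel (m + 1)).edgeSet) (hne : S.Nonempty) (hpr : S ≠ (wheel (m + 1)).edgeSet) :
    2 * h1S (wheel (m + 1)) S < S.toFinite.toFinset.card := by
  set T : Finset (Fin (m + 1)) := Finset.univ.filter fun i => wEdge (.inl i) ∈ S with hT
  set R : Finset (Fin (m + 1)) := Finset.univ.filter fun i => wEdge (.inr i) ∈ S with hR
  have hcard : T.card + R.card = S.toFinite.toFinset.card := by
    rw [← Finset.card_disjSum, ← Finset.card_image_of_injective _ (wEdge_inj hm)]
    congr 1
    ext e
    simp only [Finset.mem_image, Set.Finite.mem_toFinset]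
    constructor
    · rintro ⟨x | x, hx, rfl⟩ <;> simpa [hT, hR] using hx
    · intro he
      obtain ⟨x, rfl⟩ := wEdge_surj e (hS he)
      refine ⟨x, ?_, rfl⟩
      rcases x with x | x <;> simpa [hT, hR] using he
  have hpos : 0 < T.card + R.card := by
    rw [hcard, Finset.card_pos]
    simpa using hne
  have hTle : T.card ≤ m + 1 := by simpa using T.card_le_univ
  have hRle : R.card ≤ m + 1 := by simpa using R.card_le_univ
  have hlt : T.card + R.card < (m + 1) + (m + 1) := by
    by_contra hc
    have h1 : T = Finset.univ := by
      rw [← Finset.card_eq_iff_eq_univ]; simp; omega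
    have h2 : R = Finset.univ := by
      rw [← Finset.card_eq_iff_eq_univ]; simp; omega
    apply hpr
    refine hS.antisymm fun e he => ?_
    obtain ⟨x, rfl⟩ := wEdge_surj e he
    rcases x with x | x
    · have : x ∈ T := by rw [h1]; exact Finset.mem_univ x
      simpa [hT] using this
    · have : x ∈ R := by rw [h2]; exact Finset.mem_univ x
      simpa [hR] using this
  have hA : h1S (wheel (m + 1)) S ≤ R.card := by
    refine finrank_le_aux _ R (fun i => wEquiv hm (.inr i)) ?_
    rintro f ⟨hf, hfS⟩ h
    refine ker_rim hm f hf fun i => ?_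
    by_cases hi : i ∈ R
    · exact h i hi
    · exact hfS _ (by simpa [wEquiv_val, hR] using hi)
  have hB : ∀ t, ∀ Y : Finset (Fin (m + 1)), (∃ k, k ∈ Y ∨ k ∉ R) →
      h1S (wheel (m + 1)) S ≤ (T.erase t).card + Y.card := by
    rintro t Y ⟨k, hk⟩
    rw [← Finset.card_disjSum]
    refine finrank_le_aux _ _ (wEquiv hm) ?_
    rintro f ⟨hf, hfS⟩ h
    refine ker_spoke' hm f hf t (fun i hi => ?_) k ?_
    · by_cases hiT : i ∈ T
      · exact h _ (by simp [hi, hiT])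
      · exact hfS _ (by simpa [wEquiv_val, hT] using hiT)
    · rcases hk with hk | hk
      · exact h _ (by simp [hk])
      · exact hfS _ (by simpa [wEquiv_val, hR] using hk)
  have hE : ∃ t, (T.erase t).card = T.card - 1 := by
    rcases T.eq_empty_or_nonempty with h | ⟨t, ht⟩
    · exact ⟨0, by simp [h]⟩
    · exact ⟨t, Finset.card_erase_of_mem ht⟩
  obtain ⟨t, ht⟩ := hE
  rw [← hcard]
  by_cases hRu : R = Finset.univ
  · have h1 := hB t {0} ⟨0, Or.inl (by simp)⟩
    have h2 : R.card = m + 1 := by rw [hRu]; simp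
    rw [ht, Finset.card_singleton] at h1
    omega
  · have : ∃ k, k ∉ R := by
      by_contra hc
      push Not at hc
      exact hRu (Finset.eq_univ_iff_forall.2 hc)
    obtain ⟨k, hk⟩ := this
    have h1 := hB t ∅ ⟨k, Or.inr hk⟩
    rw [ht, Finset.card_empty] at h1
    omega

theorem wheel_primitive_log_divergent (n : ℕ) (hn : 3 ≤ n) :
    Fintype.card (wheel n).edgeSet = 2 * n ∧
    Module.finrank ℚ ↥(LinearMap.ker (boundary ℚ (wheel n))) = n ∧
    ∀ S : Set (Sym2 (Fin (n + 1))), S ⊆ (wheel n).edgeSet → S.Nonempty →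
      S ≠ (wheel n).edgeSet → 2 * h1S (wheel n) S < S.toFinite.toFinset.card := by
  obtain ⟨m, rfl⟩ : ∃ m, n = m + 1 := ⟨n - 1, by omega⟩
  have hm : 2 ≤ m := by omega
  refine ⟨?_, wheel_finrank hm, fun S h1 h2 h3 => wheel_conv hm S h1 h2 h3⟩
  rw [← Fintype.card_congr (wEquiv hm)]
  simp
  omega
end
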